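/- Let B be the open unit ball of ℝ⁴ and B̄ its closure. Let Λ > 0, let (ρ_k) be a sequence of reals with 0 < ρ_k ≤ Λ, and let (u_k) be a sequence of solutions of the Dirichlet mean field problem on B with parameters ρ_k. Assume there exists C > 0 such that u_k(x) ≤ C for all k and all x ∈ B̄. Then there exists a function u : ℝ⁴ → ℝ that is C⁴ on B̄ such that, after passing to a subsequence, u_k converges to u uniformly on B̄. -/

import Mathlib

open MeasureTheory Metric Filter

noncomputable section

/-- The Laplacian of `f : ℝ⁴ → ℝ` at `x`: the trace of the second derivative. -/
def lap (f : EuclideanSpace ℝ (Fin 4) → ℝ) (x : EuclideanSpace ℝ (Fin 4)) : ℝ :=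
  ∑ i : Fin 4,
    fderiv ℝ (fun y => fderiv ℝ f y (EuclideanSpace.single i (1:ℝ))) x
      (EuclideanSpace.single i (1:ℝ))

/-- `u` is a solution of the Dirichlet mean field problem on the open unit ball of `ℝ⁴`
with parameter `ρ`. -/
def IsMFSolution (ρ : ℝ) (u : EuclideanSpace ℝ (Fin 4) → ℝ) : Prop :=
  ContDiffOn ℝ 4 u (closedBall (0 : EuclideanSpace ℝ (Fin 4)) 1) ∧
  (∀ x ∈ ball (0 : EuclideanSpace ℝ (Fin 4)) 1,
    lap (lap u) x
      = ρ * Real.exp (u x) /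
          ∫ y in ball (0 : EuclideanSpace ℝ (Fin 4)) 1, Real.exp (u y)) ∧
  (∀ x : EuclideanSpace ℝ (Fin 4), ‖x‖ = 1 →
    u x = 0 ∧ fderivWithin ℝ u (closedBall (0 : EuclideanSpace ℝ (Fin 4)) 1) x = 0)

open scoped Topology

abbrev E4 := EuclideanSpace ℝ (Fin 4)
abbrev Bo : Set E4 := ball (0 : E4) 1
abbrev Bc : Set E4 := closedBall (0 : E4) 1
/-- directional derivative -/
def dd (a : E4) (f : E4 → ℝ) (x : E4) : ℝ := fderiv ℝ f x a
/-- directional derivative within the closed ball -/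
def ddw (a : E4) (f : E4 → ℝ) (x : E4) : ℝ := fderivWithin ℝ f Bc x a
/-- standard basis -/
abbrev ei (i : Fin 4) : E4 := EuclideanSpace.single i (1:ℝ)

lemma Bc_unique : UniqueDiffOn ℝ Bc := by
  apply uniqueDiffOn_convex (convex_closedBall _ _)
  rw [interior_closedBall _ one_ne_zero]
  exact ⟨0, by simp⟩

lemma Bc_nhds {x : E4} (hx : x ∈ Bo) : Bc ∈ 𝓝 x :=
  mem_of_superset (isOpen_ball.mem_nhds hx) ball_subset_closedBall

lemma Bo_nhds {x : E4} (hx : x ∈ Bo) : Bo ∈ 𝓝 x := isOpen_ball.mem_nhds hx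

lemma ddw_eq {f : E4 → ℝ} {x : E4} (hx : x ∈ Bo) (a : E4) : ddw a f x = dd a f x := by
  unfold ddw dd
  rw [fderivWithin_of_mem_nhds (Bc_nhds hx)]

lemma ddw_contDiffOn {f : E4 → ℝ} {n m : WithTop ℕ∞} (hf : ContDiffOn ℝ n f Bc) (h : m + 1 ≤ n) (a : E4) :
    ContDiffOn ℝ m (ddw a f) Bc :=
  (hf.fderivWithin Bc_unique h).clm_apply contDiffOn_const

lemma dd_congr {f g : E4 → ℝ} (h : ∀ x ∈ Bo, f x = g x) (a : E4) : ∀ x ∈ Bo, dd a f x = dd a g x := by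
  intro x hx
  unfold dd
  rw [Filter.EventuallyEq.fderiv_eq]
  filter_upwards [Bo_nhds hx] with y hy using h y hy

lemma dd_contDiffOn {f : E4 → ℝ} {n m : WithTop ℕ∞} (hf : ContDiffOn ℝ n f Bo) (h : m + 1 ≤ n) (a : E4) :
    ContDiffOn ℝ m (dd a f) Bo :=
  (hf.fderiv_of_isOpen isOpen_ball h).clm_apply contDiffOn_const

lemma lap_congr {f g : E4 → ℝ} (h : ∀ x ∈ Bo, f x = g x) : ∀ x ∈ Bo, lap f x = lap g x := by
  intro x hx
  unfold lap
  refine Finset.sum_congr rfl fun i _ => ?_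
  exact dd_congr (fun y hy => dd_congr h _ y hy) (ei i) x hx

/-- Extension by zero of a Lipschitz function vanishing on the sphere. -/
lemma lip_ext {g : E4 → ℝ} {K : NNReal} (hg : LipschitzOnWith K g Bc) (h0 : ∀ x, ‖x‖ = 1 → g x = 0) :
    LipschitzWith K (Bc.indicator g) := by
  have key : ∀ x y : E4, x ∈ Bc → y ∉ Bc → |g x| ≤ K * ‖x - y‖ := by
    intro x y hx hy
    have hx1 : ‖x‖ ≤ 1 := by simpa using hx
    have hy1 : 1 < ‖y‖ := by simpa using hy
    have hcont : ContinuousOn (fun t : ℝ => ‖x + t • (y - x)‖) (Set.Icc 0 1) := by fun_prop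
    have := intermediate_value_Icc (zero_le_one) hcont
    have h1 : (1:ℝ) ∈ Set.Icc ‖x + (0:ℝ) • (y - x)‖ ‖x + (1:ℝ) • (y - x)‖ := by
      simp [hx1, hy1.le]
    obtain ⟨t, ht, hz⟩ := this h1
    simp only at hz
    have hzB : x + t • (y - x) ∈ Bc := by simp [hz]
    have := hg.dist_le_mul x hx _ hzB
    rw [h0 _ hz, Real.dist_eq, sub_zero, dist_eq_norm] at this
    refine this.trans ?_
    gcongr
    have : x - (x + t • (y - x)) = t • (x - y) := by module
    rw [this, norm_smul, Real.norm_of_nonneg ht.1]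
    exact mul_le_of_le_one_left (norm_nonneg _) ht.2
  apply LipschitzWith.of_dist_le_mul
  intro x y
  by_cases hx : x ∈ Bc <;> by_cases hy : y ∈ Bc
  · simpa [hx, hy] using hg.dist_le_mul x hx y hy
  · rw [Set.indicator_of_mem hx, Set.indicator_of_notMem hy, Real.dist_eq, sub_zero, dist_eq_norm]
    exact key x y hx hy
  · rw [Set.indicator_of_notMem hx, Set.indicator_of_mem hy, dist_comm, Real.dist_eq, sub_zero, dist_eq_norm, norm_sub_rev]
    exact key y x hy hx
  · rw [Set.indicator_of_notMem hx, Set.indicator_of_notMem hy]; simp; positivity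

lemma contDiffOn_lip {g : E4 → ℝ} (hg : ContDiffOn ℝ 1 g Bc) : ∃ K, LipschitzOnWith K g Bc := by
  have hc : ContinuousOn (fderivWithin ℝ g Bc) Bc := hg.continuousOn_fderivWithin Bc_unique le_rfl
  obtain ⟨K, hK⟩ := (isCompact_closedBall (0:E4) 1).exists_bound_of_continuousOn hc
  refine ⟨K.toNNReal, (convex_closedBall (0:E4) 1).lipschitzOnWith_of_nnnorm_fderivWithin_le
    (hg.differentiableOn one_ne_zero) ?_⟩
  intro x hx
  rw [← NNReal.coe_le_coe, coe_nnnorm]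
  exact (hK x hx).trans (Real.le_coe_toNNReal K)

lemma int_dd_zero {g : E4 → ℝ} (hg : ContDiffOn ℝ 1 g Bc) (h0 : ∀ x, ‖x‖ = 1 → g x = 0) (e : E4) :
    ∫ x in Bo, dd e g x = 0 := by
  obtain ⟨K, hK⟩ := contDiffOn_lip hg
  have hL := lip_ext hK h0
  set G := Bc.indicator g with hG
  let χ : ContDiffBump (0:E4) := ⟨2, 3, by norm_num, by norm_num⟩
  have hχ : ContDiff ℝ 1 (χ : E4 → ℝ) := χ.contDiff
  have hχc : HasCompactSupport (χ : E4 → ℝ) := χ.hasCompactSupport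
  obtain ⟨D, hD⟩ := hχ.lipschitzWith_of_hasCompactSupport hχc one_ne_zero
  have := hL.integral_lineDeriv_mul_eq (μ := volume) hD hχc e
  have hr : ∫ x, lineDeriv ℝ (χ : E4 → ℝ) x (-e) * G x = 0 := by
    rw [← integral_zero E4 ℝ (μ := volume)]
    congr 1
    ext x
    by_cases hx : x ∈ Bc
    · have : lineDeriv ℝ (χ : E4 → ℝ) x (-e) = 0 := by
        have h1 : (χ : E4 → ℝ) =ᶠ[𝓝 x] fun _ => (1:ℝ) := by
          have : ball (0:E4) 2 ∈ 𝓝 x := isOpen_ball.mem_nhds (by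
            have : ‖x‖ ≤ 1 := by simpa using hx
            simp; linarith)
          filter_upwards [this] with y hy
          exact χ.one_of_mem_closedBall (ball_subset_closedBall hy)
        have hd : DifferentiableAt ℝ (χ : E4 → ℝ) x := (hχ.differentiable one_ne_zero) x
        rw [hd.lineDeriv_eq_fderiv, h1.fderiv_eq]
        simp
      rw [this, zero_mul]
    · simp [hG, hx]
  rw [hr] at this
  rw [← this, ← integral_indicator measurableSet_ball]
  apply integral_congr_ae
  have hs : ∀ᵐ x : E4, x ∉ sphere (0:E4) 1 := by
    rw [ae_iff]; simp only [not_not]; exact Measure.addHaar_sphere (volume : Measure E4) (0:E4) 1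
  filter_upwards [hs] with x hx
  by_cases hxB : x ∈ Bo
  · rw [Set.indicator_of_mem hxB]
    have h1 : G =ᶠ[𝓝 x] g := by
      filter_upwards [Bc_nhds hxB] with y hy
      simp [hG, hy]
    have hd : DifferentiableAt ℝ g x := (hg.contDiffAt (Bc_nhds hxB)).differentiableAt one_ne_zero
    rw [h1.lineDeriv_eq, hd.lineDeriv_eq_fderiv]
    have : (χ : E4 → ℝ) x = 1 := χ.one_of_mem_closedBall (by
      have : ‖x‖ < 1 := by simpa using hxB
      simp; linarith)
    rw [this, mul_one]; rfl
  · rw [Set.indicator_of_notMem hxB]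
    have hx2 : x ∈ (Bc)ᶜ := by
      simp at hx hxB ⊢
      exact lt_of_le_of_ne hxB (Ne.symm hx)
    have h1 : G =ᶠ[𝓝 x] fun _ => (0:ℝ) := by
      filter_upwards [isClosed_closedBall.isOpen_compl.mem_nhds hx2] with y hy
      exact Set.indicator_of_notMem hy _
    rw [h1.lineDeriv_eq]
    have : lineDeriv ℝ (fun _ : E4 => (0:ℝ)) x e = 0 := by simp [lineDeriv]
    simp [this]

lemma contOn_integrable {f : E4 → ℝ} (hf : ContinuousOn f Bc) : IntegrableOn f Bo :=
  (hf.integrableOn_compact (isCompact_closedBall _ _)).mono_set ball_subset_closedBall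

lemma dd_mul {f g : E4 → ℝ} {x : E4} (hf : DifferentiableAt ℝ f x) (hg : DifferentiableAt ℝ g x) (a : E4) :
    dd a (fun y => f y * g y) x = dd a f x * g x + f x * dd a g x := by
  unfold dd
  rw [show (fun y => f y * g y) = f * g from rfl, fderiv_mul hf hg]
  simp; ring

lemma dd_sub {f g : E4 → ℝ} {x : E4} (hf : DifferentiableAt ℝ f x) (hg : DifferentiableAt ℝ g x) (a : E4) :
    dd a (fun y => f y - g y) x = dd a f x - dd a g x := by
  unfold dd
  rw [show (fun y => f y - g y) = f - g from rfl, fderiv_sub hf hg]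
  simp

lemma dd_add {f g : E4 → ℝ} {x : E4} (hf : DifferentiableAt ℝ f x) (hg : DifferentiableAt ℝ g x) (a : E4) :
    dd a (fun y => f y + g y) x = dd a f x + dd a g x := by
  unfold dd
  rw [show (fun y => f y + g y) = f + g from rfl, fderiv_add hf hg]
  simp

/-- Second order Green formula, no boundary terms. -/
lemma green {f g : E4 → ℝ} (hf : ContDiffOn ℝ 2 f Bc) (hg : ContDiffOn ℝ 2 g Bc)
    (h0 : ∀ x, ‖x‖ = 1 → f x = 0 ∧ fderivWithin ℝ f Bc x = 0) :
    ∫ x in Bo, f x * lap g x = ∫ x in Bo, g x * lap f x := by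
  have hf1 : ∀ e, ContDiffOn ℝ 1 (ddw e f) Bc := fun e => ddw_contDiffOn hf (by norm_num) e
  have hg1 : ∀ e, ContDiffOn ℝ 1 (ddw e g) Bc := fun e => ddw_contDiffOn hg (by norm_num) e
  have hf2 : ∀ e e', ContDiffOn ℝ 0 (ddw e' (ddw e f)) Bc := fun e e' => ddw_contDiffOn (hf1 e) (by norm_num) e'
  have hg2 : ∀ e e', ContDiffOn ℝ 0 (ddw e' (ddw e g)) Bc := fun e e' => ddw_contDiffOn (hg1 e) (by norm_num) e'
  have hf' : ContDiffOn ℝ 1 f Bc := hf.of_le (by norm_num)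
  have hg' : ContDiffOn ℝ 1 g Bc := hg.of_le (by norm_num)
  have key : ∀ e : E4, ∫ x in Bo, (f x * ddw e (ddw e g) x - g x * ddw e (ddw e f) x) = 0 := by
    intro e
    have := int_dd_zero (g := fun x => f x * ddw e g x - g x * ddw e f x)
      ((hf'.mul (hg1 e)).sub (hg'.mul (hf1 e))) (by
        intro x hx
        simp [(h0 x hx).1, ddw, (h0 x hx).2]) e
    rw [← this]
    apply setIntegral_congr_fun measurableSet_ball
    intro x hx
    have d : ∀ {w : E4 → ℝ}, ContDiffOn ℝ 1 w Bc → DifferentiableAt ℝ w x := fun hw =>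
      (hw.contDiffAt (Bc_nhds hx)).differentiableAt one_ne_zero
    simp only
    rw [dd_sub (f := fun x => f x * ddw e g x) (g := fun x => g x * ddw e f x)
      ((d hf').mul (d (hg1 e))) ((d hg').mul (d (hf1 e))), dd_mul (d hf') (d (hg1 e)),
      dd_mul (d hg') (d (hf1 e)), ddw_eq hx, ddw_eq hx, ddw_eq hx, ddw_eq hx]
    ring
  have e1 : ∀ w : E4 → ℝ, ∀ x ∈ Bo, lap w x = ∑ i, ddw (ei i) (ddw (ei i) w) x := by
    intro w x hx
    unfold lap
    refine Finset.sum_congr rfl fun i _ => ?_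
    rw [ddw_eq hx]
    exact dd_congr (fun y hy => (ddw_eq hy _).symm) (ei i) x hx
  have hI : ∀ {p q : E4 → ℝ}, ContinuousOn p Bc → ContinuousOn q Bc → IntegrableOn (fun x => p x * q x) Bo :=
    fun hp hq => contOn_integrable (hp.mul hq)
  have hfc := hf.continuousOn
  have hgc := hg.continuousOn
  have L1 : ∫ x in Bo, f x * lap g x = ∑ i, ∫ x in Bo, f x * ddw (ei i) (ddw (ei i) g) x := by
    rw [← integral_finsetSum _ (fun i _ => hI hfc (hg2 _ _).continuousOn)]
    apply setIntegral_congr_fun measurableSet_ball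
    intro x hx
    simp only [e1 g x hx, Finset.mul_sum]
  have L2 : ∫ x in Bo, g x * lap f x = ∑ i, ∫ x in Bo, g x * ddw (ei i) (ddw (ei i) f) x := by
    rw [← integral_finsetSum _ (fun i _ => hI hgc (hf2 _ _).continuousOn)]
    apply setIntegral_congr_fun measurableSet_ball
    intro x hx
    simp only [e1 f x hx, Finset.mul_sum]
  rw [L1, L2]
  refine Finset.sum_congr rfl fun i _ => ?_
  have := key (ei i)
  rw [integral_sub (hI hfc (hg2 _ _).continuousOn) (hI hgc (hf2 _ _).continuousOn)] at this
  linarith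

/-- the Laplacian within the closed ball, a `C^2` representative -/
def lapw (f : E4 → ℝ) (x : E4) : ℝ := ∑ i, ddw (ei i) (ddw (ei i) f) x

lemma lapw_eq (w : E4 → ℝ) : ∀ x ∈ Bo, lap w x = lapw w x := by
  intro x hx
  unfold lap lapw
  refine Finset.sum_congr rfl fun i _ => ?_
  rw [ddw_eq hx]
  exact dd_congr (fun y hy => (ddw_eq hy _).symm) (ei i) x hx

lemma lapw_contDiffOn {f : E4 → ℝ} (hf : ContDiffOn ℝ 4 f Bc) : ContDiffOn ℝ 2 (lapw f) Bc := by
  unfold lapw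
  apply ContDiffOn.sum
  intro i _
  exact ddw_contDiffOn (n := 3) (ddw_contDiffOn hf (by norm_num) _) (by norm_num) _

/-- Fourth order Green formula. -/
lemma green4 {v φ ψ η : E4 → ℝ} (hv : ContDiffOn ℝ 4 v Bc)
    (hv0 : ∀ x, ‖x‖ = 1 → v x = 0 ∧ fderivWithin ℝ v Bc x = 0)
    (hφ : ContDiffOn ℝ 2 φ Bc) (hφ0 : ∀ x, ‖x‖ = 1 → φ x = 0 ∧ fderivWithin ℝ φ Bc x = 0)
    (hψ : ContDiffOn ℝ 2 ψ Bc) (h1 : ∀ x ∈ Bo, lap φ x = ψ x) (h2 : ∀ x ∈ Bo, lap ψ x = η x) :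
    ∫ x in Bo, φ x * lap (lap v) x = ∫ x in Bo, v x * η x := by
  have a1 := green hφ (lapw_contDiffOn hv) hφ0
  have a2 := green (hv.of_le (by norm_num)) hψ hv0
  calc ∫ x in Bo, φ x * lap (lap v) x = ∫ x in Bo, φ x * lap (lapw v) x := by
        apply setIntegral_congr_fun measurableSet_ball
        intro x hx
        simp only [lap_congr (lapw_eq v) x hx]
    _ = _ := a1
    _ = ∫ x in Bo, ψ x * lap v x := by
        apply setIntegral_congr_fun measurableSet_ball
        intro x hx
        simp only [h1 x hx, lapw_eq v x hx, mul_comm]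
    _ = _ := a2.symm
    _ = _ := by
        apply setIntegral_congr_fun measurableSet_ball
        intro x hx
        simp only [h2 x hx]

/-- regularised squared distance -/
def kN (κ : ℝ) (x y : E4) : ℝ := ‖y - x‖ ^ 2 + (κ - 1) * (1 - ‖x‖ ^ 2 / κ)
/-- regularised reflected squared distance -/
def kL (κ : ℝ) (x y : E4) : ℝ := ‖x‖ ^ 2 / κ * ‖y‖ ^ 2 - 2 * inner ℝ x y + κ
/-- regularised Green function of the bilaplacian on the ball -/
def kG (κ : ℝ) (x y : E4) : ℝ := Real.log (kL κ x y) - Real.log (kN κ x y) + kN κ x y / kL κ x y - 1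

lemma kL_sub_kN {κ : ℝ} (hκ : 1 ≤ κ) (x y : E4) :
    kL κ x y = kN κ x y + (1 - ‖x‖ ^ 2 / κ) * (1 - ‖y‖ ^ 2) := by
  unfold kL kN
  rw [norm_sub_sq_real, real_inner_comm x y]
  have : κ ≠ 0 := by positivity
  field_simp
  ring

lemma kc_lt {κ : ℝ} (hκ : 1 ≤ κ) {x : E4} (hx : x ∈ Bo) : ‖x‖ ^ 2 / κ < 1 := by
  have hx1 : ‖x‖ < 1 := by simpa using hx
  rw [div_lt_one (by linarith)]
  nlinarith [norm_nonneg x]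

lemma kN_pos {κ : ℝ} (hκ : 1 < κ) {x : E4} (hx : x ∈ Bo) (y : E4) : 0 < kN κ x y := by
  unfold kN
  have := kc_lt hκ.le hx
  have : 0 < (κ - 1) * (1 - ‖x‖ ^ 2 / κ) := mul_pos (by linarith) (by linarith)
  positivity

lemma kN_ge {κ : ℝ} (hκ : 1 ≤ κ) {x : E4} (hx : x ∈ Bo) (y : E4) : ‖y - x‖ ^ 2 ≤ kN κ x y := by
  unfold kN
  have := kc_lt hκ hx
  have : 0 ≤ (κ - 1) * (1 - ‖x‖ ^ 2 / κ) := mul_nonneg (by linarith) (by linarith)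
  linarith

lemma kN_le_kL {κ : ℝ} (hκ : 1 ≤ κ) {x y : E4} (hx : x ∈ Bo) (hy : y ∈ Bc) : kN κ x y ≤ kL κ x y := by
  rw [kL_sub_kN hκ]
  have := kc_lt hκ hx
  have hy1 : ‖y‖ ≤ 1 := by simpa using hy
  have : 0 ≤ (1 - ‖x‖ ^ 2 / κ) * (1 - ‖y‖ ^ 2) := mul_nonneg (by linarith) (by nlinarith [norm_nonneg y])
  linarith

lemma hasFDerivAt_kN (κ : ℝ) (x y : E4) :
    HasFDerivAt (kN κ x) ((2:ℝ) • innerSL ℝ (y - x)) y := by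
  have h : HasFDerivAt (fun z : E4 => z - x) (ContinuousLinearMap.id ℝ E4) y := (hasFDerivAt_id y).sub_const x
  have := (h.norm_sq).add_const ((κ - 1) * (1 - ‖x‖ ^ 2 / κ))
  refine HasFDerivAt.congr_fderiv (f' := _) (show HasFDerivAt (kN κ x) _ y from this) ?_
  ext a
  simp

lemma hasFDerivAt_kL (κ : ℝ) (x y : E4) :
    HasFDerivAt (kL κ x) ((2:ℝ) • innerSL ℝ ((‖x‖ ^ 2 / κ) • y - x)) y := by
  have h : HasFDerivAt (fun z : E4 => z) (ContinuousLinearMap.id ℝ E4) y := (hasFDerivAt_id y)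
  have h2 : HasFDerivAt (fun z : E4 => inner ℝ x z) (innerSL ℝ x) y := (innerSL ℝ x).hasFDerivAt
  have := (((h.norm_sq).const_mul (‖x‖ ^ 2 / κ)).sub (h2.const_mul 2)).add_const κ
  refine HasFDerivAt.congr_fderiv (f' := _) (show HasFDerivAt (kL κ x) _ y from this) ?_
  ext a
  simp
  ring

lemma contDiff_kN (κ : ℝ) (x : E4) {n : WithTop ℕ∞} : ContDiff ℝ n (kN κ x) := by
  unfold kN
  exact ((contDiff_id.sub contDiff_const).norm_sq ℝ).add contDiff_const

lemma contDiff_kL (κ : ℝ) (x : E4) {n : WithTop ℕ∞} : ContDiff ℝ n (kL κ x) := by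
  unfold kL
  exact ((contDiff_const.mul (contDiff_id.norm_sq ℝ)).sub (contDiff_const.mul (contDiff_const.inner ℝ contDiff_id))).add contDiff_const

lemma sum_inner_ei (z w : E4) : ∑ i, inner ℝ z (ei i) * inner ℝ w (ei i) = inner ℝ z w := by
  simp [ei, PiLp.inner_apply, mul_comm]

lemma lap_form {κ : ℝ} (hκ : 1 < κ) {x : E4} (hx : x ∈ Bo) {p p' p'' r r' r'' s s' s'' : ℝ → ℝ}
    (hp : ∀ t > 0, HasDerivAt p (p' t) t) (hp' : ∀ t > 0, HasDerivAt p' (p'' t) t)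
    (hr : ∀ t > 0, HasDerivAt r (r' t) t) (hr' : ∀ t > 0, HasDerivAt r' (r'' t) t)
    (hs : ∀ t > 0, HasDerivAt s (s' t) t) (hs' : ∀ t > 0, HasDerivAt s' (s'' t) t)
    {y : E4} (hy : y ∈ Bo) :
    lap (fun z => kN κ x z * p (kL κ x z) + r (kL κ x z) + s (kN κ x z)) y =
      8 * p (kL κ x y)
      + 2 * p' (kL κ x y) * (2 * (‖x‖ ^ 2 / κ) * kN κ x y + 2 * kL κ x y + 2 * (‖x‖ ^ 2 / κ - 1) * (κ - ‖x‖ ^ 2 / κ))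
      + kN κ x y * (4 * (‖x‖ ^ 2 / κ) * kL κ x y * p'' (kL κ x y) + 8 * (‖x‖ ^ 2 / κ) * p' (kL κ x y))
      + (4 * (‖x‖ ^ 2 / κ) * kL κ x y * r'' (kL κ x y) + 8 * (‖x‖ ^ 2 / κ) * r' (kL κ x y))
      + (4 * (kN κ x y - (κ - 1) * (1 - ‖x‖ ^ 2 / κ)) * s'' (kN κ x y) + 8 * s' (kN κ x y)) := by
  set c := ‖x‖ ^ 2 / κ with hc
  have hκ0 : κ ≠ 0 := by positivity
  have hcx : ‖x‖ ^ 2 = c * κ := by rw [hc]; field_simp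
  have pos : ∀ z ∈ Bo, 0 < kN κ x z ∧ 0 < kL κ x z := fun z hz =>
    ⟨kN_pos hκ hx z, (kN_pos hκ hx z).trans_le (kN_le_kL hκ.le hx (ball_subset_closedBall hz))⟩
  have first : ∀ a : E4, ∀ z ∈ Bo, fderiv ℝ (fun z => kN κ x z * p (kL κ x z) + r (kL κ x z) + s (kN κ x z)) z a
      = 2 * inner ℝ (z - x) a * (p (kL κ x z) + s' (kN κ x z))
        + 2 * inner ℝ (c • z - x) a * (kN κ x z * p' (kL κ x z) + r' (kL κ x z)) := by
    intro a z hz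
    obtain ⟨hN, hL⟩ := pos z hz
    have dN := hasFDerivAt_kN κ x z
    have dL := hasFDerivAt_kL κ x z
    have := ((dN.mul ((hp _ hL).comp_hasFDerivAt z dL)).add ((hr _ hL).comp_hasFDerivAt z dL)).add
      ((hs _ hN).comp_hasFDerivAt z dN)
    have h2 := this.fderiv
    simp only [Function.comp_def] at h2
    erw [h2]
    simp [← hc, inner_sub_left, inner_smul_left]
    ring
  have second : ∀ a : E4, fderiv ℝ (fun z => fderiv ℝ (fun z => kN κ x z * p (kL κ x z) + r (kL κ x z) + s (kN κ x z)) z a) y a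
      = 2 * inner ℝ a a * (p (kL κ x y) + s' (kN κ x y))
        + 2 * inner ℝ (y - x) a * (p' (kL κ x y) * (2 * inner ℝ (c • y - x) a) + s'' (kN κ x y) * (2 * inner ℝ (y - x) a))
        + 2 * c * inner ℝ a a * (kN κ x y * p' (kL κ x y) + r' (kL κ x y))
        + 2 * inner ℝ (c • y - x) a * (2 * inner ℝ (y - x) a * p' (kL κ x y) + kN κ x y * (p'' (kL κ x y) * (2 * inner ℝ (c • y - x) a))
            + r'' (kL κ x y) * (2 * inner ℝ (c • y - x) a)) := by
    intro a
    obtain ⟨hN, hL⟩ := pos y hy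
    have dN := hasFDerivAt_kN κ x y
    have dL := hasFDerivAt_kL κ x y
    have i1 : HasFDerivAt (fun z : E4 => 2 * inner ℝ (z - x) a) ((2:ℝ) • innerSL ℝ a) y := by
      have h := ((hasFDerivAt_id y).sub_const x).inner ℝ (hasFDerivAt_const a y)
      have := h.const_mul 2
      refine this.congr_fderiv ?_
      ext b; simp [real_inner_comm]
    have i2 : HasFDerivAt (fun z : E4 => 2 * inner ℝ (c • z - x) a) ((2 * c:ℝ) • innerSL ℝ a) y := by
      have h := (((hasFDerivAt_id y).const_smul c).sub_const x).inner ℝ (hasFDerivAt_const a y)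
      have := h.const_mul 2
      refine this.congr_fderiv ?_
      ext b; simp [real_inner_comm, inner_smul_left]; ring
    have h1 := (i1.mul (((hp _ hL).comp_hasFDerivAt y dL).add ((hs' _ hN).comp_hasFDerivAt y dN))).add
      (i2.mul ((dN.mul ((hp' _ hL).comp_hasFDerivAt y dL)).add ((hr' _ hL).comp_hasFDerivAt y dL)))
    have h2 := (h1.congr_of_eventuallyEq
      (f₁ := fun z => fderiv ℝ (fun z => kN κ x z * p (kL κ x z) + r (kL κ x z) + s (kN κ x z)) z a) (by
        filter_upwards [Bo_nhds hy] with z hz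
        rw [first a z hz]; rfl)).fderiv
    rw [h2]
    simp [← hc, inner_sub_left, inner_smul_left]
    ring
  unfold lap
  simp only [second]
  set N := kN κ x y with hN
  set L := kL κ x y with hL
  have s1 : ∑ i, inner ℝ (ei i) (ei i) = (4:ℝ) := by simp
  have s2 := sum_inner_ei (y - x) (c • y - x)
  have s3 := sum_inner_ei (y - x) (y - x)
  have s4 := sum_inner_ei (c • y - x) (c • y - x)
  have v3 : inner ℝ (y - x) (y - x) = N - (κ - 1) * (1 - c) := by
    rw [real_inner_self_eq_norm_sq, hN, kN]; ring
  have v4 : inner ℝ (c • y - x) (c • y - x) = c * L := by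
    rw [real_inner_self_eq_norm_sq, hL, kL, norm_sub_sq_real, norm_smul, mul_pow, Real.norm_eq_abs, sq_abs, hcx,
      inner_smul_left, real_inner_comm x y, ← hcx, ← hc]
    simp
    rw [hcx]; ring
  have v2 : inner ℝ (y - x) (c • y - x) = (2 * c * N + 2 * L + 2 * (c - 1) * (κ - c)) / 4 := by
    rw [hN, hL, kL, kN, norm_sub_sq_real, inner_sub_left, inner_sub_right, inner_sub_right, inner_smul_right, inner_smul_right,
      real_inner_self_eq_norm_sq, real_inner_self_eq_norm_sq, real_inner_comm y x, ← hc, hcx]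
    ring
  rw [v2] at s2
  rw [v3] at s3
  rw [v4] at s4
  rw [Fin.sum_univ_four] at s1 s2 s3 s4 ⊢
  linear_combination (2 * (p L + s' N) + 2 * c * (N * p' L + r' L)) * s1 + 8 * p' L * s2 + 4 * s'' N * s3
    + 4 * (N * p'' L + r'' L) * s4

lemma hasFDerivAt_kG (κ : ℝ) (x y : E4) (hN : 0 < kN κ x y) (hL : 0 < kL κ x y) :
    HasFDerivAt (kG κ x)
      ((2 * ((kL κ x y)⁻¹ - kN κ x y / kL κ x y ^ 2)) • innerSL ℝ ((‖x‖ ^ 2 / κ) • y - x)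
        + (2 * ((kL κ x y)⁻¹ - (kN κ x y)⁻¹)) • innerSL ℝ (y - x)) y := by
  have dN := hasFDerivAt_kN κ x y
  have dL := hasFDerivAt_kL κ x y
  have h1 := ((dL.log hL.ne').sub (dN.log hN.ne')).add (dN.mul ((hasDerivAt_inv hL.ne').comp_hasFDerivAt y dL))
  have h2 := h1.sub_const (1:ℝ)
  refine HasFDerivAt.congr_fderiv (f' := _) (show HasFDerivAt (kG κ x) _ y from h2) ?_
  ext a
  simp
  field_simp
  ring

lemma kL_pos {κ : ℝ} (hκ : 1 < κ) {x y : E4} (hx : x ∈ Bo) (hy : y ∈ Bc) : 0 < kL κ x y :=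
  (kN_pos hκ hx y).trans_le (kN_le_kL hκ.le hx hy)

lemma contDiffOn_kG {κ : ℝ} (hκ : 1 < κ) {x : E4} (hx : x ∈ Bo) {n : WithTop ℕ∞} : ContDiffOn ℝ n (kG κ x) Bc := by
  unfold kG
  have hN := (contDiff_kN κ x (n := n)).contDiffOn (s := Bc)
  have hL := (contDiff_kL κ x (n := n)).contDiffOn (s := Bc)
  have n1 : ∀ y ∈ Bc, kN κ x y ≠ 0 := fun y _ => (kN_pos hκ hx y).ne'
  have n2 : ∀ y ∈ Bc, kL κ x y ≠ 0 := fun y hy => (kL_pos hκ hx hy).ne'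
  exact (((hL.log n2).sub (hN.log n1)).add (hN.div hL n2)).sub contDiffOn_const

lemma kG_dirichlet {κ : ℝ} (hκ : 1 < κ) {x : E4} (hx : x ∈ Bo) : 
    ∀ y, ‖y‖ = 1 → kG κ x y = 0 ∧ fderivWithin ℝ (kG κ x) Bc y = 0 := by
  intro y hy
  have hyB : y ∈ Bc := by simp [hy]
  have hN := kN_pos hκ hx y
  have hL := kL_pos hκ hx hyB
  have e : kL κ x y = kN κ x y := by rw [kL_sub_kN hκ.le, hy]; ring
  constructor
  · unfold kG; rw [e]; field_simp; ring
  · rw [(hasFDerivAt_kG κ x y hN hL).hasFDerivWithinAt.fderivWithin (Bc_unique y hyB), e]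
    ext a
    simp
    field_simp
    simp

/-- the Laplacian of `kG` -/
def kP (κ : ℝ) (x y : E4) : ℝ :=
  kN κ x y * (-4 * (‖x‖ ^ 2 / κ) * (kL κ x y ^ 2)⁻¹)
  + ((4 + 4 * (‖x‖ ^ 2 / κ)) * (kL κ x y)⁻¹ - 4 * (1 - ‖x‖ ^ 2 / κ) * (‖x‖ ^ 2 / κ - κ) * (kL κ x y ^ 2)⁻¹)
  + (-4 * (kN κ x y)⁻¹ - 4 * ((κ - 1) * (1 - ‖x‖ ^ 2 / κ)) * (kN κ x y ^ 2)⁻¹)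

lemma contDiffOn_kP {κ : ℝ} (hκ : 1 < κ) {x : E4} (hx : x ∈ Bo) {n : WithTop ℕ∞} : ContDiffOn ℝ n (kP κ x) Bc := by
  unfold kP
  have hN := (contDiff_kN κ x (n := n)).contDiffOn (s := Bc)
  have hL := (contDiff_kL κ x (n := n)).contDiffOn (s := Bc)
  have n1 : ∀ y ∈ Bc, kN κ x y ≠ 0 := fun y _ => (kN_pos hκ hx y).ne'
  have n2 : ∀ y ∈ Bc, kL κ x y ≠ 0 := fun y hy => (kL_pos hκ hx hy).ne'
  have n3 : ∀ y ∈ Bc, kN κ x y ^ 2 ≠ 0 := fun y hy => pow_ne_zero 2 (n1 y hy)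
  have n4 : ∀ y ∈ Bc, kL κ x y ^ 2 ≠ 0 := fun y hy => pow_ne_zero 2 (n2 y hy)
  exact ((hN.mul (contDiffOn_const.mul ((hL.pow 2).inv n4))).add ((contDiffOn_const.mul (hL.inv n2)).sub
    (contDiffOn_const.mul ((hL.pow 2).inv n4)))).add ((contDiffOn_const.mul (hN.inv n1)).sub
    (contDiffOn_const.mul ((hN.pow 2).inv n3)))

lemma hd_inv {t : ℝ} (ht : 0 < t) (n : ℕ) : HasDerivAt (fun s : ℝ => (s ^ n)⁻¹) (-(n:ℝ) * (t ^ (n + 1))⁻¹) t := by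
  have := (hasDerivAt_pow n t).inv (pow_ne_zero n ht.ne')
  refine this.congr_deriv ?_
  rcases n with _ | n
  · simp
  · simp; field_simp; ring

lemma lap_kG {κ : ℝ} (hκ : 1 < κ) {x : E4} (hx : x ∈ Bo) : ∀ y ∈ Bo, lap (kG κ x) y = kP κ x y := by
  intro y hy
  have h := lap_form hκ hx (p := fun t => (t ^ 1)⁻¹) (p' := fun t => -(1:ℕ) * (t ^ 2)⁻¹) (p'' := fun t => -(1:ℕ) * (-(2:ℕ) * (t ^ 3)⁻¹))
    (r := fun t => Real.log t - 1) (r' := fun t => (t ^ 1)⁻¹) (r'' := fun t => -(1:ℕ) * (t ^ 2)⁻¹)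
    (s := fun t => -Real.log t) (s' := fun t => -(t ^ 1)⁻¹) (s'' := fun t => -(-(1:ℕ) * (t ^ 2)⁻¹))
    (fun t ht => hd_inv ht 1) (fun t ht => (hd_inv ht 2).const_mul _)
    (fun t ht => by simpa using (Real.hasDerivAt_log ht.ne').sub_const 1) (fun t ht => hd_inv ht 1)
    (fun t ht => (show HasDerivAt (fun t => -Real.log t) _ _ from (Real.hasDerivAt_log ht.ne').neg).congr_deriv (by simp)) (fun t ht => (hd_inv ht 1).neg) hy
  have e : (fun z => kN κ x z * (kL κ x z ^ 1)⁻¹ + (Real.log (kL κ x z) - 1) + -Real.log (kN κ x z)) = kG κ x := by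
    ext z; unfold kG; ring
  rw [e] at h
  rw [h]
  unfold kP
  have hN := (kN_pos hκ hx y).ne'
  have hL := (kL_pos hκ hx (ball_subset_closedBall hy)).ne'
  push_cast
  generalize ‖x‖ ^ 2 / κ = c
  field_simp
  ring

lemma lap_kP_alg (c κ N L : ℝ) (hN : N ≠ 0) (hL : L ≠ 0) :
      8 * (-4 * c * (L ^ 2)⁻¹)
      + 2 * (-4 * c * (-(2:ℕ) * (L ^ 3)⁻¹)) * (2 * c * N + 2 * L + 2 * (c - 1) * (κ - c))
      + N * (4 * c * L * (-4 * c * (-(2:ℕ) * (-(3:ℕ) * (L ^ 4)⁻¹))) + 8 * c * (-4 * c * (-(2:ℕ) * (L ^ 3)⁻¹)))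
      + (4 * c * L * ((4 + 4 * c) * (-(1:ℕ) * (-(2:ℕ) * (L ^ 3)⁻¹)) - 4 * (1 - c) * (c - κ) * (-(2:ℕ) * (-(3:ℕ) * (L ^ 4)⁻¹))) + 8 * c * ((4 + 4 * c) * (-(1:ℕ) * (L ^ 2)⁻¹) - 4 * (1 - c) * (c - κ) * (-(2:ℕ) * (L ^ 3)⁻¹)))
      + (4 * (N - (κ - 1) * (1 - c)) * (-4 * (-(1:ℕ) * (-(2:ℕ) * (N ^ 3)⁻¹)) - 4 * ((κ - 1) * (1 - c)) * (-(2:ℕ) * (-(3:ℕ) * (N ^ 4)⁻¹))) + 8 * (-4 * (-(1:ℕ) * (N ^ 2)⁻¹) - 4 * ((κ - 1) * (1 - c)) * (-(2:ℕ) * (N ^ 3)⁻¹)))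
      = 96 * ((κ - 1) * (1 - c)) ^ 2 * (N ^ 4)⁻¹ := by
  obtain ⟨n, hn⟩ : ∃ n, n = N⁻¹ := ⟨_, rfl⟩
  obtain ⟨l, hl⟩ : ∃ l, l = L⁻¹ := ⟨_, rfl⟩
  have h1 : N * n = 1 := by rw [hn]; field_simp
  have h2 : L * l = 1 := by rw [hl]; field_simp
  simp only [← inv_pow, ← hn, ← hl]
  push_cast
  obtain ⟨S, hS⟩ : ∃ S, S = (κ - 1) * (1 - c) := ⟨_, rfl⟩
  rw [← hS]
  linear_combination (-32*n^2 - 96 * S * n^3) * h1 + (32 * c * l^2 + (32*c*(1+c) * l^2) - 96*c*(1-c)*(c-κ)*l^3 - 96*c^2*N*l^3) * h2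

lemma lap_kP {κ : ℝ} (hκ : 1 < κ) {x : E4} (hx : x ∈ Bo) : ∀ y ∈ Bo, lap (kP κ x) y =
    96 * ((κ - 1) * (1 - ‖x‖ ^ 2 / κ)) ^ 2 * (kN κ x y ^ 4)⁻¹ := by
  intro y hy
  obtain ⟨c, hc⟩ : ∃ c, ‖x‖ ^ 2 / κ = c := ⟨_, rfl⟩
  have d1 : ∀ (A : ℝ) (n : ℕ), ∀ t > 0, HasDerivAt (fun t : ℝ => A * (t ^ n)⁻¹) (A * (-(n:ℝ) * (t ^ (n + 1))⁻¹)) t :=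
    fun A n t ht => (hd_inv ht n).const_mul A
  have d2 : ∀ (A : ℝ) (n : ℕ), ∀ t > 0, HasDerivAt (fun t : ℝ => A * (-(n:ℝ) * (t ^ (n + 1))⁻¹)) (A * (-(n:ℝ) * (-((n + 1 : ℕ):ℝ) * (t ^ (n + 2))⁻¹))) t :=
    fun A n t ht => ((hd_inv ht (n + 1)).const_mul _).const_mul A
  have d3 : ∀ (A B : ℝ), ∀ t > 0, HasDerivAt (fun t : ℝ => A * (t ^ 1)⁻¹ - B * (t ^ 2)⁻¹) (A * (-(1:ℕ) * (t ^ 2)⁻¹) - B * (-(2:ℕ) * (t ^ 3)⁻¹)) t :=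
    fun A B t ht => (d1 A 1 t ht).sub (d1 B 2 t ht)
  have d4 : ∀ (A B : ℝ), ∀ t > 0, HasDerivAt (fun t : ℝ => A * (-(1:ℕ) * (t ^ 2)⁻¹) - B * (-(2:ℕ) * (t ^ 3)⁻¹))
      (A * (-(1:ℕ) * (-(2:ℕ) * (t ^ 3)⁻¹)) - B * (-(2:ℕ) * (-(3:ℕ) * (t ^ 4)⁻¹))) t :=
    fun A B t ht => (d2 A 1 t ht).sub (d2 B 2 t ht)
  have h := lap_form hκ hx (d1 (-4 * c) 2) (d2 (-4 * c) 2) (d3 (4 + 4 * c) (4 * (1 - c) * (c - κ)))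
    (d4 (4 + 4 * c) (4 * (1 - c) * (c - κ))) (d3 (-4) (4 * ((κ - 1) * (1 - c)))) (d4 (-4) (4 * ((κ - 1) * (1 - c)))) hy
  have e : (fun z => kN κ x z * (-4 * c * (kL κ x z ^ 2)⁻¹) + ((4 + 4 * c) * (kL κ x z ^ 1)⁻¹ - 4 * (1 - c) * (c - κ) * (kL κ x z ^ 2)⁻¹) + (-4 * (kN κ x z ^ 1)⁻¹ - 4 * ((κ - 1) * (1 - c)) * (kN κ x z ^ 2)⁻¹)) = kP κ x := by
    ext z; unfold kP; rw [hc]; simp only [pow_one]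
  rw [e] at h
  rw [h, hc]
  have hN := (kN_pos hκ hx y).ne'
  have hL := (kL_pos hκ hx (ball_subset_closedBall hy)).ne'
  exact lap_kP_alg c κ _ _ hN hL

lemma rep_kappa {κ : ℝ} (hκ : 1 < κ) {x : E4} (hx : x ∈ Bo) {v : E4 → ℝ} (hv : ContDiffOn ℝ 4 v Bc)
    (hv0 : ∀ x, ‖x‖ = 1 → v x = 0 ∧ fderivWithin ℝ v Bc x = 0) :
    ∫ y in Bo, kG κ x y * lap (lap v) y =
      ∫ y in Bo, v y * (96 * ((κ - 1) * (1 - ‖x‖ ^ 2 / κ)) ^ 2 * (kN κ x y ^ 4)⁻¹) :=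
  green4 hv hv0 (contDiffOn_kG hκ hx) (kG_dirichlet hκ hx) (contDiffOn_kP hκ hx) (lap_kG hκ hx) (lap_kP hκ hx)

/-- normalising constant -/
def c0 : ℝ := 96 * ∫ z : E4, ((1 + ‖z‖ ^ 2) ^ 4)⁻¹

lemma bubble_int : Integrable (fun z : E4 => ((1 + ‖z‖ ^ 2) ^ 4)⁻¹) := by
  have := integrable_rpow_neg_one_add_norm_sq (E := E4) (μ := volume) (r := 8) (by simp; norm_num)
  refine this.congr (Eventually.of_forall fun z => ?_)
  simp only
  rw [show (-8/2:ℝ) = -((4:ℕ):ℝ) by norm_num, Real.rpow_neg (by positivity), Real.rpow_natCast]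

lemma c0_pos : 0 < c0 := by
  unfold c0
  apply mul_pos (by norm_num)
  rw [integral_pos_iff_support_of_nonneg (fun z => by positivity) bubble_int]
  have : Function.support (fun z : E4 => ((1 + ‖z‖ ^ 2) ^ 4)⁻¹) = Set.univ := by
    ext z; simp; positivity
  rw [this]; simp

lemma bubble_limit {F : E4 → ℝ} (hF : Measurable F) {K : ℝ} (hK : ∀ z, |F z| ≤ K) {x : E4} (hx : ContinuousAt F x)
    {δ : ℕ → ℝ} (hδ : Tendsto δ atTop (𝓝 0)) :
    Tendsto (fun n => ∫ z, F (x + δ n • z) * ((1 + ‖z‖ ^ 2) ^ 4)⁻¹) atTop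
      (𝓝 (∫ z : E4, F x * ((1 + ‖z‖ ^ 2) ^ 4)⁻¹)) := by
  apply tendsto_integral_of_dominated_convergence (fun z : E4 => K * ((1 + ‖z‖ ^ 2) ^ 4)⁻¹)
  · intro n
    apply Measurable.aestronglyMeasurable
    exact (hF.comp (by fun_prop)).mul (by fun_prop)
  · exact bubble_int.const_mul K
  · intro n
    refine Eventually.of_forall fun z => ?_
    rw [norm_mul, Real.norm_eq_abs, Real.norm_of_nonneg (by positivity : (0:ℝ) ≤ ((1 + ‖z‖ ^ 2) ^ 4)⁻¹)]
    gcongr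
    exact hK _
  · refine Eventually.of_forall fun z => ?_
    apply Tendsto.mul_const
    have h1 : Tendsto (fun n => x + δ n • z) atTop (𝓝 x) := by
      simpa using (tendsto_const_nhds (x := x)).add (hδ.smul_const z)
    exact hx.tendsto.comp h1

lemma bubble_subst (F : E4 → ℝ) (x : E4) {δ : ℝ} (hδ : 0 < δ) :
    ∫ y, F y * ((δ ^ 2) ^ 2 * ((‖y - x‖ ^ 2 + δ ^ 2) ^ 4)⁻¹) = ∫ z, F (x + δ • z) * ((1 + ‖z‖ ^ 2) ^ 4)⁻¹ := by
  rw [← integral_add_left_eq_self (μ := volume) _ x]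
  have := Measure.integral_comp_smul (volume : Measure E4) (fun z => F (x + z) * ((δ ^ 2) ^ 2 * ((‖x + z - x‖ ^ 2 + δ ^ 2) ^ 4)⁻¹)) δ
  have hd : Module.finrank ℝ E4 = 4 := by simp
  rw [hd, abs_of_pos (by positivity), smul_eq_mul] at this
  have h2 : ∫ z, F (x + z) * ((δ ^ 2) ^ 2 * ((‖x + z - x‖ ^ 2 + δ ^ 2) ^ 4)⁻¹) = δ ^ 4 * ∫ z, F (x + δ • z) * ((δ ^ 2) ^ 2 * ((‖x + δ • z - x‖ ^ 2 + δ ^ 2) ^ 4)⁻¹) := by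
    rw [this, ← mul_assoc, mul_inv_cancel₀ (by positivity), one_mul]
  rw [h2, ← integral_const_mul]
  congr 1
  ext z
  have : x + δ • z - x = δ • z := by abel
  rw [this, norm_smul, Real.norm_of_nonneg hδ.le]
  have : (δ * ‖z‖) ^ 2 + δ ^ 2 = δ ^ 2 * (1 + ‖z‖ ^ 2) := by ring
  rw [this]
  have : (1 + ‖z‖ ^ 2) ≠ 0 := by positivity
  field_simp

/-- approximating parameters -/
def kap (n : ℕ) : ℝ := 1 + 1 / ((n : ℝ) + 1)
lemma kap_gt (n : ℕ) : 1 < kap n := by unfold kap; have : 0 < 1 / ((n:ℝ) + 1) := by positivity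
                                       linarith
lemma kap_le (n : ℕ) : kap n ≤ 2 := by
  unfold kap
  have : 1 / ((n:ℝ) + 1) ≤ 1 := by rw [div_le_one (by positivity)]; linarith [n.cast_nonneg (α := ℝ)]
  linarith
lemma kap_tendsto : Tendsto kap atTop (𝓝 1) := by
  unfold kap
  simpa using (tendsto_const_nhds (x := (1:ℝ))).add tendsto_one_div_add_atTop_nhds_zero_nat

lemma rhs_limit {x : E4} (hx : x ∈ Bo) {v : E4 → ℝ} (hv : ContinuousOn v Bc) :
    Tendsto (fun n => ∫ y in Bo, v y * (96 * ((kap n - 1) * (1 - ‖x‖ ^ 2 / kap n)) ^ 2 * (kN (kap n) x y ^ 4)⁻¹)) atTop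
      (𝓝 (c0 * v x)) := by
  classical
  set F := Bo.indicator v with hF
  have hFm : Measurable F := by
    rw [hF, ← Set.piecewise_eq_indicator]
    exact (hv.mono ball_subset_closedBall).measurable_piecewise continuous_zero.continuousOn measurableSet_ball
  obtain ⟨K, hK⟩ := (isCompact_closedBall (0:E4) 1).exists_bound_of_continuousOn hv
  have hK0 : 0 ≤ K := (norm_nonneg _).trans (hK 0 (by simp))
  have hFK : ∀ z, |F z| ≤ K := by
    intro z
    by_cases hz : z ∈ Bo
    · rw [hF, Set.indicator_of_mem hz]; exact hK z (ball_subset_closedBall hz)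
    · rw [hF, Set.indicator_of_notMem hz]; simpa
  have hFx : F x = v x := by rw [hF, Set.indicator_of_mem hx]
  have hFc : ContinuousAt F x := by
    have h1 : ContinuousAt v x := hv.continuousAt (Bc_nhds hx)
    apply h1.congr
    filter_upwards [Bo_nhds hx] with y hy
    rw [hF, Set.indicator_of_mem hy]
  have hsp : ∀ n, 0 < (kap n - 1) * (1 - ‖x‖ ^ 2 / kap n) := fun n =>
    mul_pos (by linarith [kap_gt n]) (by linarith [kc_lt (kap_gt n).le hx])
  have hst : Tendsto (fun n => (kap n - 1) * (1 - ‖x‖ ^ 2 / kap n)) atTop (𝓝 0) := by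
    have := ((kap_tendsto.sub_const 1).mul ((tendsto_const_nhds (x := (1:ℝ))).sub
      ((tendsto_const_nhds (x := ‖x‖ ^ 2)).div kap_tendsto one_ne_zero)))
    simpa using this
  have hδ : Tendsto (fun n => Real.sqrt ((kap n - 1) * (1 - ‖x‖ ^ 2 / kap n))) atTop (𝓝 0) := by
    have := (Real.continuous_sqrt.tendsto 0).comp hst
    rw [Real.sqrt_zero] at this
    exact this
  have := (bubble_limit hFm hFK hFc hδ).const_mul 96
  have e0 : 96 * ∫ z : E4, F x * ((1 + ‖z‖ ^ 2) ^ 4)⁻¹ = c0 * v x := by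
    rw [integral_const_mul, hFx, c0]; ring
  rw [e0] at this
  refine this.congr fun n => ?_
  rw [← bubble_subst F x (Real.sqrt_pos.2 (hsp n)), ← integral_const_mul, Real.sq_sqrt (hsp n).le,
    ← integral_indicator measurableSet_ball]
  congr 1
  ext y
  by_cases hy : y ∈ Bo
  · rw [Set.indicator_of_mem hy, hF, Set.indicator_of_mem hy, kN]; ring
  · rw [Set.indicator_of_notMem hy, hF, Set.indicator_of_notMem hy]; ring

/-- dominating kernel -/
def kJ (x y : E4) : ℝ := (‖y - x‖ ^ 3)⁻¹

lemma kJ_nonneg (x y : E4) : 0 ≤ kJ x y := by unfold kJ; positivity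

lemma kJ_base : Integrable (fun z : E4 => (Set.Iio (1:ℝ)).indicator (fun r => (r ^ 3)⁻¹) ‖z‖) := by
  rw [integrable_fun_norm_addHaar (volume : Measure E4) (f := (Set.Iio (1:ℝ)).indicator (fun r => (r ^ 3)⁻¹))]
  have hd : Module.finrank ℝ E4 = 4 := by simp
  rw [hd]
  have : IntegrableOn (fun y : ℝ => (Set.Iio (1:ℝ)).indicator (fun _ => (1:ℝ)) y) (Set.Ioi 0) := by
    rw [IntegrableOn, integrable_indicator_iff measurableSet_Iio]
    rw [IntegrableOn, Measure.restrict_restrict measurableSet_Iio]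
    apply integrableOn_const
    · have : Set.Iio (1:ℝ) ∩ Set.Ioi 0 = Set.Ioo 0 1 := by ext; simp [and_comm]
      rw [this]; simp
    · simp
  refine this.congr_fun (fun r hr => ?_) measurableSet_Ioi
  have hr0 : (r:ℝ) ≠ 0 := (Set.mem_Ioi.1 hr).ne'
  by_cases h : r ∈ Set.Iio (1:ℝ)
  · simp only [Set.indicator_of_mem h]; simp; field_simp
  · simp only [Set.indicator_of_notMem h]; simp

lemma kJ_meas (x : E4) : Measurable (kJ x) := by unfold kJ; fun_prop

lemma kJ_int : ∃ A : ℝ, 0 < A ∧ ∀ x : E4, IntegrableOn (kJ x) Bo ∧ ∫ y in Bo, kJ x y ≤ A := by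
  set g : E4 → ℝ := fun z : E4 => (Set.Iio (1:ℝ)).indicator (fun r => (r ^ 3)⁻¹) ‖z‖ with hg
  have g0 : ∀ z, 0 ≤ g z := fun z => by
    by_cases h : ‖z‖ ∈ Set.Iio (1:ℝ)
    · simp only [hg, Set.indicator_of_mem h]; positivity
    · simp only [hg, Set.indicator_of_notMem h]; exact le_rfl
  have hle : ∀ x y, kJ x y ≤ g (y - x) + 1 := by
    intro x y
    by_cases h : ‖y - x‖ ∈ Set.Iio (1:ℝ)
    · simp only [hg, Set.indicator_of_mem h, kJ]; linarith
    · simp only [hg, Set.indicator_of_notMem h, kJ, zero_add]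
      exact inv_le_one_of_one_le₀ (one_le_pow₀ (not_lt.1 h))
  have hgi : ∀ x, Integrable (fun y => g (y - x)) := fun x => kJ_base.comp_sub_right x
  have hfin : volume Bo ≠ ⊤ := measure_ball_lt_top.ne
  have h1 : IntegrableOn (fun _ : E4 => (1:ℝ)) Bo := integrableOn_const hfin
  have hInt : ∀ x, IntegrableOn (fun y => g (y - x) + 1) Bo := fun x => (hgi x).integrableOn.add h1
  refine ⟨(∫ z, g z) + volume.real Bo + 1, by
    have : 0 ≤ ∫ z, g z := integral_nonneg (fun z => g0 z)
    have := measureReal_nonneg (μ := (volume : Measure E4)) (s := Bo)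
    positivity, fun x => ?_⟩
  have hi : IntegrableOn (kJ x) Bo := by
    refine (hInt x).mono' (kJ_meas x).aestronglyMeasurable (Eventually.of_forall fun y => ?_)
    rw [Real.norm_of_nonneg (kJ_nonneg x y)]; exact hle x y
  refine ⟨hi, ?_⟩
  have a1 : ∫ y in Bo, kJ x y ≤ ∫ y in Bo, (g (y - x) + 1) := integral_mono hi (hInt x) (hle x)
  rw [integral_add (hgi x).integrableOn h1] at a1
  have a2 : ∫ y in Bo, g (y - x) ≤ ∫ y, g (y - x) :=
    setIntegral_le_integral (hgi x) (Eventually.of_forall fun y => g0 _)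
  rw [integral_sub_right_eq_self (μ := volume) g x] at a2
  simp at a1
  linarith

/-- the constant bounding the kernel integrals -/
def cA : ℝ := kJ_int.choose
lemma cA_pos : 0 < cA := kJ_int.choose_spec.1
lemma kJ_integrable (x : E4) : IntegrableOn (kJ x) Bo := (kJ_int.choose_spec.2 x).1
lemma kJ_le (x : E4) : ∫ y in Bo, kJ x y ≤ cA := (kJ_int.choose_spec.2 x).2

lemma kL_le {κ : ℝ} (hκ : 1 ≤ κ) (hκ2 : κ ≤ 2) {x y : E4} (hx : x ∈ Bo) (hy : y ∈ Bc) : kL κ x y ≤ 5 := by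
  have := kc_lt hκ hx
  have hx1 : ‖x‖ < 1 := by simpa using hx
  have hy1 : ‖y‖ ≤ 1 := by simpa using hy
  have h1 := abs_le.1 (abs_real_inner_le_norm x y)
  have h2 : ‖x‖ * ‖y‖ ≤ 1 := by nlinarith [norm_nonneg x, norm_nonneg y]
  have h3 : ‖x‖ ^ 2 / κ * ‖y‖ ^ 2 ≤ 1 := by
    have : 0 ≤ ‖x‖ ^ 2 / κ := by positivity
    nlinarith [norm_nonneg y]
  unfold kL; linarith

lemma norm_sub_le_two {x y : E4} (hx : x ∈ Bo) (hy : y ∈ Bc) : ‖y - x‖ ≤ 2 := by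
  have hx1 : ‖x‖ < 1 := by simpa using hx
  have hy1 : ‖y‖ ≤ 1 := by simpa using hy
  linarith [norm_sub_le y x]

lemma kG_bd {κ : ℝ} (hκ : 1 ≤ κ) (hκ2 : κ ≤ 2) {x y : E4} (hx : x ∈ Bo) (hy : y ∈ Bc) (hxy : y ≠ x) :
    0 ≤ kG κ x y ∧ kG κ x y ≤ 10 * kJ x y := by
  have hn : 0 < ‖y - x‖ := norm_pos_iff.2 (sub_ne_zero.2 hxy)
  have hN : 0 < kN κ x y := lt_of_lt_of_le (by positivity) (kN_ge hκ hx y)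
  have hNL := kN_le_kL hκ hx hy
  have hL : 0 < kL κ x y := hN.trans_le hNL
  have h1 := Real.one_sub_inv_le_log_of_pos (div_pos hL hN)
  have h2 := Real.log_le_sub_one_of_pos (div_pos hL hN)
  rw [Real.log_div hL.ne' hN.ne'] at h1 h2
  rw [inv_div] at h1
  have h3 : kN κ x y / kL κ x y ≤ 1 := (div_le_one hL).2 hNL
  refine ⟨by unfold kG; linarith, ?_⟩
  have h4 : kL κ x y / kN κ x y ≤ 5 / ‖y - x‖ ^ 2 :=
    div_le_div₀ (by norm_num) (kL_le hκ hκ2 hx hy) (by positivity) (kN_ge hκ hx y)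
  have h5 : 5 / ‖y - x‖ ^ 2 ≤ 10 * kJ x y := by
    unfold kJ
    rw [← div_eq_mul_inv, div_le_div_iff₀ (by positivity) (by positivity)]
    have := norm_sub_le_two hx hy
    nlinarith [sq_nonneg ‖y - x‖]
  unfold kG; linarith

lemma kN_tendsto (x y : E4) : Tendsto (fun n => kN (kap n) x y) atTop (𝓝 (kN 1 x y)) := by
  have : ContinuousAt (fun κ => kN κ x y) 1 := by
    unfold kN; fun_prop (disch := norm_num)
  exact this.tendsto.comp kap_tendsto

lemma kL_tendsto (x y : E4) : Tendsto (fun n => kL (kap n) x y) atTop (𝓝 (kL 1 x y)) := by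
  have : ContinuousAt (fun κ => kL κ x y) 1 := by
    unfold kL; fun_prop (disch := norm_num)
  exact this.tendsto.comp kap_tendsto

lemma kN1_pos {x y : E4} (hxy : y ≠ x) : 0 < kN 1 x y := by
  have hn : 0 < ‖y - x‖ := norm_pos_iff.2 (sub_ne_zero.2 hxy)
  unfold kN; simp; positivity

lemma kL1_pos {x y : E4} (hx : x ∈ Bo) (hy : y ∈ Bc) (hxy : y ≠ x) : 0 < kL 1 x y :=
  (kN1_pos hxy).trans_le (kN_le_kL le_rfl hx hy)

lemma kG_tendsto {x y : E4} (hx : x ∈ Bo) (hy : y ∈ Bc) (hxy : y ≠ x) :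
    Tendsto (fun n => kG (kap n) x y) atTop (𝓝 (kG 1 x y)) := by
  unfold kG
  have hN := kN_tendsto x y
  have hL := kL_tendsto x y
  have pN := kN1_pos hxy
  have pL := kL1_pos hx hy hxy
  exact (((hL.log pL.ne').sub (hN.log pN.ne')).add (hN.div hL pL.ne')).sub_const 1

lemma kG_meas (κ : ℝ) (x : E4) : Measurable (kG κ x) := by
  have h1 : Measurable (kN κ x) := (contDiff_kN κ x (n := 0)).continuous.measurable
  have h2 : Measurable (kL κ x) := (contDiff_kL κ x (n := 0)).continuous.measurable
  unfold kG
  exact (((Real.measurable_log.comp h2).sub (Real.measurable_log.comp h1)).add (h1.div h2)).sub_const 1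

lemma ae_ne (x : E4) : ∀ᵐ y ∂(volume.restrict Bo), y ∈ Bo ∧ y ≠ x := by
  have h1 : ∀ᵐ y ∂(volume.restrict Bo), y ∈ Bo := ae_restrict_mem measurableSet_ball
  have h2 : ∀ᵐ y ∂(volume.restrict Bo), y ≠ x := ae_restrict_of_ae (by simp [ae_iff])
  filter_upwards [h1, h2] with y a b using ⟨a, b⟩

/-- bounded continuous functions on the open ball -/
lemma dom_lim {F : ℕ → E4 → ℝ} {F0 : E4 → ℝ} {x : E4} {K M : ℝ} {h : E4 → ℝ}
    (hh : ContinuousOn h Bo) (hM : ∀ y ∈ Bo, |h y| ≤ M)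
    (hF : ∀ n, AEStronglyMeasurable (F n) (volume.restrict Bo))
    (hb : ∀ n, ∀ y ∈ Bo, y ≠ x → |F n y| ≤ K * kJ x y)
    (hl : ∀ y ∈ Bo, y ≠ x → Tendsto (fun n => F n y) atTop (𝓝 (F0 y))) :
    Tendsto (fun n => ∫ y in Bo, F n y * h y) atTop (𝓝 (∫ y in Bo, F0 y * h y)) := by
  apply tendsto_integral_of_dominated_convergence (fun y => K * kJ x y * M)
  · exact fun n => (hF n).mul (hh.aestronglyMeasurable measurableSet_ball)
  · exact ((kJ_integrable x).const_mul K).mul_const M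
  · intro n
    filter_upwards [ae_ne x] with y ⟨hy, hyx⟩
    rw [norm_mul]
    exact mul_le_mul (hb n y hy hyx) (hM y hy) (norm_nonneg _) ((abs_nonneg _).trans (hb n y hy hyx))
  · filter_upwards [ae_ne x] with y ⟨hy, hyx⟩
    exact (hl y hy hyx).mul_const _

/-- Green representation -/
lemma rep {x : E4} (hx : x ∈ Bo) {v : E4 → ℝ} (hv : ContDiffOn ℝ 4 v Bc)
    (hv0 : ∀ x, ‖x‖ = 1 → v x = 0 ∧ fderivWithin ℝ v Bc x = 0) {h : E4 → ℝ}
    (hh : ContinuousOn h Bo) {M : ℝ} (hM : ∀ y ∈ Bo, |h y| ≤ M) (he : ∀ y ∈ Bo, lap (lap v) y = h y) :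
    ∫ y in Bo, kG 1 x y * h y = c0 * v x := by
  have h1 := rhs_limit hx hv.continuousOn
  have h2 : Tendsto (fun n => ∫ y in Bo, kG (kap n) x y * h y) atTop (𝓝 (∫ y in Bo, kG 1 x y * h y)) := by
    apply dom_lim hh hM (K := 10) (x := x)
    · exact fun n => (kG_meas _ x).aestronglyMeasurable
    · intro n y hy hyx
      have := kG_bd (kap_gt n).le (kap_le n) hx (ball_subset_closedBall hy) hyx
      rw [abs_of_nonneg this.1]; exact this.2
    · intro y hy hyx
      exact kG_tendsto hx (ball_subset_closedBall hy) hyx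
  refine tendsto_nhds_unique h2 (h1.congr fun n => ?_)
  rw [← rep_kappa (kap_gt n) hx hv hv0]
  exact setIntegral_congr_fun measurableSet_ball fun y hy => by simp only [he y hy]

lemma max_principle {x : E4} (hx : x ∈ Bo) {v : E4 → ℝ} (hv : ContDiffOn ℝ 4 v Bc)
    (hv0 : ∀ x, ‖x‖ = 1 → v x = 0 ∧ fderivWithin ℝ v Bc x = 0) {h : E4 → ℝ}
    (hh : ContinuousOn h Bo) {M : ℝ} (hM : ∀ y ∈ Bo, |h y| ≤ M) (he : ∀ y ∈ Bo, lap (lap v) y = h y)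
    (hpos : ∀ y ∈ Bo, 0 ≤ h y) : 0 ≤ v x := by
  have h1 := rep hx hv hv0 hh hM he
  have h2 : 0 ≤ ∫ y in Bo, kG 1 x y * h y := by
    apply integral_nonneg_of_ae
    filter_upwards [ae_ne x] with y ⟨hy, hyx⟩
    exact mul_nonneg (kG_bd le_rfl one_le_two hx (ball_subset_closedBall hy) hyx).1 (hpos y hy)
  rw [h1] at h2
  exact nonneg_of_mul_nonneg_right h2 c0_pos

lemma ker_int {Q : E4 → ℝ} {K M : ℝ} {p : E4} {h : E4 → ℝ}
    (hh : ContinuousOn h Bo) (hM : ∀ y ∈ Bo, |h y| ≤ M) (hQm : Measurable Q)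
    (hQ : ∀ᵐ y ∂(volume.restrict Bo), |Q y| ≤ K * kJ p y) (hK : 0 ≤ K) :
    IntegrableOn (fun y => Q y * h y) Bo ∧ ∫ y in Bo, |Q y * h y| ≤ K * cA * M := by
  have hM0 : 0 ≤ M := (abs_nonneg _).trans (hM 0 (by simp))
  have hmem : ∀ᵐ y ∂(volume.restrict Bo), y ∈ Bo := ae_restrict_mem measurableSet_ball
  have hb : ∀ᵐ y ∂(volume.restrict Bo), |Q y * h y| ≤ K * kJ p y * M := by
    filter_upwards [hQ, hmem] with y h1 h2
    rw [abs_mul]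
    exact mul_le_mul h1 (hM y h2) (abs_nonneg _) ((abs_nonneg _).trans h1)
  have hd : IntegrableOn (fun y => K * kJ p y * M) Bo := ((kJ_integrable p).const_mul K).mul_const M
  have hi : IntegrableOn (fun y => Q y * h y) Bo :=
    hd.mono' (hQm.aestronglyMeasurable.mul (hh.aestronglyMeasurable measurableSet_ball)) hb
  refine ⟨hi, ?_⟩
  have := integral_mono_ae hi.abs hd hb
  refine this.trans ?_
  rw [integral_mul_const, integral_const_mul]
  gcongr
  exact kJ_le p

lemma fub {P Q : ℝ → E4 → ℝ} {K M s t : ℝ} {γ : ℝ → E4} {h : E4 → ℝ} (hst : s ≤ t)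
    (hh : ContinuousOn h Bo) (hM : ∀ y ∈ Bo, |h y| ≤ M) (hK : 0 ≤ K)
    (hPm : ∀ t, Measurable (P t)) (hQm : Measurable (Function.uncurry Q))
    (hae : ∀ᵐ y ∂(volume.restrict Bo), ∀ τ ∈ Set.Icc s t, HasDerivAt (fun t => P t y) (Q τ y) τ ∧
      |P τ y| ≤ K * kJ (γ τ) y ∧ |Q τ y| ≤ K * kJ (γ τ) y ∧ ContinuousAt (fun t => Q t y) τ) :
    (∫ y in Bo, P t y * h y) - ∫ y in Bo, P s y * h y = ∫ τ in s..t, ∫ y in Bo, Q τ y * h y := by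
  have hmem : ∀ᵐ y ∂(volume.restrict Bo), y ∈ Bo := ae_restrict_mem measurableSet_ball
  have hInt : Integrable (Function.uncurry fun τ y => Q τ y * h y)
      ((volume.restrict (Set.uIoc s t)).prod (volume.restrict Bo)) := by
    have hm : AEStronglyMeasurable (Function.uncurry fun τ y => Q τ y * h y)
      ((volume.restrict (Set.uIoc s t)).prod (volume.restrict Bo)) := by
      apply AEStronglyMeasurable.mul (f := Function.uncurry Q) (g := fun z : ℝ × E4 => h z.2) hQm.aestronglyMeasurable
      exact (hh.aestronglyMeasurable measurableSet_ball).comp_snd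
    rw [integrable_prod_iff hm]
    have hq : ∀ τ ∈ Set.Icc s t, ∀ᵐ y ∂(volume.restrict Bo), |Q τ y| ≤ K * kJ (γ τ) y := fun τ hτ => by
      filter_upwards [hae] with y hy using (hy τ hτ).2.2.1
    have hQm' : ∀ τ, Measurable (Q τ) := fun τ => hQm.comp measurable_prodMk_left
    have hτ : ∀ᵐ τ ∂(volume.restrict (Set.uIoc s t)), τ ∈ Set.Icc s t := by
      filter_upwards [ae_restrict_mem measurableSet_uIoc] with τ hτ
      rw [Set.uIoc_of_le hst] at hτ
      exact ⟨hτ.1.le, hτ.2⟩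
    constructor
    · filter_upwards [hτ] with τ hτ using (ker_int hh hM (hQm' τ) (hq τ hτ) hK).1
    · have : IsFiniteMeasure (volume.restrict (Set.uIoc s t)) := ⟨by simp [Set.uIoc]⟩
      refine Integrable.mono' (g := fun _ => K * cA * M) (integrable_const _) hm.norm.integral_prod_right' ?_
      filter_upwards [hτ] with τ hτ
      rw [Real.norm_of_nonneg (integral_nonneg fun y => norm_nonneg _)]
      exact (ker_int hh hM (hQm' τ) (hq τ hτ) hK).2
  rw [intervalIntegral_integral_swap hInt]
  have i1 : ∀ τ ∈ Set.Icc s t, IntegrableOn (fun y => P τ y * h y) Bo := fun τ hτ =>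
    (ker_int hh hM (hPm τ) (by filter_upwards [hae] with y hy using (hy τ hτ).2.1) hK).1
  rw [← integral_sub (i1 t ⟨hst, le_rfl⟩) (i1 s ⟨le_rfl, hst⟩)]
  apply integral_congr_ae
  filter_upwards [hae] with y hy
  rw [intervalIntegral.integral_mul_const, intervalIntegral.integral_eq_sub_of_hasDerivAt (f := fun t => P t y)]
  · ring
  · intro τ hτ
    rw [Set.uIcc_of_le hst] at hτ
    exact (hy τ hτ).1
  · apply ContinuousOn.intervalIntegrable
    intro τ hτ
    rw [Set.uIcc_of_le hst] at hτ
    exact (hy τ hτ).2.2.2.continuousWithinAt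

/-- derivatives along lines -/
def N1 (e p y : E4) : ℝ := -2 * inner ℝ (y - p) e
def N2 (e : E4) : ℝ := 2 * ‖e‖ ^ 2
def L1 (e p y : E4) : ℝ := 2 * inner ℝ p e * ‖y‖ ^ 2 - 2 * inner ℝ e y
def L2 (e y : E4) : ℝ := 2 * ‖e‖ ^ 2 * ‖y‖ ^ 2
/-- first derivative kernel -/
def K1 (e p y : E4) : ℝ :=
  L1 e p y / kL 1 p y - N1 e p y / kN 1 p y + N1 e p y / kL 1 p y - kN 1 p y * L1 e p y / kL 1 p y ^ 2
def q2 (N N' N'' L L' L'' : ℝ) : ℝ :=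
  L'' / L - L' ^ 2 / L ^ 2 - N'' / N + N' ^ 2 / N ^ 2 + N'' / L - 2 * (N' * L') / L ^ 2 - N * L'' / L ^ 2
    + 2 * (N * L' ^ 2) / L ^ 3
def q3 (N N' N'' L L' L'' : ℝ) : ℝ :=
  -3 * (L' * L'') / L ^ 2 + 2 * L' ^ 3 / L ^ 3 + 3 * (N' * N'') / N ^ 2 - 2 * N' ^ 3 / N ^ 3 - 3 * (N'' * L') / L ^ 2
   - 3 * (N' * L'') / L ^ 2 + 6 * (N' * L' ^ 2) / L ^ 3 + 6 * (N * L' * L'') / L ^ 3 - 6 * (N * L' ^ 3) / L ^ 4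
def K2 (e p y : E4) : ℝ := q2 (kN 1 p y) (N1 e p y) (N2 e) (kL 1 p y) (L1 e p y) (L2 e y)
def K3 (e p y : E4) : ℝ := q3 (kN 1 p y) (N1 e p y) (N2 e) (kL 1 p y) (L1 e p y) (L2 e y)

lemma kN1_eq (p y : E4) : kN 1 p y = ‖y - p‖ ^ 2 := by unfold kN; ring
lemma kL1_eq (p y : E4) : kL 1 p y = ‖p‖ ^ 2 * ‖y‖ ^ 2 - 2 * inner ℝ p y + 1 := by unfold kL; ring

lemma hd_line (x e : E4) (t : ℝ) : HasDerivAt (fun t : ℝ => x + t • e) e t := by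
  simpa using ((hasDerivAt_id t).smul_const e).const_add x

lemma hd_N (x e y : E4) (t : ℝ) : HasDerivAt (fun t : ℝ => kN 1 (x + t • e) y) (N1 e (x + t • e) y) t := by
  simp only [kN1_eq]
  have := ((hd_line x e t).const_sub y).norm_sq
  refine this.congr_deriv ?_
  simp [N1, inner_neg_right]

lemma hd_N1 (x e y : E4) (t : ℝ) : HasDerivAt (fun t : ℝ => N1 e (x + t • e) y) (N2 e) t := by
  unfold N1 N2
  have := (((hd_line x e t).const_sub y).inner ℝ (hasDerivAt_const t e)).const_mul (-2)
  refine this.congr_deriv ?_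
  simp

lemma hd_L (x e y : E4) (t : ℝ) : HasDerivAt (fun t : ℝ => kL 1 (x + t • e) y) (L1 e (x + t • e) y) t := by
  simp only [kL1_eq]
  have := ((((hd_line x e t).norm_sq).mul_const (‖y‖ ^ 2)).sub
    (((hd_line x e t).inner ℝ (hasDerivAt_const t y)).const_mul 2)).add_const 1
  refine this.congr_deriv ?_
  simp [L1]

lemma hd_L1 (x e y : E4) (t : ℝ) : HasDerivAt (fun t : ℝ => L1 e (x + t • e) y) (L2 e y) t := by
  unfold L1 L2
  have := ((((hd_line x e t).inner ℝ (hasDerivAt_const t e)).const_mul 2).mul_const (‖y‖ ^ 2)).sub_const (2 * inner ℝ e y)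
  refine this.congr_deriv ?_
  simp

lemma hd_K (x e y : E4) (t : ℝ) (hN : 0 < kN 1 (x + t • e) y) (hL : 0 < kL 1 (x + t • e) y) :
    HasDerivAt (fun t : ℝ => kG 1 (x + t • e) y) (K1 e (x + t • e) y) t ∧
    HasDerivAt (fun t : ℝ => K1 e (x + t • e) y) (K2 e (x + t • e) y) t ∧
    HasDerivAt (fun t : ℝ => K2 e (x + t • e) y) (K3 e (x + t • e) y) t ∧
    ContinuousAt (fun t : ℝ => K3 e (x + t • e) y) t := by
  have dN := hd_N x e y t
  have dN1 := hd_N1 x e y t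
  have dL := hd_L x e y t
  have dL1 := hd_L1 x e y t
  have hN' := hN.ne'
  have hL' := hL.ne'
  have c2 : kL 1 (x + t • e) y ^ 2 ≠ 0 := pow_ne_zero 2 hL'
  have c3 : kL 1 (x + t • e) y ^ 3 ≠ 0 := pow_ne_zero 3 hL'
  have c4 : kL 1 (x + t • e) y ^ 4 ≠ 0 := pow_ne_zero 4 hL'
  have n2 : kN 1 (x + t • e) y ^ 2 ≠ 0 := pow_ne_zero 2 hN'
  have n3 : kN 1 (x + t • e) y ^ 3 ≠ 0 := pow_ne_zero 3 hN'
  refine ⟨?_, ?_, ?_, ?_⟩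
  · refine HasDerivAt.congr_deriv (f := fun t : ℝ => kG 1 (x + t • e) y)
      ((((dL.log hL').sub (dN.log hN')).add (dN.div dL hL')).sub_const 1) ?_
    unfold K1; field_simp; ring
  · refine HasDerivAt.congr_deriv (f := fun t : ℝ => K1 e (x + t • e) y)
      ((((dL1.div dL hL').sub (dN1.div dN hN')).add (dN1.div dL hL')).sub ((dN.mul dL1).div (dL.pow 2) c2)) ?_
    unfold K2 q2
    simp
    generalize kN 1 (x + t • e) y = N at *
    generalize kL 1 (x + t • e) y = L at *
    generalize N1 e (x + t • e) y = N' at *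
    generalize L1 e (x + t • e) y = L' at *
    field_simp; ring
  · have dN2 := hasDerivAt_const t (N2 e)
    have dL2 := hasDerivAt_const t (L2 e y)
    refine HasDerivAt.congr_deriv (f := fun t : ℝ => K2 e (x + t • e) y)
      ((((((((dL2.div dL hL').sub ((dL1.pow 2).div (dL.pow 2) c2)).sub (dN2.div dN hN')).add
        ((dN1.pow 2).div (dN.pow 2) n2)).add (dN2.div dL hL')).sub (((dN1.mul dL1).const_mul 2).div (dL.pow 2) c2)).sub
        ((dN.mul dL2).div (dL.pow 2) c2)).add (((dN.mul (dL1.pow 2)).const_mul 2).div (dL.pow 3) c3)) ?_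
    unfold K3 q3
    simp
    generalize kN 1 (x + t • e) y = N at *
    generalize kL 1 (x + t • e) y = L at *
    generalize N1 e (x + t • e) y = N' at *
    generalize L1 e (x + t • e) y = L' at *
    field_simp; ring
  · have aN := dN.continuousAt
    have aN1 := dN1.continuousAt
    have aL := dL.continuousAt
    have aL1 := dL1.continuousAt
    unfold K3 q3
    fun_prop (disch := assumption)

def q1 (N N' L L' : ℝ) : ℝ := L' / L - N' / N + N' / L - N * L' / L ^ 2

lemma poly_bd (P : ℝ × ℝ × ℝ × ℝ × ℝ → ℝ) (hP : Continuous P) : ∃ C, 0 ≤ C ∧ ∀ α β γ δ θ : ℝ, |α| ≤ 8 → |β| ≤ 8 → |γ| ≤ 32 → |δ| ≤ 32 →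
    |θ| ≤ 1 → |P (α, β, γ, δ, θ)| ≤ C := by
  obtain ⟨C, hC⟩ := (isCompact_closedBall (0 : ℝ × ℝ × ℝ × ℝ × ℝ) 32).exists_bound_of_continuousOn hP.continuousOn
  refine ⟨C, (norm_nonneg _).trans (hC 0 (by simp)), fun α β γ δ θ h1 h2 h3 h4 h5 => hC _ ?_⟩
  simp only [mem_closedBall_zero_iff, Prod.norm_mk, Real.norm_eq_abs, sup_le_iff]
  refine ⟨?_, ?_, ?_, ?_, ?_⟩ <;> linarith

set_option maxHeartbeats 2000000 in
lemma q_bd : ∃ C, 0 ≤ C ∧ ∀ n l N N' N'' L L' L'' : ℝ, 0 < n → n ≤ l → n ≤ 2 → N = n ^ 2 → L = l ^ 2 → |N'| ≤ 8 * n →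
    |L'| ≤ 8 * l → |N''| ≤ 32 → |L''| ≤ 32 →
    |q1 N N' L L'| ≤ C * (n ^ 3)⁻¹ ∧ |q2 N N' N'' L L' L''| ≤ C * (n ^ 3)⁻¹ ∧ |q3 N N' N'' L L' L''| ≤ C * (n ^ 3)⁻¹ := by
  obtain ⟨C1, hC1, h1⟩ := poly_bd (fun z => z.2.1 * z.2.2.2.2 - z.1 + z.1 * z.2.2.2.2 ^ 2 - z.2.1 * z.2.2.2.2 ^ 3) (by fun_prop)
  obtain ⟨C2, hC2, h2⟩ := poly_bd (fun z => z.2.2.1 * z.2.2.2.2 ^ 2 - z.2.1 ^ 2 * z.2.2.2.2 ^ 2 - z.2.2.2.1 + z.1 ^ 2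
    + z.2.2.2.1 * z.2.2.2.2 ^ 2 - 2 * (z.1 * z.2.1 * z.2.2.2.2 ^ 3) - z.2.2.1 * z.2.2.2.2 ^ 4 + 2 * (z.2.1 ^ 2 * z.2.2.2.2 ^ 4)) (by fun_prop)
  obtain ⟨C3, hC3, h3⟩ := poly_bd (fun z => -3 * (z.2.1 * z.2.2.1 * z.2.2.2.2 ^ 3) + 2 * (z.2.1 ^ 3 * z.2.2.2.2 ^ 3)
    + 3 * (z.1 * z.2.2.2.1) - 2 * z.1 ^ 3 - 3 * (z.2.2.2.1 * z.2.1 * z.2.2.2.2 ^ 3) - 3 * (z.1 * z.2.2.1 * z.2.2.2.2 ^ 4)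
    + 6 * (z.1 * z.2.1 ^ 2 * z.2.2.2.2 ^ 4) + 6 * (z.2.1 * z.2.2.1 * z.2.2.2.2 ^ 5) - 6 * (z.2.1 ^ 3 * z.2.2.2.2 ^ 5)) (by fun_prop)
  refine ⟨4 * C1 + 2 * C2 + C3, by positivity, ?_⟩
  intro n l N N' N'' L L' L'' hn hnl hn2 hN hL hN' hL' hN'' hL''
  have hl : 0 < l := hn.trans_le hnl
  obtain ⟨α, hα⟩ : ∃ α, α = N' / n := ⟨_, rfl⟩
  obtain ⟨β, hβ⟩ : ∃ β, β = L' / l := ⟨_, rfl⟩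
  obtain ⟨θ, hθ⟩ : ∃ θ, θ = n / l := ⟨_, rfl⟩
  have bα : |α| ≤ 8 := by rw [hα, abs_div, abs_of_pos hn, div_le_iff₀ hn]; exact hN'
  have bβ : |β| ≤ 8 := by rw [hβ, abs_div, abs_of_pos hl, div_le_iff₀ hl]; exact hL'
  have bθ : |θ| ≤ 1 := by rw [hθ, abs_div, abs_of_pos hn, abs_of_pos hl, div_le_one hl]; exact hnl
  have e1 : N' = α * n := by rw [hα]; field_simp
  have e2 : L' = β * l := by rw [hβ]; field_simp
  have e3 : n = θ * l := by rw [hθ]; field_simp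
  have i1 := h1 α β L'' N'' θ bα bβ hL'' hN'' bθ
  have i2 := h2 α β L'' N'' θ bα bβ hL'' hN'' bθ
  have i3 := h3 α β L'' N'' θ bα bβ hL'' hN'' bθ
  have hθ0 : θ ≠ 0 := by rw [hθ]; positivity
  simp only at i1 i2 i3
  have key : ∀ (j : ℕ) (q P C : ℝ), q * n ^ j = P → |P| ≤ C → |q| ≤ C * (n ^ j)⁻¹ := by
    intro j q P C h1 h2
    have : 0 < n ^ j := by positivity
    rw [← div_eq_mul_inv, le_div_iff₀ this]
    rw [← h1, abs_mul, abs_of_pos this] at h2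
    exact h2
  have j1 := key 1 (q1 N N' L L') _ _ (by unfold q1; rw [hN, hL, e1, e2, e3]; field_simp) i1
  have j2 := key 2 (q2 N N' N'' L L' L'') _ _ (by unfold q2; rw [hN, hL, e1, e2, e3]; field_simp) i2
  have j3 := key 3 (q3 N N' N'' L L' L'') _ _ (by unfold q3; rw [hN, hL, e1, e2, e3]; field_simp) i3
  have k1 : (n ^ 1)⁻¹ ≤ 4 * (n ^ 3)⁻¹ := by
    rw [← div_eq_mul_inv, inv_eq_one_div, div_le_div_iff₀ (by positivity) (by positivity)]
    nlinarith [mul_nonneg hn.le (mul_nonneg hn.le hn.le), mul_le_mul hn2 hn2 hn.le (by norm_num)]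
  have k2 : (n ^ 2)⁻¹ ≤ 2 * (n ^ 3)⁻¹ := by
    rw [← div_eq_mul_inv, inv_eq_one_div, div_le_div_iff₀ (by positivity) (by positivity)]
    nlinarith [sq_nonneg n]
  have p3 : 0 ≤ (n ^ 3)⁻¹ := by positivity
  have m1 := mul_le_mul_of_nonneg_left k1 hC1
  have m2 := mul_le_mul_of_nonneg_left k2 hC2
  have a1 := mul_nonneg hC1 p3
  have a2 := mul_nonneg hC2 p3
  have a3 := mul_nonneg hC3 p3
  refine ⟨?_, ?_, ?_⟩ <;> nlinarith

lemma sq_L_id (p y : E4) : ‖(‖y‖ ^ 2) • p - y‖ ^ 2 = ‖y‖ ^ 2 * kL 1 p y := by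
  rw [kL1_eq, norm_sub_sq_real, norm_smul, inner_smul_left]
  simp
  ring

lemma K_bd : ∃ C, 0 ≤ C ∧ ∀ e p y : E4, ‖e‖ ≤ 4 → p ∈ Bo → y ∈ Bo → y ≠ p →
    |kG 1 p y| ≤ C * kJ p y ∧ |K1 e p y| ≤ C * kJ p y ∧ |K2 e p y| ≤ C * kJ p y ∧ |K3 e p y| ≤ C * kJ p y := by
  obtain ⟨C, hC, h⟩ := q_bd
  refine ⟨C + 10, by positivity, ?_⟩
  intro e p y he hp hy hyp
  have hy' := ball_subset_closedBall hy
  have hy1 : ‖y‖ < 1 := by simpa using hy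
  have hn : 0 < ‖y - p‖ := norm_pos_iff.2 (sub_ne_zero.2 hyp)
  have hN := kN1_pos hyp
  have hL := kL1_pos hp hy' hyp
  have hNL := kN_le_kL le_rfl hp hy'
  have hl : 0 < √(kL 1 p y) := Real.sqrt_pos.2 hL
  have hLs := Real.sq_sqrt hL.le
  have hJ := kJ_nonneg p y
  have bnl : ‖y - p‖ ≤ √(kL 1 p y) := by
    apply Real.le_sqrt_of_sq_le; rw [← kN1_eq]; exact hNL
  have bN' : |N1 e p y| ≤ 8 * ‖y - p‖ := by
    unfold N1; rw [abs_mul]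
    have := abs_real_inner_le_norm (y - p) e
    simp
    nlinarith [norm_nonneg e]
  have bL' : |L1 e p y| ≤ 8 * √(kL 1 p y) := by
    have e1 : L1 e p y = 2 * inner ℝ ((‖y‖ ^ 2) • p - y) e := by
      unfold L1; rw [inner_sub_left, inner_smul_left, real_inner_comm e y]; simp; ring
    have h1 := abs_real_inner_le_norm ((‖y‖ ^ 2) • p - y) e
    have h2 : ‖(‖y‖ ^ 2) • p - y‖ ≤ √(kL 1 p y) := by
      apply Real.le_sqrt_of_sq_le
      rw [sq_L_id]
      have : ‖y‖ ^ 2 ≤ 1 := by nlinarith [norm_nonneg y]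
      nlinarith
    rw [e1, abs_mul, abs_two]
    have : ‖(‖y‖ ^ 2) • p - y‖ * ‖e‖ ≤ √(kL 1 p y) * 4 := mul_le_mul h2 he (norm_nonneg _) hl.le
    linarith
  have bN'' : |N2 e| ≤ 32 := by
    unfold N2; rw [abs_of_nonneg (by positivity)]; nlinarith [norm_nonneg e]
  have bL'' : |L2 e y| ≤ 32 := by
    unfold L2; rw [abs_of_nonneg (by positivity)]
    have h1 : ‖e‖ ^ 2 ≤ 16 := by nlinarith [norm_nonneg e]
    have h2 : ‖y‖ ^ 2 ≤ 1 := by nlinarith [norm_nonneg y]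
    have := mul_le_mul h1 h2 (sq_nonneg _) (by norm_num)
    linarith
  obtain ⟨h1, h2, h3⟩ := h ‖y - p‖ _ _ _ _ _ _ _ hn bnl (norm_sub_le_two hp hy') (kN1_eq p y) hLs.symm bN' bL' bN'' bL''
  have hg := kG_bd le_rfl one_le_two hp hy' hyp
  have hJe : (‖y - p‖ ^ 3)⁻¹ = kJ p y := rfl
  rw [hJe] at h1 h2 h3
  have hCJ := mul_nonneg hC hJ
  refine ⟨?_, ?_, ?_, ?_⟩
  · rw [abs_of_nonneg hg.1]; linarith [hg.2]
  · have : K1 e p y = q1 (kN 1 p y) (N1 e p y) (kL 1 p y) (L1 e p y) := rfl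
    rw [this]; linarith
  · unfold K2; linarith
  · unfold K3; linarith

lemma line_null (x e : E4) : ∀ᵐ y ∂(volume.restrict Bo), ∀ t : ℝ, y ≠ x + t • e := by
  apply ae_restrict_of_ae
  have h := Measure.addHaar_affineSubspace (volume : Measure E4) (AffineSubspace.mk' x (Submodule.span ℝ {e})) (by
    intro h
    have h2 : (Submodule.span ℝ {e} : Submodule ℝ E4) = ⊤ := by
      have := congrArg AffineSubspace.direction h
      simpa using this
    have h3 := finrank_span_le_card (R := ℝ) ({e} : Set E4)
    rw [h2, finrank_top] at h3
    simp at h3)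
  rw [← compl_mem_ae_iff] at h
  filter_upwards [h] with y hy t hyt
  apply hy
  simp [hyt, AffineSubspace.mem_mk', Submodule.smul_mem, Submodule.mem_span_singleton_self]

lemma hd_of_int {W0 W1 : ℝ → ℝ} {J : Set ℝ} (hJ : IsOpen J) (hJc : J.OrdConnected)
    (h : ∀ s ∈ J, ∀ t ∈ J, s ≤ t → W0 t - W0 s = ∫ τ in s..t, W1 τ) (hc : ContinuousOn W1 J) :
    ∀ t ∈ J, HasDerivAt W0 (W1 t) t := by
  intro t ht
  obtain ⟨r, hr, hb⟩ := Metric.isOpen_iff.1 hJ t ht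
  have haJ : t - r / 2 ∈ J := hb (by rw [mem_ball, Real.dist_eq, abs_lt]; constructor <;> linarith)
  have hsub : Set.uIcc (t - r / 2) t ⊆ J := hJc.uIcc_subset haJ ht
  have h1 := intervalIntegral.integral_hasDerivAt_right (f := W1) (a := t - r / 2) (b := t)
    (hc.mono hsub).intervalIntegrable
    (hc.stronglyMeasurableAtFilter hJ t ht) (hc.continuousAt (hJ.mem_nhds ht))
  refine (h1.const_add (W0 (t - r / 2))).congr_of_eventuallyEq ?_
  filter_upwards [hJ.mem_nhds ht, Ioi_mem_nhds (show t - r / 2 < t by linarith)] with s hs hs2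
  have := h _ haJ s hs (le_of_lt hs2)
  linarith

lemma lip_of_int {W0 W1 : ℝ → ℝ} {J : Set ℝ} {B : ℝ} (hJc : J.OrdConnected)
    (h : ∀ s ∈ J, ∀ t ∈ J, s ≤ t → W0 t - W0 s = ∫ τ in s..t, W1 τ) (hB : ∀ t ∈ J, |W1 t| ≤ B) :
    ∀ s ∈ J, ∀ t ∈ J, |W0 t - W0 s| ≤ B * |t - s| := by
  have key : ∀ s ∈ J, ∀ t ∈ J, s ≤ t → |W0 t - W0 s| ≤ B * |t - s| := by
    intro s hs t ht hst
    rw [h s hs t ht hst]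
    refine intervalIntegral.norm_integral_le_of_norm_le_const (f := W1) ?_
    intro τ hτ
    rw [Set.uIoc_of_le hst] at hτ
    exact hB τ (hJc.out hs ht ⟨hτ.1.le, hτ.2⟩)
  intro s hs t ht
  rcases le_total s t with hst | hst
  · exact key s hs t ht hst
  · rw [abs_sub_comm, abs_sub_comm t]; exact key t ht s hs hst

lemma cont_of_lip {W0 : ℝ → ℝ} {J : Set ℝ} {B : ℝ} (hB : 0 ≤ B) 
    (h : ∀ s ∈ J, ∀ t ∈ J, |W0 t - W0 s| ≤ B * |t - s|) : ContinuousOn W0 J := by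
  have : LipschitzOnWith B.toNNReal W0 J := by
    apply LipschitzOnWith.of_dist_le_mul
    intro a ha b hb
    rw [Real.dist_eq, Real.dist_eq, Real.coe_toNNReal _ hB]
    exact h b hb a ha
  exact this.continuousOn

lemma meas_K1 (x e : E4) : Measurable (Function.uncurry fun (t : ℝ) y => K1 e (x + t • e) y) := by
  unfold K1 N1 L1 kN kL Function.uncurry
  fun_prop
lemma meas_K2 (x e : E4) : Measurable (Function.uncurry fun (t : ℝ) y => K2 e (x + t • e) y) := by
  unfold K2 q2 N1 L1 N2 L2 kN kL Function.uncurry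
  fun_prop
lemma meas_K3 (x e : E4) : Measurable (Function.uncurry fun (t : ℝ) y => K3 e (x + t • e) y) := by
  unfold K3 q3 N1 L1 N2 L2 kN kL Function.uncurry
  fun_prop

lemma hd_dd {f : E4 → ℝ} {x e : E4} {t : ℝ} (hf : DifferentiableAt ℝ f (x + t • e)) :
    HasDerivAt (fun t : ℝ => f (x + t • e)) (dd e f (x + t • e)) t :=
  hf.hasFDerivAt.comp_hasDerivAt t (hd_line x e t)

lemma line_est : ∃ C, 0 ≤ C ∧ ∀ (v h : E4 → ℝ) (M : ℝ), ContDiffOn ℝ 3 v Bo → ContinuousOn h Bo → (∀ y ∈ Bo, |h y| ≤ M) →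
    (∀ x ∈ Bo, ∫ y in Bo, kG 1 x y * h y = c0 * v x) → ∀ x ∈ Bo, ∀ e : E4, ‖e‖ ≤ 4 →
    |v x| ≤ C * M ∧ |dd e v x| ≤ C * M ∧ |dd e (dd e v) x| ≤ C * M ∧ |dd e (dd e (dd e v)) x| ≤ C * M ∧
    ∫ y in Bo, K1 e x y * h y = c0 * dd e v x := by
  obtain ⟨K, hK, hb⟩ := K_bd
  have hc0 := c0_pos
  refine ⟨K * cA / c0, by have := cA_pos; positivity, ?_⟩
  intro v h M hv hh hM hrep x hx e he
  have hM0 : 0 ≤ M := (abs_nonneg _).trans (hM 0 (by simp))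
  have hcA := cA_pos
  set B := K * cA * M with hB
  have hB0 : 0 ≤ B := by positivity
  set J : Set ℝ := {t | x + t • e ∈ Bo} with hJdef
  have hJ : IsOpen J := isOpen_ball.preimage (by fun_prop : Continuous fun t : ℝ => x + t • e)
  have hJc : J.OrdConnected := by
    refine ⟨fun s hs t ht τ hτ => ?_⟩
    rcases eq_or_lt_of_le (hτ.1.trans hτ.2) with hst | hst
    · have : τ = s := le_antisymm (by linarith [hτ.2]) hτ.1
      rw [this]; exact hs
    have hd : 0 < t - s := by linarith
    have := (convex_ball (0:E4) 1) hs ht (a := (t - τ) / (t - s)) (b := (τ - s) / (t - s))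
      (div_nonneg (by linarith [hτ.2]) hd.le) (div_nonneg (by linarith [hτ.1]) hd.le) (by field_simp; ring)
    have e2 : ((t - τ) / (t - s)) • (x + s • e) + ((τ - s) / (t - s)) • (x + t • e) = x + τ • e := by
      match_scalars <;> field_simp <;> ring
    rw [e2] at this
    exact this
  have h0J : (0:ℝ) ∈ J := by simpa [hJdef] using hx
  have good : ∀ᵐ y ∂(volume.restrict Bo), y ∈ Bo ∧ ∀ t : ℝ, y ≠ x + t • e := by
    filter_upwards [line_null x e, ae_restrict_mem measurableSet_ball] with y h1 h2 using ⟨h2, h1⟩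
  have hd : ∀ᵐ y ∂(volume.restrict Bo), ∀ t ∈ J,
      (HasDerivAt (fun t : ℝ => kG 1 (x + t • e) y) (K1 e (x + t • e) y) t ∧
      HasDerivAt (fun t : ℝ => K1 e (x + t • e) y) (K2 e (x + t • e) y) t ∧
      HasDerivAt (fun t : ℝ => K2 e (x + t • e) y) (K3 e (x + t • e) y) t ∧
      ContinuousAt (fun t : ℝ => K3 e (x + t • e) y) t) ∧ 
      |kG 1 (x + t • e) y| ≤ K * kJ (x + t • e) y ∧ |K1 e (x + t • e) y| ≤ K * kJ (x + t • e) y ∧ 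
      |K2 e (x + t • e) y| ≤ K * kJ (x + t • e) y ∧ |K3 e (x + t • e) y| ≤ K * kJ (x + t • e) y := by
    filter_upwards [good] with y ⟨hy, hyl⟩ t ht
    exact ⟨hd_K x e y t (kN1_pos (hyl t)) (kL1_pos ht (ball_subset_closedBall hy) (hyl t)),
      hb e _ y he ht hy (hyl t)⟩
  have hsub : ∀ s ∈ J, ∀ t ∈ J, ∀ τ ∈ Set.Icc s t, τ ∈ J := fun s hs t ht τ hτ => hJc.out hs ht hτ
  have m1 := meas_K1 x e
  have m2 := meas_K2 x e
  have m3 := meas_K3 x e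
  have mm : ∀ {Q : ℝ → E4 → ℝ}, Measurable (Function.uncurry Q) → ∀ t, Measurable (Q t) :=
    fun hQ t => hQ.comp measurable_prodMk_left
  set W0 : ℝ → ℝ := fun t => ∫ y in Bo, kG 1 (x + t • e) y * h y with hW0
  set W1 : ℝ → ℝ := fun t => ∫ y in Bo, K1 e (x + t • e) y * h y with hW1
  set W2 : ℝ → ℝ := fun t => ∫ y in Bo, K2 e (x + t • e) y * h y with hW2
  set W3 : ℝ → ℝ := fun t => ∫ y in Bo, K3 e (x + t • e) y * h y with hW3
  have F0 : ∀ s ∈ J, ∀ t ∈ J, s ≤ t → W0 t - W0 s = ∫ τ in s..t, W1 τ := by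
    intro s hs t ht hst
    apply fub (P := fun t y => kG 1 (x + t • e) y) (Q := fun t y => K1 e (x + t • e) y) (γ := fun t => x + t • e)
      hst hh hM hK (fun t => kG_meas 1 _) m1
    filter_upwards [hd] with y hy τ hτ
    obtain ⟨⟨a1, a2, a3, a4⟩, b0, b1, b2, b3⟩ := hy τ (hsub s hs t ht τ hτ)
    exact ⟨a1, b0, b1, a2.continuousAt⟩
  have F1 : ∀ s ∈ J, ∀ t ∈ J, s ≤ t → W1 t - W1 s = ∫ τ in s..t, W2 τ := by
    intro s hs t ht hst
    apply fub (P := fun t y => K1 e (x + t • e) y) (Q := fun t y => K2 e (x + t • e) y) (γ := fun t => x + t • e)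
      hst hh hM hK (mm m1) m2
    filter_upwards [hd] with y hy τ hτ
    obtain ⟨⟨a1, a2, a3, a4⟩, b0, b1, b2, b3⟩ := hy τ (hsub s hs t ht τ hτ)
    exact ⟨a2, b1, b2, a3.continuousAt⟩
  have F2 : ∀ s ∈ J, ∀ t ∈ J, s ≤ t → W2 t - W2 s = ∫ τ in s..t, W3 τ := by
    intro s hs t ht hst
    apply fub (P := fun t y => K2 e (x + t • e) y) (Q := fun t y => K3 e (x + t • e) y) (γ := fun t => x + t • e)
      hst hh hM hK (mm m2) m3
    filter_upwards [hd] with y hy τ hτ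
    obtain ⟨⟨a1, a2, a3, a4⟩, b0, b1, b2, b3⟩ := hy τ (hsub s hs t ht τ hτ)
    exact ⟨a3, b2, b3, a4⟩
  have bdd : ∀ {Q : E4 → ℝ} {p : E4}, Measurable Q → (∀ᵐ y ∂(volume.restrict Bo), |Q y| ≤ K * kJ p y) →
      |∫ y in Bo, Q y * h y| ≤ B := fun hQ hq => (abs_integral_le_integral_abs).trans (ker_int hh hM hQ hq hK).2
  have B0 : ∀ t ∈ J, |W0 t| ≤ B := fun t ht => bdd (kG_meas 1 _) (by filter_upwards [hd] with y hy using (hy t ht).2.1)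
  have B1 : ∀ t ∈ J, |W1 t| ≤ B := fun t ht => bdd (mm m1 t) (by filter_upwards [hd] with y hy using (hy t ht).2.2.1)
  have B2 : ∀ t ∈ J, |W2 t| ≤ B := fun t ht => bdd (mm m2 t) (by filter_upwards [hd] with y hy using (hy t ht).2.2.2.1)
  have B3 : ∀ t ∈ J, |W3 t| ≤ B := fun t ht => bdd (mm m3 t) (by filter_upwards [hd] with y hy using (hy t ht).2.2.2.2)
  have Li1 := lip_of_int hJc F1 B2
  have Li2 := lip_of_int hJc F2 B3
  have D0 := hd_of_int hJ hJc F0 (cont_of_lip hB0 Li1)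
  have D1 := hd_of_int hJ hJc F1 (cont_of_lip hB0 Li2)
  have df : ∀ {f : E4 → ℝ} {n : WithTop ℕ∞}, ContDiffOn ℝ n f Bo → n ≠ 0 → ∀ t ∈ J, DifferentiableAt ℝ f (x + t • e) :=
    fun hf hn t ht => (hf.differentiableOn hn).differentiableAt (Bo_nhds ht)
  have v1 : ContDiffOn ℝ 2 (dd e v) Bo := dd_contDiffOn hv (by norm_num) e
  have v2 : ContDiffOn ℝ 1 (dd e (dd e v)) Bo := dd_contDiffOn v1 (by norm_num) e
  have E0 : ∀ t ∈ J, W0 t = c0 * v (x + t • e) := fun t ht => hrep _ ht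
  have step : ∀ {f : E4 → ℝ} {n : WithTop ℕ∞} {W W' : ℝ → ℝ}, ContDiffOn ℝ n f Bo → n ≠ 0 → (∀ t ∈ J, W t = c0 * f (x + t • e)) →
      (∀ t ∈ J, HasDerivAt W (W' t) t) → ∀ t ∈ J, W' t = c0 * dd e f (x + t • e) := by
    intro f n W W' hf hn h1 h2 t ht
    have a := (hd_dd (df hf hn t ht)).const_mul c0
    have b := (h2 t ht).congr_of_eventuallyEq (f₁ := fun t => c0 * f (x + t • e)) (by
      filter_upwards [hJ.mem_nhds ht] with s hs using (h1 s hs).symm)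
    exact b.unique a
  have E1 := step hv (by norm_num) E0 D0
  have E2 := step v1 (by norm_num) E1 D1
  have x0 : x + (0:ℝ) • e = x := by simp
  have fin : ∀ {a : ℝ}, |c0 * a| ≤ B → |a| ≤ K * cA / c0 * M := by
    intro a ha
    rw [abs_mul, abs_of_pos hc0] at ha
    rw [div_mul_eq_mul_div, le_div_iff₀ hc0]
    linarith
  refine ⟨?_, ?_, ?_, ?_, ?_⟩
  · have := B0 0 h0J
    rw [E0 0 h0J, x0] at this
    exact fin this
  · have := B1 0 h0J
    rw [E1 0 h0J, x0] at this
    exact fin this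
  · have := B2 0 h0J
    rw [E2 0 h0J, x0] at this
    exact fin this
  · have a := (hd_dd (df v2 (by norm_num) 0 h0J)).const_mul c0
    rw [x0] at a
    apply fin
    refine a.le_of_lip' hB0 ?_
    filter_upwards [hJ.mem_nhds h0J] with t ht
    rw [← E2 t ht, ← E2 0 h0J]
    exact Li2 0 h0J t ht
  · have := E1 0 h0J
    simp only [hW1, x0] at this
    exact this

/-- conformal vector fields preserving the ball -/
def Yv (a y : E4) : E4 := (1 + ‖y‖ ^ 2) • a - (2 * inner ℝ a y) • y

lemma Yv_contDiff (a : E4) {n : WithTop ℕ∞} : ContDiff ℝ n (Yv a) := by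
  unfold Yv
  exact ((contDiff_const.add (contDiff_id.norm_sq ℝ)).smul contDiff_const).sub
    ((contDiff_const.mul (contDiff_const.inner ℝ contDiff_id)).smul contDiff_id)

lemma Yv_norm {a y : E4} (ha : ‖a‖ ≤ 1) (hy : y ∈ Bc) : ‖Yv a y‖ ≤ 4 := by
  have hy1 : ‖y‖ ≤ 1 := by simpa using hy
  unfold Yv
  refine (norm_sub_le _ _).trans ?_
  rw [norm_smul, norm_smul, Real.norm_of_nonneg (by positivity), Real.norm_eq_abs, abs_mul, abs_two]
  have h1 := abs_real_inner_le_norm a y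
  have h2 : ‖a‖ * ‖y‖ ≤ 1 := by nlinarith [norm_nonneg a, norm_nonneg y]
  have h3 : |inner ℝ a y| ≤ 1 := h1.trans h2
  have h4 : |inner ℝ a y| * ‖y‖ ≤ 1 := by nlinarith [abs_nonneg (inner ℝ a y), norm_nonneg y]
  have h5 : (1 + ‖y‖ ^ 2) * ‖a‖ ≤ 2 := by
    have : ‖y‖ ^ 2 ≤ 1 := by nlinarith [norm_nonneg y]
    nlinarith [norm_nonneg a, sq_nonneg ‖y‖]
  nlinarith

/-- the `y`-derivative of `kG` -/
def kD (κ : ℝ) (x y b : E4) : ℝ :=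
  2 * ((kL κ x y)⁻¹ - kN κ x y / kL κ x y ^ 2) * inner ℝ ((‖x‖ ^ 2 / κ) • y - x) b
    + 2 * ((kL κ x y)⁻¹ - (kN κ x y)⁻¹) * inner ℝ (y - x) b

lemma dd_kG {κ : ℝ} (hκ : 1 < κ) {x y : E4} (hx : x ∈ Bo) (hy : y ∈ Bc) (b : E4) : dd b (kG κ x) y = kD κ x y b := by
  unfold dd
  rw [(hasFDerivAt_kG κ x y (kN_pos hκ hx y) (kL_pos hκ hx hy)).fderiv]
  simp [kD, inner_sub_left, inner_smul_left]

lemma sq_cL {κ : ℝ} (hκ : 1 ≤ κ) (x y : E4) : ‖(‖x‖ ^ 2 / κ) • y - x‖ ^ 2 = ‖x‖ ^ 2 / κ * kL κ x y := by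
  unfold kL
  rw [norm_sub_sq_real, norm_smul, inner_smul_left, real_inner_comm x y, Real.norm_of_nonneg (by positivity)]
  simp
  have : κ ≠ 0 := by positivity
  field_simp

lemma kD_bd {κ : ℝ} (hκ : 1 ≤ κ) {x y b : E4} (hx : x ∈ Bo) (hy : y ∈ Bc) (hyx : y ≠ x) (hb : ‖b‖ ≤ 4) :
    |kD κ x y b| ≤ 64 * kJ x y := by
  have hn : 0 < ‖y - x‖ := norm_pos_iff.2 (sub_ne_zero.2 hyx)
  have hn2 := norm_sub_le_two hx hy
  have hge := kN_ge hκ hx y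
  have hN : 0 < kN κ x y := lt_of_lt_of_le (by positivity) hge
  have hNL := kN_le_kL hκ hx hy
  have hL : 0 < kL κ x y := hN.trans_le hNL
  have hc := kc_lt hκ hx
  set l := √(kL κ x y) with hl
  have hl0 : 0 < l := Real.sqrt_pos.2 hL
  have hls : l ^ 2 = kL κ x y := Real.sq_sqrt hL.le
  have hnl : ‖y - x‖ ≤ l := Real.le_sqrt_of_sq_le (hge.trans hNL)
  have h1 : ‖(‖x‖ ^ 2 / κ) • y - x‖ ≤ l := by
    apply Real.le_sqrt_of_sq_le
    rw [sq_cL hκ]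
    nlinarith
  have i1 : |inner ℝ ((‖x‖ ^ 2 / κ) • y - x) b| ≤ l * 4 :=
    (abs_real_inner_le_norm _ _).trans (mul_le_mul h1 hb (norm_nonneg _) hl0.le)
  have i2 : |inner ℝ (y - x) b| ≤ ‖y - x‖ * 4 :=
    (abs_real_inner_le_norm _ _).trans (mul_le_mul le_rfl hb (norm_nonneg _) hn.le)
  have j1 : |(kL κ x y)⁻¹ - kN κ x y / kL κ x y ^ 2| ≤ (l * ‖y - x‖)⁻¹ := by
    have e : (kL κ x y)⁻¹ - kN κ x y / kL κ x y ^ 2 = (1 - kN κ x y / kL κ x y) * (kL κ x y)⁻¹ := by field_simp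
    have hq : kN κ x y / kL κ x y ≤ 1 := (div_le_one hL).2 hNL
    have hq0 : 0 ≤ kN κ x y / kL κ x y := by positivity
    have hi : 0 < (kL κ x y)⁻¹ := by positivity
    rw [e, abs_of_nonneg (mul_nonneg (by linarith) hi.le)]
    have : (kL κ x y)⁻¹ ≤ (l * ‖y - x‖)⁻¹ := by
      apply inv_anti₀ (by positivity)
      rw [← hls]; nlinarith
    nlinarith
  have j2 : |(kL κ x y)⁻¹ - (kN κ x y)⁻¹| ≤ (‖y - x‖ ^ 2)⁻¹ := by
    have a1 : (kL κ x y)⁻¹ ≤ (kN κ x y)⁻¹ := inv_anti₀ hN hNL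
    have a2 : 0 < (kL κ x y)⁻¹ := by positivity
    have a3 : (kN κ x y)⁻¹ ≤ (‖y - x‖ ^ 2)⁻¹ := inv_anti₀ (by positivity) hge
    rw [abs_of_nonpos (by linarith)]; linarith
  have t1 : |2 * ((kL κ x y)⁻¹ - kN κ x y / kL κ x y ^ 2) * inner ℝ ((‖x‖ ^ 2 / κ) • y - x) b| ≤ 8 / ‖y - x‖ := by
    rw [abs_mul, abs_mul, abs_two]
    have := mul_le_mul j1 i1 (abs_nonneg _) (by positivity)
    have e : (l * ‖y - x‖)⁻¹ * (l * 4) = 4 / ‖y - x‖ := by field_simp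
    rw [e] at this
    have e2 : 8 / ‖y - x‖ = 2 * (4 / ‖y - x‖) := by ring
    rw [e2]; linarith
  have t2 : |2 * ((kL κ x y)⁻¹ - (kN κ x y)⁻¹) * inner ℝ (y - x) b| ≤ 8 / ‖y - x‖ := by
    rw [abs_mul, abs_mul, abs_two]
    have := mul_le_mul j2 i2 (abs_nonneg _) (by positivity)
    have e : (‖y - x‖ ^ 2)⁻¹ * (‖y - x‖ * 4) = 4 / ‖y - x‖ := by field_simp
    rw [e] at this
    have e2 : 8 / ‖y - x‖ = 2 * (4 / ‖y - x‖) := by ring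
    rw [e2]; linarith
  have t3 : 16 / ‖y - x‖ ≤ 64 * kJ x y := by
    unfold kJ
    rw [← div_eq_mul_inv, div_le_div_iff₀ (by positivity) (by positivity)]
    nlinarith [mul_le_mul hn2 hn2 hn.le (by norm_num)]
  have e : 16 / ‖y - x‖ = 8 / ‖y - x‖ + 8 / ‖y - x‖ := by ring
  unfold kD
  exact (abs_add_le _ _).trans (by linarith)

lemma kD_tendsto {x y b : E4} (hx : x ∈ Bo) (hy : y ∈ Bc) (hxy : y ≠ x) :
    Tendsto (fun n => kD (kap n) x y b) atTop (𝓝 (kD 1 x y b)) := by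
  unfold kD
  have hN := kN_tendsto x y
  have hL := kL_tendsto x y
  have pN := kN1_pos hxy
  have pL := kL1_pos hx hy hxy
  have hi : Tendsto (fun n => inner ℝ ((‖x‖ ^ 2 / kap n) • y - x) b) atTop (𝓝 (inner ℝ ((‖x‖ ^ 2 / 1) • y - x) b)) := by
    apply Tendsto.inner _ tendsto_const_nhds
    apply Tendsto.sub_const
    apply Tendsto.smul_const
    exact tendsto_const_nhds.div kap_tendsto one_ne_zero
  exact ((((hL.inv₀ pL.ne').sub (hN.div (hL.pow 2) (pow_ne_zero 2 pL.ne'))).const_mul 2).mul hi).add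
    ((((hL.inv₀ pL.ne').sub (hN.inv₀ pN.ne')).const_mul 2).mul_const _)

lemma kD_meas (κ : ℝ) (x : E4) {Y : E4 → E4} (hY : Measurable Y) : Measurable (fun y => kD κ x y (Y y)) := by
  unfold kD kL kN
  fun_prop

/-- conformal invariance -/
lemma conf_inv {a x y : E4} (hx : x ∈ Bo) (hy : y ∈ Bc) (hxy : y ≠ x) : K1 (Yv a x) x y = - kD 1 x y (Yv a y) := by
  have pN := (kN1_pos hxy).ne'
  have pL := (kL1_pos hx hy hxy).ne'
  have i1 : L1 (Yv a x) x y + 2 * inner ℝ ((‖x‖ ^ 2 / 1) • y - x) (Yv a y) = -2 * (inner ℝ a x + inner ℝ a y) * kL 1 x y := by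
    rw [kL1_eq]
    unfold L1 Yv
    simp only [inner_sub_left, inner_sub_right, inner_smul_left, inner_smul_right, real_inner_self_eq_norm_sq]
    rw [real_inner_comm a x, real_inner_comm a y]
    simp
    ring
  have i2 : N1 (Yv a x) x y + 2 * inner ℝ (y - x) (Yv a y) = -2 * (inner ℝ a x + inner ℝ a y) * kN 1 x y := by
    rw [kN1_eq]
    unfold N1 Yv
    simp only [norm_sub_sq_real, inner_sub_left, inner_sub_right, inner_smul_left, inner_smul_right, real_inner_self_eq_norm_sq]
    rw [real_inner_comm a x, real_inner_comm a y, real_inner_comm x y]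
    ring
  unfold K1 kD
  generalize kN 1 x y = N at *
  generalize kL 1 x y = L at *
  generalize L1 (Yv a x) x y = l1 at *
  generalize N1 (Yv a x) x y = n1 at *
  generalize inner ℝ ((‖x‖ ^ 2 / 1) • y - x) (Yv a y) = A at *
  generalize inner ℝ (y - x) (Yv a y) = B at *
  generalize inner ℝ a x + inner ℝ a y = C at *
  have e1 : l1 = -2 * C * L - 2 * A := by linarith
  have e2 : n1 = -2 * C * N - 2 * B := by linarith
  rw [e1, e2]
  field_simp
  ring


/-- source term for the conformal derivative -/
def Hs (a : E4) (h : E4 → ℝ) (y : E4) : ℝ := fderivWithin ℝ h Bc y (Yv a y) - 8 * inner ℝ a y * h y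

lemma Hs_cont (a : E4) {h : E4 → ℝ} (hh : ContDiffOn ℝ 1 h Bc) : ContinuousOn (Hs a h) Bc := by
  unfold Hs
  have h1 := hh.continuousOn_fderivWithin Bc_unique le_rfl
  have h2 : ContinuousOn (Yv a) Bc := (Yv_contDiff a (n := 0)).continuous.continuousOn
  have h3 := hh.continuousOn
  exact (h1.clm_apply h2).sub ((by fun_prop : ContinuousOn (fun y => 8 * inner ℝ a y) Bc).mul h3)

lemma dd_Yi (a y : E4) (i : Fin 4) : dd (ei i) (fun y => inner ℝ (Yv a y) (ei i)) y = -2 * inner ℝ a y := by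
  have h1 : HasFDerivAt (fun y : E4 => ‖y‖ ^ 2) (2 • innerSL ℝ y) y := by
    simpa using (hasFDerivAt_id y).norm_sq
  have h2 : ∀ z : E4, HasFDerivAt (fun y : E4 => inner ℝ z y) (innerSL ℝ z) y := fun z => (innerSL ℝ z).hasFDerivAt
  have e : (fun y => inner ℝ (Yv a y) (ei i)) = fun y : E4 => (1 + ‖y‖ ^ 2) * inner ℝ (ei i) a - 2 * (inner ℝ a y * inner ℝ (ei i) y) := by
    ext y
    unfold Yv
    rw [inner_sub_left, inner_smul_left, inner_smul_left, real_inner_comm (ei i) a, real_inner_comm (ei i) y]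
    simp
    ring
  unfold dd
  rw [e]
  have := ((h1.const_add 1).mul_const (inner ℝ (ei i) a)).sub (((h2 a).mul (h2 (ei i))).const_mul 2)
  have h3 := this.fderiv
  erw [h3]
  have h4 : inner ℝ (ei i) (ei i) = (1:ℝ) := by simp
  simp [real_inner_comm]
  ring

lemma sum_ei (b : E4) : ∑ i, (inner ℝ b (ei i) : ℝ) • ei i = b := by
  ext j
  simp [ei, Fin.sum_univ_four]
  fin_cases j <;> simp [EuclideanSpace.inner_single_right]

lemma ibp {κ : ℝ} (hκ : 1 < κ) {a x : E4} (hx : x ∈ Bo) {h : E4 → ℝ} (hh : ContDiffOn ℝ 1 h Bc) :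
    ∫ y in Bo, (kD κ x y (Yv a y) * h y + kG κ x y * Hs a h y) = 0 := by
  have hY : ∀ i, ContDiff ℝ 1 (fun y => inner ℝ (Yv a y) (ei i) : E4 → ℝ) := fun i => (Yv_contDiff a).inner ℝ contDiff_const
  have hG : ContDiffOn ℝ 1 (kG κ x) Bc := contDiffOn_kG hκ hx
  have hg : ∀ i, ContDiffOn ℝ 1 (fun y => kG κ x y * (h y * inner ℝ (Yv a y) (ei i))) Bc := fun i =>
    hG.mul (hh.mul (hY i).contDiffOn)
  have hz : ∀ i, ∫ y in Bo, dd (ei i) (fun y => kG κ x y * (h y * inner ℝ (Yv a y) (ei i))) y = 0 := fun i =>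
    int_dd_zero (hg i) (fun y hy => by rw [(kG_dirichlet hκ hx y hy).1, zero_mul]) _
  have hInt : ∀ i, IntegrableOn (dd (ei i) (fun y => kG κ x y * (h y * inner ℝ (Yv a y) (ei i)))) Bo := by
    intro i
    have : ContinuousOn (ddw (ei i) (fun y => kG κ x y * (h y * inner ℝ (Yv a y) (ei i)))) Bc :=
      (ddw_contDiffOn (m := 0) (hg i) (by norm_num) _).continuousOn
    exact (contOn_integrable this).congr_fun (fun y hy => ddw_eq hy _) measurableSet_ball
  have hs : ∫ y in Bo, ∑ i, dd (ei i) (fun y => kG κ x y * (h y * inner ℝ (Yv a y) (ei i))) y = 0 := by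
    rw [integral_finsetSum _ fun i _ => hInt i]
    simp [hz]
  rw [← hs]
  apply setIntegral_congr_fun measurableSet_ball
  intro y hy
  have dG : DifferentiableAt ℝ (kG κ x) y := (hG.differentiableOn one_ne_zero).differentiableAt (Bc_nhds hy)
  have dh : DifferentiableAt ℝ h y := (hh.differentiableOn one_ne_zero).differentiableAt (Bc_nhds hy)
  have dY : ∀ i, DifferentiableAt ℝ (fun y => inner ℝ (Yv a y) (ei i) : E4 → ℝ) y := fun i =>
    ((hY i).differentiable one_ne_zero).differentiableAt
  have e : ∀ i, dd (ei i) (fun y => kG κ x y * (h y * inner ℝ (Yv a y) (ei i))) y =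
      (inner ℝ (Yv a y) (ei i) * dd (ei i) (kG κ x) y) * h y + kG κ x y * (inner ℝ (Yv a y) (ei i) * dd (ei i) h y - 2 * inner ℝ a y * h y) := by
    intro i
    rw [dd_mul (g := fun y => h y * inner ℝ (Yv a y) (ei i)) dG (dh.mul (dY i)),
      dd_mul (g := fun y => inner ℝ (Yv a y) (ei i)) dh (dY i), dd_Yi]
    ring
  have lin : ∀ f : E4 → ℝ, dd (Yv a y) f y = ∑ i, inner ℝ (Yv a y) (ei i) * dd (ei i) f y := by
    intro f
    unfold dd
    conv_lhs => rw [← sum_ei (Yv a y)]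
    simp
  have h1 : fderivWithin ℝ h Bc y (Yv a y) = dd (Yv a y) h y := ddw_eq hy _
  simp only [e, Hs, h1]
  rw [← dd_kG hκ hx (ball_subset_closedBall hy), lin, lin]
  simp only [Fin.sum_univ_four]
  ring

lemma conf_rep {a x : E4} (ha : ‖a‖ ≤ 1) (hx : x ∈ Bo) {h : E4 → ℝ} (hh : ContDiffOn ℝ 1 h Bc) :
    ∫ y in Bo, K1 (Yv a x) x y * h y = ∫ y in Bo, kG 1 x y * Hs a h y := by
  obtain ⟨M, hM⟩ := (isCompact_closedBall (0:E4) 1).exists_bound_of_continuousOn hh.continuousOn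
  obtain ⟨M', hM'⟩ := (isCompact_closedBall (0:E4) 1).exists_bound_of_continuousOn (Hs_cont a hh)
  have hM2 : ∀ y ∈ Bo, |h y| ≤ M := fun y hy => hM y (ball_subset_closedBall hy)
  have hM2' : ∀ y ∈ Bo, |Hs a h y| ≤ M' := fun y hy => hM' y (ball_subset_closedBall hy)
  have ch := hh.continuousOn.mono ball_subset_closedBall
  have cH := (Hs_cont a hh).mono ball_subset_closedBall
  have mY : Measurable (Yv a) := (Yv_contDiff a (n := 0)).continuous.measurable
  have b1 : ∀ κ, 1 ≤ κ → ∀ y ∈ Bo, y ≠ x → |kD κ x y (Yv a y)| ≤ 64 * kJ x y := fun κ hκ y hy hyx =>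
    kD_bd hκ hx (ball_subset_closedBall hy) hyx (Yv_norm ha (ball_subset_closedBall hy))
  have b2 : ∀ n, ∀ y ∈ Bo, y ≠ x → |kG (kap n) x y| ≤ 10 * kJ x y := fun n y hy hyx => by
    have := kG_bd (kap_gt n).le (kap_le n) hx (ball_subset_closedBall hy) hyx
    rw [abs_of_nonneg this.1]; exact this.2
  have t1 : Tendsto (fun n => ∫ y in Bo, kD (kap n) x y (Yv a y) * h y) atTop (𝓝 (∫ y in Bo, kD 1 x y (Yv a y) * h y)) :=
    dom_lim (x := x) ch hM2 (fun n => (kD_meas _ x mY).aestronglyMeasurable) (fun n => b1 _ (kap_gt n).le)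
      (fun y hy hyx => kD_tendsto hx (ball_subset_closedBall hy) hyx)
  have t2 : Tendsto (fun n => ∫ y in Bo, kG (kap n) x y * Hs a h y) atTop (𝓝 (∫ y in Bo, kG 1 x y * Hs a h y)) :=
    dom_lim (x := x) cH hM2' (fun n => (kG_meas _ x).aestronglyMeasurable) b2
      (fun y hy hyx => kG_tendsto hx (ball_subset_closedBall hy) hyx)
  have t3 := t1.add t2
  have z : ∀ n, (∫ y in Bo, kD (kap n) x y (Yv a y) * h y) + ∫ y in Bo, kG (kap n) x y * Hs a h y = 0 := by
    intro n
    rw [← integral_add, ibp (kap_gt n) hx hh]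
    · refine (ker_int (p := x) (K := 64) ch hM2 (kD_meas _ x mY) ?_ (by norm_num)).1
      filter_upwards [ae_ne x] with y hy using b1 _ (kap_gt n).le y hy.1 hy.2
    · refine (ker_int (p := x) (K := 10) cH hM2' (kG_meas _ x) ?_ (by norm_num)).1
      filter_upwards [ae_ne x] with y hy using b2 n y hy.1 hy.2
  simp only [z] at t3
  have t4 := tendsto_nhds_unique t3 tendsto_const_nhds
  have t5 : ∫ y in Bo, K1 (Yv a x) x y * h y = - ∫ y in Bo, kD 1 x y (Yv a y) * h y := by
    rw [← integral_neg]
    apply integral_congr_ae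
    filter_upwards [ae_ne x] with y hy
    rw [conf_inv hx (ball_subset_closedBall hy.1) hy.2]
    ring
  rw [t5]; linarith

lemma dd_add_dir (a b : E4) (f : E4 → ℝ) (x : E4) : dd (a + b) f x = dd a f x + dd b f x := by
  unfold dd; rw [map_add]

lemma dd_smul_dir (c : ℝ) (a : E4) (f : E4 → ℝ) (x : E4) : dd (c • a) f x = c * dd a f x := by
  unfold dd; rw [map_smul, smul_eq_mul]

lemma dd_swap {f : E4 → ℝ} (hf : ContDiffOn ℝ 2 f Bo) (a b : E4) : ∀ x ∈ Bo, dd a (dd b f) x = dd b (dd a f) x := by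
  intro x hx
  have hc : ContDiffAt ℝ 2 f x := hf.contDiffAt (Bo_nhds hx)
  have hs : IsSymmSndFDerivAt ℝ f x := hc.isSymmSndFDerivAt (by simp)
  have hd : DifferentiableAt ℝ (fderiv ℝ f) x := (hc.fderiv_right (m := 1) (by norm_num)).differentiableAt one_ne_zero
  have e : ∀ a b, dd a (dd b f) x = fderiv ℝ (fderiv ℝ f) x a b := by
    intro a b
    unfold dd
    rw [fderiv_clm_apply hd (differentiableAt_const _)]
    simp
  rw [e, e]; exact hs a b

/-- abstract polarization, order two -/
lemma polar2 {F : E4 → E4 → ℝ} {K : ℝ} (hadd : ∀ a b c, F (a + b) c = F a c + F b c)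
    (hsm : ∀ (r : ℝ) a b, F (r • a) b = r * F a b) (hs : ∀ a b, F a b = F b a)
    (hK : ∀ e, ‖e‖ ≤ 4 → |F e e| ≤ K) {a b : E4} (ha : ‖a‖ ≤ 4) (hb : ‖b‖ ≤ 4) : |F a b| ≤ 16 * K := by
  have key : ∀ a b : E4, ‖a‖ ≤ 1 → ‖b‖ ≤ 1 → |F a b| ≤ K := by
    intro a b ha hb
    have h1 := abs_le.1 (hK (a + b) ((norm_add_le _ _).trans (by linarith)))
    have h2 := abs_le.1 (hK (a + (-1:ℝ) • b) ((norm_add_le _ _).trans (by rw [norm_smul]; norm_num; linarith)))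
    have hadd2 : ∀ a b c, F c (a + b) = F c a + F c b := fun a b c => by rw [hs, hadd, hs a, hs b]
    have hsm2 : ∀ (r : ℝ) a b, F b (r • a) = r * F b a := fun r a b => by rw [hs, hsm, hs a]
    simp only [hadd, hadd2, hsm, hsm2] at h1 h2
    rw [hs b a] at h1 h2
    rw [abs_le]; constructor <;> linarith
  have hsm2 : ∀ (r : ℝ) a b, F b (r • a) = r * F b a := fun r a b => by rw [hs, hsm, hs a]
  have hq : ∀ a : E4, ‖a‖ ≤ 4 → ‖(1/4:ℝ) • a‖ ≤ 1 := fun a ha => by rw [norm_smul]; norm_num; linarith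
  have := key _ _ (hq a ha) (hq b hb)
  rw [hsm, hsm2, ← mul_assoc, abs_mul] at this
  norm_num at this
  linarith

/-- abstract polarization, order three -/
lemma polar3 {F : E4 → E4 → E4 → ℝ} {K : ℝ} (hadd : ∀ a b c d, F (a + b) c d = F a c d + F b c d)
    (hsm : ∀ (r : ℝ) a b c, F (r • a) b c = r * F a b c) (hs : ∀ a b c, F a b c = F b a c)
    (ht : ∀ a b c, F a b c = F a c b)
    (hK : ∀ e, ‖e‖ ≤ 4 → |F e e e| ≤ K) {a b c : E4} (ha : ‖a‖ ≤ 4) (hb : ‖b‖ ≤ 4) (hc : ‖c‖ ≤ 4) :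
    |F a b c| ≤ 64 * K := by
  have hK0 : 0 ≤ K := (abs_nonneg _).trans (hK 0 (by simp))
  have hadd2 : ∀ a b c d, F c (a + b) d = F c a d + F c b d := fun a b c d => by rw [hs, hadd, hs a, hs b]
  have hsm2 : ∀ (r : ℝ) a b c, F b (r • a) c = r * F b a c := fun r a b c => by rw [hs, hsm, hs a]
  have hadd3 : ∀ a b c d, F c d (a + b) = F c d a + F c d b := fun a b c d => by rw [ht, hadd2, ht c a, ht c b]
  have hsm3 : ∀ (r : ℝ) a b c, F b c (r • a) = r * F b c a := fun r a b c => by rw [ht, hsm2, ht b a]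
  have key : ∀ a b c : E4, ‖a‖ ≤ 1 → ‖b‖ ≤ 1 → ‖c‖ ≤ 1 → |F a b c| ≤ K := by
    intro a b c ha hb hc
    have nb : ∀ r s t : ℝ, |r| ≤ 1 → |s| ≤ 1 → |t| ≤ 1 → ‖r • a + s • b + t • c‖ ≤ 4 := by
      intro r s t hr hs ht
      have h1 : ‖r • a‖ ≤ 1 := by rw [norm_smul, Real.norm_eq_abs]; nlinarith [norm_nonneg a, abs_nonneg r]
      have h2 : ‖s • b‖ ≤ 1 := by rw [norm_smul, Real.norm_eq_abs]; nlinarith [norm_nonneg b, abs_nonneg s]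
      have h3 : ‖t • c‖ ≤ 1 := by rw [norm_smul, Real.norm_eq_abs]; nlinarith [norm_nonneg c, abs_nonneg t]
      exact norm_add₃_le.trans (by linarith)
    have h1 := abs_le.1 (hK _ (nb 1 1 1 (by simp) (by simp) (by simp)))
    have h2 := abs_le.1 (hK _ (nb 1 1 (-1) (by simp) (by simp) (by simp)))
    have h3 := abs_le.1 (hK _ (nb 1 (-1) 1 (by simp) (by simp) (by simp)))
    have h4 := abs_le.1 (hK _ (nb (-1) 1 1 (by simp) (by simp) (by simp)))
    simp only [hadd, hadd2, hadd3, hsm, hsm2, hsm3] at h1 h2 h3 h4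
    have q1 : F a c b = F a b c := ht _ _ _
    have q2 : F b a c = F a b c := hs _ _ _
    have q3 : F b c a = F a b c := by rw [ht, hs]
    have q4 : F c a b = F a b c := by rw [hs, ht]
    have q5 : F c b a = F a b c := by rw [ht, q4]
    have r1 : F a b a = F a a b := ht _ _ _
    have r2 : F b a a = F a a b := by rw [hs, ht]
    have r3 : F a c a = F a a c := ht _ _ _
    have r4 : F c a a = F a a c := by rw [hs, ht]
    have r5 : F b a b = F b b a := ht _ _ _
    have r6 : F a b b = F b b a := by rw [hs, ht]
    have r7 : F b c b = F b b c := ht _ _ _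
    have r8 : F c b b = F b b c := by rw [hs, ht]
    have r9 : F c a c = F c c a := ht _ _ _
    have r10 : F a c c = F c c a := by rw [hs, ht]
    have r11 : F c b c = F c c b := ht _ _ _
    have r12 : F b c c = F c c b := by rw [hs, ht]
    simp only [q1, q2, q3, q4, q5, r1, r2, r3, r4, r5, r6, r7, r8, r9, r10, r11, r12] at h1 h2 h3 h4
    rw [abs_le]; constructor <;> linarith
  have hq : ∀ a : E4, ‖a‖ ≤ 4 → ‖(1/4:ℝ) • a‖ ≤ 1 := fun a ha => by rw [norm_smul]; norm_num; linarith
  have := key _ _ _ (hq a ha) (hq b hb) (hq c hc)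
  rw [hsm, hsm2, hsm3, ← mul_assoc, ← mul_assoc, abs_mul] at this
  norm_num at this
  linarith

/-- abstract normal-direction recovery, order four -/
lemma recover4 {F : E4 → E4 → E4 → E4 → ℝ} {K : ℝ} (hadd : ∀ a b c d e, F (a + b) c d e = F a c d e + F b c d e)
    (hsm : ∀ (r : ℝ) a b c d, F (r • a) b c d = r * F a b c d)
    (h12 : ∀ a b c d, F a b c d = F b a c d) (h23 : ∀ a b c d, F a b c d = F a c b d)
    (h34 : ∀ a b c d, F a b c d = F a b d c) {n : E4} (hn : ‖n‖ = 1)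
    (hK : ∀ p b c d, inner ℝ p n = (0:ℝ) → ‖p‖ ≤ 1 → ‖b‖ ≤ 1 → ‖c‖ ≤ 1 → ‖d‖ ≤ 1 → |F p b c d| ≤ K)
    {a b c d : E4} (ha : ‖a‖ ≤ 1) (hb : ‖b‖ ≤ 1) (hc : ‖c‖ ≤ 1) (hd : ‖d‖ ≤ 1) :
    |F a b c d - inner ℝ a n * inner ℝ b n * inner ℝ c n * inner ℝ d n * F n n n n| ≤ 4 * K := by
  have hK0 : 0 ≤ K := (abs_nonneg _).trans (hK 0 0 0 0 (by simp) (by simp) (by simp) (by simp) (by simp))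
  have hin : ∀ a : E4, ‖a‖ ≤ 1 → |inner ℝ a n| ≤ 1 := fun a ha => (abs_real_inner_le_norm _ _).trans (by rw [hn]; linarith)
  have hp : ∀ a : E4, ‖a‖ ≤ 1 → ‖a - (inner ℝ a n : ℝ) • n‖ ≤ 1 := by
    intro a ha
    have : ‖a - (inner ℝ a n : ℝ) • n‖ ^ 2 ≤ 1 := by
      rw [norm_sub_sq_real, inner_smul_right, norm_smul, hn, mul_one, Real.norm_eq_abs, sq_abs]
      nlinarith [norm_nonneg a, sq_nonneg (inner ℝ a n : ℝ)]
    nlinarith [norm_nonneg (a - (inner ℝ a n : ℝ) • n)]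
  have hp0 : ∀ a : E4, inner ℝ (a - (inner ℝ a n : ℝ) • n) n = (0:ℝ) := by
    intro a
    rw [inner_sub_left, inner_smul_left, real_inner_self_eq_norm_sq, hn]; simp
  have key : ∀ a b c d : E4, ‖a‖ ≤ 1 → ‖b‖ ≤ 1 → ‖c‖ ≤ 1 → ‖d‖ ≤ 1 → |F a b c d - inner ℝ a n * F n b c d| ≤ K := by
    intro a b c d ha hb hc hd
    have e : F a b c d = F (a - (inner ℝ a n : ℝ) • n) b c d + inner ℝ a n * F n b c d := by
      rw [← hsm, ← hadd, sub_add_cancel]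
    rw [e, add_sub_cancel_right]
    exact hK _ _ _ _ (hp0 a) (hp a ha) hb hc hd
  have k1 := key a b c d ha hb hc hd
  have k2 := key b n c d hb hn.le hc hd
  have k3 := key c n n d hc hn.le hn.le hd
  have k4 := key d n n n hd hn.le hn.le hn.le
  rw [h12 b n] at k2
  rw [h12 c n, h23 n c] at k3
  rw [h12 d n, h23 n d, h34 n n d] at k4
  have s : ∀ r t : ℝ, |r| ≤ 1 → |t| ≤ K → |r * t| ≤ K := fun r t hr ht => by
    rw [abs_mul]; nlinarith [abs_nonneg r, abs_nonneg t]
  have m : ∀ r t : ℝ, |r| ≤ 1 → |t| ≤ 1 → |r * t| ≤ 1 := fun r t hr ht => by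
    rw [abs_mul]; nlinarith [abs_nonneg r, abs_nonneg t]
  have l2 := s _ _ (hin a ha) k2
  have l3 := s _ _ (m _ _ (hin a ha) (hin b hb)) k3
  have l4 := s _ _ (m _ _ (m _ _ (hin a ha) (hin b hb)) (hin c hc)) k4
  have e : F a b c d - inner ℝ a n * inner ℝ b n * inner ℝ c n * inner ℝ d n * F n n n n =
    (F a b c d - inner ℝ a n * F n b c d) + inner ℝ a n * (F n b c d - inner ℝ b n * F n n c d)
    + inner ℝ a n * inner ℝ b n * (F n n c d - inner ℝ c n * F n n n d)
    + inner ℝ a n * inner ℝ b n * inner ℝ c n * (F n n n d - inner ℝ d n * F n n n n) := by ring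
  rw [e]
  refine (abs_add_le _ _).trans ?_
  have := abs_add_three (F a b c d - inner ℝ a n * F n b c d) (inner ℝ a n * (F n b c d - inner ℝ b n * F n n c d)) (inner ℝ a n * inner ℝ b n * (F n n c d - inner ℝ c n * F n n n d))
  linarith

lemma dd_smooth {f : E4 → ℝ} (hf : ContDiff ℝ 4 f) (e : E4) {m : WithTop ℕ∞} (hm : m + 1 ≤ 4) : ContDiff ℝ m (dd e f) := by
  unfold dd
  exact (hf.fderiv_right hm).clm_apply contDiff_const

lemma mulD {f g : E4 → ℝ} {x : E4} (hf : DifferentiableAt ℝ f x) (hg : DifferentiableAt ℝ g x) :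
    DifferentiableAt ℝ (fun y => f y * g y) x := hf.mul hg

lemma addD {f g : E4 → ℝ} {x : E4} (hf : DifferentiableAt ℝ f x) (hg : DifferentiableAt ℝ g x) :
    DifferentiableAt ℝ (fun y => f y + g y) x := hf.add hg

/-- Leibniz rule, order three -/
lemma leib3 {f g : E4 → ℝ} (hf : ContDiffOn ℝ 3 f Bo) (hg : ContDiffOn ℝ 3 g Bo) (e : E4) : ∀ x ∈ Bo,
    dd e (dd e (dd e (fun y => f y * g y))) x = dd e (dd e (dd e f)) x * g x + 3 * (dd e (dd e f) x * dd e g x)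
      + 3 * (dd e f x * dd e (dd e g) x) + f x * dd e (dd e (dd e g)) x := by
  have df : ∀ {f : E4 → ℝ}, ContDiffOn ℝ 1 f Bo → ∀ x ∈ Bo, DifferentiableAt ℝ f x := fun hf x hx =>
    (hf.differentiableOn one_ne_zero).differentiableAt (Bo_nhds hx)
  have hf1 : ContDiffOn ℝ 2 (dd e f) Bo := dd_contDiffOn hf (by norm_num) e
  have hg1 : ContDiffOn ℝ 2 (dd e g) Bo := dd_contDiffOn hg (by norm_num) e
  have hf2 : ContDiffOn ℝ 1 (dd e (dd e f)) Bo := dd_contDiffOn hf1 (by norm_num) e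
  have hg2 : ContDiffOn ℝ 1 (dd e (dd e g)) Bo := dd_contDiffOn hg1 (by norm_num) e
  have f0 := df (hf.of_le (by norm_num))
  have g0 := df (hg.of_le (by norm_num))
  have f1 := df (hf1.of_le (by norm_num))
  have g1 := df (hg1.of_le (by norm_num))
  have f2 := df hf2
  have g2 := df hg2
  have s1 : ∀ x ∈ Bo, dd e (fun y => f y * g y) x = dd e f x * g x + f x * dd e g x := fun x hx =>
    dd_mul (f0 x hx) (g0 x hx) e
  have s2 : ∀ x ∈ Bo, dd e (dd e (fun y => f y * g y)) x = (dd e (dd e f) x * g x + dd e f x * dd e g x)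
      + (dd e f x * dd e g x + f x * dd e (dd e g) x) := fun x hx => by
    rw [dd_congr s1 e x hx, dd_add (mulD (f1 x hx) (g0 x hx)) (mulD (f0 x hx) (g1 x hx)), dd_mul (f1 x hx) (g0 x hx),
      dd_mul (f0 x hx) (g1 x hx)]
  intro x hx
  rw [dd_congr s2 e x hx, dd_add (addD (mulD (f2 x hx) (g0 x hx)) (mulD (f1 x hx) (g1 x hx)))
    (addD (mulD (f1 x hx) (g1 x hx)) (mulD (f0 x hx) (g2 x hx))), dd_add (mulD (f2 x hx) (g0 x hx)) (mulD (f1 x hx) (g1 x hx)),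
    dd_add (mulD (f1 x hx) (g1 x hx)) (mulD (f0 x hx) (g2 x hx)), dd_mul (f2 x hx) (g0 x hx), dd_mul (f1 x hx) (g1 x hx),
    dd_mul (f0 x hx) (g2 x hx)]
  ring

lemma tri_bd {f : E4 → ℝ} (hf : ContDiffOn ℝ 3 f Bo) {x : E4} (hx : x ∈ Bo) {K : ℝ}
    (h : ∀ e, ‖e‖ ≤ 4 → |dd e (dd e (dd e f)) x| ≤ K) {a b c : E4} (ha : ‖a‖ ≤ 4) (hb : ‖b‖ ≤ 4) (hc : ‖c‖ ≤ 4) :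
    |dd a (dd b (dd c f)) x| ≤ 64 * K :=
  polar3 (F := fun a b c => dd a (dd b (dd c f)) x) (fun _ _ _ _ => dd_add_dir _ _ _ _) (fun _ _ _ _ => dd_smul_dir _ _ _ _)
    (fun a b c => dd_swap (dd_contDiffOn hf (by norm_num) c) a b x hx)
    (fun a b c => dd_congr (dd_swap (hf.of_le (by norm_num)) b c) a x hx) h ha hb hc

lemma bi_bd {f : E4 → ℝ} (hf : ContDiffOn ℝ 2 f Bo) {x : E4} (hx : x ∈ Bo) {K : ℝ}
    (h : ∀ e, ‖e‖ ≤ 4 → |dd e (dd e f) x| ≤ K) {a b : E4} (ha : ‖a‖ ≤ 4) (hb : ‖b‖ ≤ 4) :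
    |dd a (dd b f) x| ≤ 16 * K :=
  polar2 (F := fun a b => dd a (dd b f) x) (fun _ _ _ => dd_add_dir _ _ _ _) (fun _ _ _ => dd_smul_dir _ _ _ _)
    (fun a b => dd_swap hf a b x hx) h ha hb

/-- components of the conformal field -/
def Yi (a : E4) (i : Fin 4) (y : E4) : ℝ := inner ℝ (Yv a y) (ei i)

lemma Yi_eq (a : E4) (i : Fin 4) (y : E4) :
    Yi a i y = (1 + ‖y‖ ^ 2) * inner ℝ (ei i) a - 2 * (inner ℝ a y * inner ℝ (ei i) y) := by
  unfold Yi Yv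
  rw [inner_sub_left, inner_smul_left, inner_smul_left, real_inner_comm (ei i) a, real_inner_comm (ei i) y]
  simp
  ring

lemma hasF_inner (z y : E4) : HasFDerivAt (fun y : E4 => (inner ℝ z y : ℝ)) (innerSL ℝ z) y := (innerSL ℝ z).hasFDerivAt

lemma dd_Yi1 (a e : E4) (i : Fin 4) (y : E4) : dd e (Yi a i) y =
    2 * inner ℝ e y * inner ℝ (ei i) a - 2 * (inner ℝ a e * inner ℝ (ei i) y + inner ℝ a y * inner ℝ (ei i) e) := by
  have h1 : HasFDerivAt (fun y : E4 => ‖y‖ ^ 2) (2 • innerSL ℝ y) y := by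
    simpa using (hasFDerivAt_id y).norm_sq
  have := ((h1.const_add 1).mul_const (inner ℝ (ei i) a)).sub (((hasF_inner a y).mul (hasF_inner (ei i) y)).const_mul 2)
  unfold dd
  rw [show Yi a i = _ from funext (Yi_eq a i)]
  have h3 := this.fderiv
  erw [h3]
  simp [real_inner_comm]
  ring

lemma dd_Yi2 (a e : E4) (i : Fin 4) (y : E4) : dd e (dd e (Yi a i)) y =
    2 * inner ℝ e e * inner ℝ (ei i) a - 2 * (inner ℝ a e * inner ℝ (ei i) e + inner ℝ a e * inner ℝ (ei i) e) := by
  have := (((hasF_inner e y).const_mul 2).mul_const (inner ℝ (ei i) a)).sub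
    ((((hasF_inner (ei i) y).const_mul (inner ℝ a e)).add ((hasF_inner a y).mul_const (inner ℝ (ei i) e))).const_mul 2)
  unfold dd
  rw [show (fun x => fderiv ℝ (Yi a i) x e) = _ from funext (dd_Yi1 a e i)]
  have h3 := this.fderiv
  erw [h3]
  simp
  ring

lemma dd_Yi3 (a e : E4) (i : Fin 4) (y : E4) : dd e (dd e (dd e (Yi a i))) y = 0 := by
  rw [show dd e (dd e (Yi a i)) = _ from funext (dd_Yi2 a e i)]
  unfold dd
  simp

lemma ei_norm (i : Fin 4) : ‖ei i‖ = 1 := by simp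

lemma Yi_bd1 {a e y : E4} (ha : ‖a‖ ≤ 1) (he : ‖e‖ ≤ 4) (hy : ‖y‖ ≤ 1) (i : Fin 4) : |dd e (Yi a i) y| ≤ 24 := by
  rw [dd_Yi1]
  have ib : ∀ u v : E4, ∀ r s : ℝ, ‖u‖ ≤ r → ‖v‖ ≤ s → |inner ℝ u v| ≤ r * s := fun u v r s hu hv =>
    (abs_real_inner_le_norm u v).trans (mul_le_mul hu hv (norm_nonneg _) ((norm_nonneg _).trans hu))
  have m : ∀ p q r s : ℝ, |p| ≤ r → |q| ≤ s → |p * q| ≤ r * s := fun p q r s hp hq => by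
    rw [abs_mul]; exact mul_le_mul hp hq (abs_nonneg _) ((abs_nonneg _).trans hp)
  have h1 := abs_le.1 (m _ _ _ _ (ib e y _ _ he hy) (ib (ei i) a _ _ (ei_norm i).le ha))
  have h2 := abs_le.1 (m _ _ _ _ (ib a e _ _ ha he) (ib (ei i) y _ _ (ei_norm i).le hy))
  have h3 := abs_le.1 (m _ _ _ _ (ib a y _ _ ha hy) (ib (ei i) e _ _ (ei_norm i).le he))
  rw [abs_le]
  constructor <;> linarith

lemma Yi_bd2 {a e y : E4} (ha : ‖a‖ ≤ 1) (he : ‖e‖ ≤ 4) (i : Fin 4) : |dd e (dd e (Yi a i)) y| ≤ 96 := by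
  rw [dd_Yi2]
  have ib : ∀ u v : E4, ∀ r s : ℝ, ‖u‖ ≤ r → ‖v‖ ≤ s → |inner ℝ u v| ≤ r * s := fun u v r s hu hv =>
    (abs_real_inner_le_norm u v).trans (mul_le_mul hu hv (norm_nonneg _) ((norm_nonneg _).trans hu))
  have m : ∀ p q r s : ℝ, |p| ≤ r → |q| ≤ s → |p * q| ≤ r * s := fun p q r s hp hq => by
    rw [abs_mul]; exact mul_le_mul hp hq (abs_nonneg _) ((abs_nonneg _).trans hp)
  have h1 := abs_le.1 (m _ _ _ _ (ib e e _ _ he he) (ib (ei i) a _ _ (ei_norm i).le ha))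
  have h2 := abs_le.1 (m _ _ _ _ (ib a e _ _ ha he) (ib (ei i) e _ _ (ei_norm i).le he))
  rw [abs_le]
  constructor <;> linarith

lemma Yi_smooth (a : E4) (i : Fin 4) {n : WithTop ℕ∞} : ContDiff ℝ n (Yi a i) := (Yv_contDiff a).inner ℝ contDiff_const

lemma dd_expand (b : E4) (f : E4 → ℝ) (y : E4) : dd b f y = ∑ i, inner ℝ b (ei i) * dd (ei i) f y := by
  unfold dd
  conv_lhs => rw [← sum_ei b]
  simp

lemma dd_sum {f : Fin 4 → E4 → ℝ} {x : E4} (hf : ∀ i, DifferentiableAt ℝ (f i) x) (a : E4) :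
    dd a (fun y => ∑ i, f i y) x = ∑ i, dd a (f i) x := by
  unfold dd
  have := (HasFDerivAt.fun_sum (u := Finset.univ) (fun i _ => (hf i).hasFDerivAt)).fderiv
  rw [this]
  simp

lemma dd3_sum {f : Fin 4 → E4 → ℝ} (hf : ∀ i, ContDiffOn ℝ 3 (f i) Bo) (e : E4) : ∀ x ∈ Bo,
    dd e (dd e (dd e (fun y => ∑ i, f i y))) x = ∑ i, dd e (dd e (dd e (f i))) x := by
  have df : ∀ {f : E4 → ℝ}, ContDiffOn ℝ 1 f Bo → ∀ x ∈ Bo, DifferentiableAt ℝ f x := fun hf x hx =>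
    (hf.differentiableOn one_ne_zero).differentiableAt (Bo_nhds hx)
  have hf1 : ∀ i, ContDiffOn ℝ 2 (dd e (f i)) Bo := fun i => dd_contDiffOn (hf i) (by norm_num) e
  have hf2 : ∀ i, ContDiffOn ℝ 1 (dd e (dd e (f i))) Bo := fun i => dd_contDiffOn (hf1 i) (by norm_num) e
  have s1 : ∀ x ∈ Bo, dd e (fun y => ∑ i, f i y) x = ∑ i, dd e (f i) x := fun x hx =>
    dd_sum (fun i => df ((hf i).of_le (by norm_num)) x hx) e
  have s2 : ∀ x ∈ Bo, dd e (dd e (fun y => ∑ i, f i y)) x = ∑ i, dd e (dd e (f i)) x := fun x hx => by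
    rw [dd_congr s1 e x hx]
    exact dd_sum (fun i => df ((hf1 i).of_le (by norm_num)) x hx) e
  intro x hx
  rw [dd_congr s2 e x hx]
  exact dd_sum (fun i => df (hf2 i) x hx) e

lemma dd_swap3 {v : E4 → ℝ} (hv : ContDiffOn ℝ 4 v Bo) (e b : E4) : ∀ x ∈ Bo,
    dd e (dd e (dd e (dd b v))) x = dd b (dd e (dd e (dd e v))) x := by
  have h1 : ContDiffOn ℝ 3 (dd e v) Bo := dd_contDiffOn hv (by norm_num) e
  have h2 : ContDiffOn ℝ 2 (dd e (dd e v)) Bo := dd_contDiffOn h1 (by norm_num) e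
  have s1 := dd_swap (hv.of_le (by norm_num)) e b
  have s2 := dd_swap (h1.of_le (by norm_num)) e b
  have s3 := dd_swap h2 e b
  intro x hx
  rw [dd_congr (dd_congr s1 e) e x hx, dd_congr s2 e x hx, s3 x hx]

/-- Standing data for the linear estimate. -/
structure Dat (v h : E4 → ℝ) (M : ℝ) : Prop where
  hv : ContDiffOn ℝ 4 v Bc
  hv0 : ∀ x, ‖x‖ = 1 → v x = 0 ∧ fderivWithin ℝ v Bc x = 0
  hh : ContDiffOn ℝ 1 h Bc
  hM : ∀ y ∈ Bc, |h y| ≤ M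
  he : ∀ y ∈ Bo, lap (lap v) y = h y

lemma low_est : ∃ C, 0 ≤ C ∧ ∀ v h M, Dat v h M → ∀ x ∈ Bo, ∀ a b c : E4, ‖a‖ ≤ 4 → ‖b‖ ≤ 4 → ‖c‖ ≤ 4 →
    |v x| ≤ C * M ∧ |dd a v x| ≤ C * M ∧ |dd a (dd b v) x| ≤ C * M ∧ |dd a (dd b (dd c v)) x| ≤ C * M := by
  obtain ⟨C, hC, H⟩ := line_est
  refine ⟨64 * C, by positivity, ?_⟩
  intro v h M D x hx a b c ha hb hc
  have hvo : ContDiffOn ℝ 4 v Bo := D.hv.mono ball_subset_closedBall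
  have hM : ∀ y ∈ Bo, |h y| ≤ M := fun y hy => D.hM y (ball_subset_closedBall hy)
  have hho := D.hh.continuousOn.mono ball_subset_closedBall
  have L := H v h M (hvo.of_le (by norm_num)) hho hM (fun x hx => rep hx D.hv D.hv0 hho hM D.he) x hx
  have hM0 : 0 ≤ C * M := (abs_nonneg _).trans (L 0 (by simp)).1
  refine ⟨(L a ha).1.trans (by linarith), (L a ha).2.1.trans (by linarith), ?_, ?_⟩
  · refine (bi_bd (hvo.of_le (by norm_num)) hx (fun e he => (L e he).2.2.1) ha hb).trans (by linarith)
  · refine (tri_bd (hvo.of_le (by norm_num)) hx (fun e he => (L e he).2.2.2.1) ha hb hc).trans (by linarith)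

lemma conf_est : ∃ C, 0 ≤ C ∧ ∀ v h M, Dat v h M → (∀ y ∈ Bc, ‖fderivWithin ℝ h Bc y‖ ≤ M) →
    ∀ x ∈ Bo, ∀ a e : E4, ‖a‖ ≤ 1 → ‖e‖ ≤ 4 → |dd (Yv a x) (dd e (dd e (dd e v))) x| ≤ C * M := by
  obtain ⟨C, hC, H⟩ := line_est
  obtain ⟨C', hC', H'⟩ := low_est
  refine ⟨12 * C + 4 * (3 * 96 + 3 * 24) * C', by positivity, ?_⟩
  intro v h M D hD x hx a e ha he
  have hvo : ContDiffOn ℝ 4 v Bo := D.hv.mono ball_subset_closedBall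
  have hM : ∀ y ∈ Bo, |h y| ≤ M := fun y hy => D.hM y (ball_subset_closedBall hy)
  have hho := D.hh.continuousOn.mono ball_subset_closedBall
  have hHo := (Hs_cont a D.hh).mono ball_subset_closedBall
  have L := H v h M (hvo.of_le (by norm_num)) hho hM (fun x hx => rep hx D.hv D.hv0 hho hM D.he)
  have hHM : ∀ y ∈ Bo, |Hs a h y| ≤ 12 * M := by
    intro y hy
    have hy' := ball_subset_closedBall hy
    have hyn : ‖y‖ ≤ 1 := by simpa using hy'
    unfold Hs
    have h1 : |fderivWithin ℝ h Bc y (Yv a y)| ≤ M * 4 := (ContinuousLinearMap.le_opNorm _ _).trans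
      (mul_le_mul (hD y hy') (Yv_norm ha hy') (norm_nonneg _) ((norm_nonneg _).trans (hD y hy')))
    have h2 : |inner ℝ a y * h y| ≤ 1 * M := by
      rw [abs_mul]
      refine mul_le_mul ((abs_real_inner_le_norm _ _).trans ?_) (hM y hy) (abs_nonneg _) zero_le_one
      nlinarith [norm_nonneg a, norm_nonneg y]
    rw [abs_le] at *
    constructor <;> linarith
  have hg : ∀ i, ContDiffOn ℝ 3 (dd (ei i) v) Bo := fun i => dd_contDiffOn hvo (by norm_num) _
  have hp : ∀ i, ContDiffOn ℝ 3 (fun y => Yi a i y * dd (ei i) v y) Bo := fun i => (Yi_smooth a i).contDiffOn.mul (hg i)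
  have hw : ContDiffOn ℝ 3 (fun y => ∑ i, Yi a i y * dd (ei i) v y) Bo := ContDiffOn.sum fun i _ => hp i
  have W := (H (fun y => ∑ i, Yi a i y * dd (ei i) v y) (Hs a h) (12 * M) hw hHo hHM (by
    intro x hx
    rw [← conf_rep ha hx D.hh, (L x hx (Yv a x) (Yv_norm ha (ball_subset_closedBall hx))).2.2.2.2, dd_expand]
    rfl) x hx e he).2.2.2.1
  rw [dd3_sum hp e x hx] at W
  have lb : ∀ i, dd e (dd e (dd e (fun y => Yi a i y * dd (ei i) v y))) x =
     3 * (dd e (dd e (Yi a i)) x * dd e (dd (ei i) v) x)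
      + 3 * (dd e (Yi a i) x * dd e (dd e (dd (ei i) v)) x) + Yi a i x * dd (ei i) (dd e (dd e (dd e v))) x := by
    intro i
    rw [leib3 (Yi_smooth a i).contDiffOn (hg i) e x hx, dd_Yi3, dd_swap3 hvo e (ei i) x hx]
    ring
  simp only [lb, Finset.sum_add_distrib] at W
  have ex : ∑ i, Yi a i x * dd (ei i) (dd e (dd e (dd e v))) x = dd (Yv a x) (dd e (dd e (dd e v))) x :=
    (dd_expand _ _ _).symm
  rw [ex] at W
  have m : ∀ p q r s : ℝ, |p| ≤ r → |q| ≤ s → |p * q| ≤ r * s := fun p q r s hp hq => by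
    rw [abs_mul]; exact mul_le_mul hp hq (abs_nonneg _) ((abs_nonneg _).trans hp)
  have hxn : ‖x‖ ≤ 1 := by simpa using ball_subset_closedBall hx
  have en : ∀ i, ‖ei i‖ ≤ 4 := fun i => by rw [ei_norm]; norm_num
  have b1 : |∑ i, 3 * (dd e (dd e (Yi a i)) x * dd e (dd (ei i) v) x)| ≤ 4 * (3 * (96 * (C' * M))) := by
    refine (Finset.abs_sum_le_sum_abs _ _).trans ?_
    refine (Finset.sum_le_card_nsmul _ _ (3 * (96 * (C' * M))) fun i _ => ?_).trans (by simp)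
    refine m _ _ _ _ (by norm_num) (m _ _ _ _ (Yi_bd2 ha he i) (H' v h M D x hx e (ei i) 0 he (en i) (by simp)).2.2.1)
  have b2 : |∑ i, 3 * (dd e (Yi a i) x * dd e (dd e (dd (ei i) v)) x)| ≤ 4 * (3 * (24 * (C' * M))) := by
    refine (Finset.abs_sum_le_sum_abs _ _).trans ?_
    refine (Finset.sum_le_card_nsmul _ _ (3 * (24 * (C' * M))) fun i _ => ?_).trans (by simp)
    refine m _ _ _ _ (by norm_num) (m _ _ _ _ (Yi_bd1 ha he hxn i) (H' v h M D x hx e e (ei i) he he (en i)).2.2.2)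
  rw [abs_le] at *
  constructor <;> linarith

lemma top_est : ∃ C, 0 ≤ C ∧ ∀ v h M, Dat v h M → (∀ y ∈ Bc, ‖fderivWithin ℝ h Bc y‖ ≤ M) →
    ∀ x ∈ Bo, ∀ a b c d : E4, ‖a‖ ≤ 1 → ‖b‖ ≤ 1 → ‖c‖ ≤ 1 → ‖d‖ ≤ 1 → |dd a (dd b (dd c (dd d v))) x| ≤ C * M := by
  obtain ⟨C, hC, H⟩ := conf_est
  refine ⟨68 * (64 * C) + 1, by positivity, ?_⟩
  intro v h M D hD x hx a b c d ha hb hc hd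
  have hvo : ContDiffOn ℝ 4 v Bo := D.hv.mono ball_subset_closedBall
  have hv1 : ∀ a, ContDiffOn ℝ 3 (dd a v) Bo := fun a => dd_contDiffOn hvo (by norm_num) _
  have hv2 : ∀ a b, ContDiffOn ℝ 2 (dd a (dd b v)) Bo := fun a b => dd_contDiffOn (hv1 b) (by norm_num) _
  obtain ⟨n, hn, hxn⟩ : ∃ n : E4, ‖n‖ = 1 ∧ x = ‖x‖ • n := by
    by_cases h0 : x = 0
    · exact ⟨ei 0, ei_norm 0, by simp [h0]⟩
    · have : ‖x‖ ≠ 0 := norm_ne_zero_iff.2 h0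
      exact ⟨‖x‖⁻¹ • x, by rw [norm_smul, norm_inv, norm_norm, inv_mul_cancel₀ this], by rw [smul_smul, mul_inv_cancel₀ this, one_smul]⟩
  have t0 : ∀ p e : E4, inner ℝ p n = (0:ℝ) → ‖p‖ ≤ 1 → ‖e‖ ≤ 4 → |dd e (dd e (dd e (dd p v))) x| ≤ C * M := by
    intro p e hpn hp he
    have h1 := H v h M D hD x hx p e hp he
    have hpx : inner ℝ p x = (0:ℝ) := by rw [hxn, inner_smul_right, hpn, mul_zero]
    have hY : Yv p x = (1 + ‖x‖ ^ 2) • p := by unfold Yv; rw [hpx]; simp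
    rw [hY, dd_smul_dir, abs_mul, abs_of_nonneg (by positivity)] at h1
    rw [dd_swap3 hvo e p x hx]
    nlinarith [abs_nonneg (dd p (dd e (dd e (dd e v))) x), sq_nonneg ‖x‖]
  have h12 : ∀ a b c d, dd a (dd b (dd c (dd d v))) x = dd b (dd a (dd c (dd d v))) x := fun a b c d =>
    dd_swap (hv2 c d) a b x hx
  have h23 : ∀ a b c d, dd a (dd b (dd c (dd d v))) x = dd a (dd c (dd b (dd d v))) x := fun a b c d =>
    dd_congr (dd_swap ((hv1 d).of_le (by norm_num)) b c) a x hx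
  have h34 : ∀ a b c d, dd a (dd b (dd c (dd d v))) x = dd a (dd b (dd d (dd c v))) x := fun a b c d =>
    dd_congr (dd_congr (dd_swap (hvo.of_le (by norm_num)) c d) b) a x hx
  have R := fun (a b c d : E4) => @recover4 (fun a b c d => dd a (dd b (dd c (dd d v))) x) (64 * (C * M))
    (fun _ _ _ _ _ => dd_add_dir _ _ _ _) (fun _ _ _ _ _ => dd_smul_dir _ _ _ _) h12 h23 h34 n hn (by
      intro p b c d hpn hp hb hc hd
      have e1 : dd p (dd b (dd c (dd d v))) x = dd b (dd c (dd d (dd p v))) x := by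
        rw [h12, h23, h34]
      simp only [e1]
      exact tri_bd (hv1 p) hx (fun e he => t0 p e hpn hp he) (by linarith) (by linarith) (by linarith)) a b c d
  set N := dd n (dd n (dd n (dd n v))) x with hN
  have hl : h x = ∑ i, ∑ j, dd (ei i) (dd (ei i) (dd (ei j) (dd (ei j) v))) x := by
    rw [← D.he x hx]
    have df : ∀ {f : E4 → ℝ}, ContDiffOn ℝ 1 f Bo → ∀ x ∈ Bo, DifferentiableAt ℝ f x := fun hf x hx =>
      (hf.differentiableOn one_ne_zero).differentiableAt (Bo_nhds hx)
    change ∑ i, dd (ei i) (dd (ei i) (fun y => ∑ j, dd (ei j) (dd (ei j) v) y)) x = _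
    refine Finset.sum_congr rfl fun i _ => ?_
    have s1 : ∀ y ∈ Bo, dd (ei i) (fun y => ∑ j, dd (ei j) (dd (ei j) v) y) y = ∑ j, dd (ei i) (dd (ei j) (dd (ei j) v)) y :=
      fun y hy => dd_sum (fun j => df ((hv2 _ _).of_le (by norm_num)) y hy) _
    rw [dd_congr s1 _ x hx]
    exact dd_sum (fun j => df (dd_contDiffOn (hv2 _ _) (by norm_num) _) x hx) _
  have hsum : |h x - N| ≤ 16 * (4 * (64 * (C * M))) := by
    have e2 : ∑ i, ∑ j, (inner ℝ (ei i) n * inner ℝ (ei i) n * inner ℝ (ei j) n * inner ℝ (ei j) n * N) = N := by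
      have : ∑ i, (inner ℝ (ei i) n : ℝ) ^ 2 = 1 := by
        have h1 : ‖n‖ ^ 2 = 1 := by rw [hn]; norm_num
        rw [EuclideanSpace.norm_sq_eq] at h1
        rw [← h1]
        refine Finset.sum_congr rfl fun i _ => ?_
        rw [EuclideanSpace.inner_single_left]; simp
      have e3 : ∀ i j, (inner ℝ (ei i) n * inner ℝ (ei i) n * inner ℝ (ei j) n * inner ℝ (ei j) n * N : ℝ)
        = (inner ℝ (ei i) n) ^ 2 * ((inner ℝ (ei j) n) ^ 2 * N) := fun i j => by ring
      simp only [e3]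
      simp only [← Finset.mul_sum, ← Finset.sum_mul, this, one_mul]
    rw [hl, ← e2, ← Finset.sum_sub_distrib]
    simp only [← Finset.sum_sub_distrib]
    refine (Finset.abs_sum_le_sum_abs _ _).trans ?_
    refine (Finset.sum_le_card_nsmul _ _ (4 * (4 * (64 * (C * M)))) fun i _ => ?_).trans (by simp; linarith)
    refine (Finset.abs_sum_le_sum_abs _ _).trans ?_
    refine (Finset.sum_le_card_nsmul _ _ (4 * (64 * (C * M))) fun j _ => ?_).trans (by simp)
    exact R (ei i) (ei i) (ei j) (ei j) (ei_norm i).le (ei_norm i).le (ei_norm j).le (ei_norm j).le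
  have hNb : |N| ≤ M + 16 * (4 * (64 * (C * M))) := by
    have := D.hM x (ball_subset_closedBall hx)
    rw [abs_le] at *
    constructor <;> linarith
  have Ra := R a b c d ha hb hc hd
  have hin : ∀ a : E4, ‖a‖ ≤ 1 → |inner ℝ a n| ≤ 1 := fun a ha => (abs_real_inner_le_norm _ _).trans (by rw [hn]; linarith)
  have m : ∀ p q r s : ℝ, |p| ≤ r → |q| ≤ s → |p * q| ≤ r * s := fun p q r s hp hq => by
    rw [abs_mul]; exact mul_le_mul hp hq (abs_nonneg _) ((abs_nonneg _).trans hp)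
  have z := m _ _ _ _ (m _ _ _ _ (m _ _ _ _ (m _ _ _ _ (hin a ha) (hin b hb)) (hin c hc)) (hin d hd)) hNb
  rw [abs_le] at *
  constructor <;> linarith

/-- all iterated basis derivatives up to order `n` bounded by `M` on the closed ball -/
def BdW : ℕ → ℝ → (E4 → ℝ) → Prop
  | 0, M, f => ∀ x ∈ Bc, |f x| ≤ M
  | n + 1, M, f => (∀ x ∈ Bc, |f x| ≤ M) ∧ ∀ i, BdW n M (ddw (ei i) f)

lemma BdW_zero {n : ℕ} {M : ℝ} {f : E4 → ℝ} (h : BdW n M f) : ∀ x ∈ Bc, |f x| ≤ M := by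
  cases n with
  | zero => exact h
  | succ n => exact h.1

lemma ddw_congr {f g : E4 → ℝ} (h : ∀ x ∈ Bc, f x = g x) (a : E4) : ∀ x ∈ Bc, ddw a f x = ddw a g x := by
  intro x hx
  unfold ddw
  rw [fderivWithin_congr h (h x hx)]

lemma BdW_congr {n : ℕ} {M : ℝ} {f g : E4 → ℝ} (h : ∀ x ∈ Bc, f x = g x) (hf : BdW n M f) : BdW n M g := by
  induction n generalizing f g with
  | zero => intro x hx; rw [← h x hx]; exact hf x hx
  | succ n ih =>
    refine ⟨fun x hx => by rw [← h x hx]; exact hf.1 x hx, fun i => ih (ddw_congr h (ei i)) (hf.2 i)⟩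

lemma ddw_sub {f g : E4 → ℝ} (hf : ContDiffOn ℝ 1 f Bc) (hg : ContDiffOn ℝ 1 g Bc) (a : E4) : ∀ x ∈ Bc,
    ddw a (fun y => f y - g y) x = ddw a f x - ddw a g x := by
  intro x hx
  unfold ddw
  rw [fderivWithin_fun_sub (Bc_unique x hx) (hf.differentiableOn one_ne_zero x hx) (hg.differentiableOn one_ne_zero x hx)]
  simp

lemma clo : closure Bo = Bc := closure_ball _ one_ne_zero

lemma ext_bd {f : E4 → ℝ} {M : ℝ} (hf : ContinuousOn f Bc) (h : ∀ x ∈ Bo, |f x| ≤ M) : ∀ x ∈ Bc, |f x| ≤ M := by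
  intro x hx
  have hx' : x ∈ closure Bo := by rw [clo]; exact hx
  have : (𝓝[Bo] x).NeBot := mem_closure_iff_nhdsWithin_neBot.1 hx'
  have ht : Tendsto (fun y => |f y|) (𝓝[Bo] x) (𝓝 |f x|) := ((hf x hx).mono ball_subset_closedBall).abs
  exact le_of_tendsto ht (eventually_mem_nhdsWithin.mono h)

/-- the covector with given components -/
def cov (g : Fin 4 → E4 → ℝ) (x : E4) : E4 →L[ℝ] ℝ := ∑ i, g i x • innerSL ℝ (ei i)

lemma cov_eq (L : E4 →L[ℝ] ℝ) : ∑ i, L (ei i) • innerSL ℝ (ei i) = L := by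
  ext b
  conv_rhs => rw [← sum_ei b]
  simp [mul_comm, real_inner_comm]

lemma cov_unif {f : ℕ → Fin 4 → E4 → ℝ} {g : Fin 4 → E4 → ℝ} {s : Set E4}
    (h : ∀ i, TendstoUniformlyOn (fun k => f k i) (g i) atTop s) :
    TendstoUniformlyOn (fun k => cov (f k)) (cov g) atTop s := by
  rw [Metric.tendstoUniformlyOn_iff]
  intro ε hε
  have : ∀ᶠ k in atTop, ∀ i, ∀ x ∈ s, dist (g i x) (f k i x) < ε / 5 := by
    rw [eventually_all]
    intro i
    exact Metric.tendstoUniformlyOn_iff.1 (h i) _ (by positivity)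
  filter_upwards [this] with k hk x hx
  rw [dist_eq_norm]
  unfold cov
  rw [← Finset.sum_sub_distrib]
  refine lt_of_le_of_lt (norm_sum_le _ _) ?_
  refine lt_of_le_of_lt (Finset.sum_le_card_nsmul _ _ (ε / 5) fun i _ => ?_) (by simp; linarith)
  have e : g i x • innerSL ℝ (ei i) - f k i x • innerSL ℝ (ei i) = (g i x - f k i x) • innerSL ℝ (ei i) :=
    (sub_smul (g i x) (f k i x) (innerSL ℝ (ei i))).symm
  rw [e, norm_smul, innerSL_apply_norm, ei_norm, mul_one]
  exact (hk i x hx).le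

lemma lim_cd (n : ℕ) (f : ℕ → E4 → ℝ) (hf : ∀ k, ContDiffOn ℝ n (f k) Bc)
    (hc : ∀ ε > 0, ∃ N, ∀ k ≥ N, ∀ l ≥ N, BdW n ε (fun x => f k x - f l x)) :
    ∃ g, ContDiffOn ℝ n g Bc ∧ TendstoUniformlyOn f g atTop Bc := by
  have base : ∀ f : ℕ → E4 → ℝ, (∀ ε > 0, ∃ N, ∀ k ≥ N, ∀ l ≥ N, ∀ x ∈ Bc, |f k x - f l x| ≤ ε) →
      ∃ g, TendstoUniformlyOn f g atTop Bc := by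
    intro f hc
    have hu : UniformCauchySeqOn f atTop Bc := by
      rw [Metric.uniformCauchySeqOn_iff]
      intro ε hε
      obtain ⟨N, hN⟩ := hc (ε / 2) (by positivity)
      refine ⟨N, fun m hm n hn x hx => ?_⟩
      rw [Real.dist_eq]
      linarith [hN m hm n hn x hx]
    have : ∀ x ∈ Bc, ∃ z, Tendsto (fun k => f k x) atTop (𝓝 z) := fun x hx =>
      cauchySeq_tendsto_of_complete (hu.cauchySeq hx)
    choose! g hg using this
    exact ⟨g, hu.tendstoUniformlyOn_of_tendsto hg⟩
  induction n generalizing f with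
  | zero =>
    obtain ⟨g, hg⟩ := base f hc
    refine ⟨g, ?_, hg⟩
    have : ContinuousOn g Bc := hg.continuousOn (Frequently.of_forall fun k => (hf k).continuousOn)
    simpa using this
  | succ n ih =>
    obtain ⟨g, hg⟩ := base f (fun ε hε => by
      obtain ⟨N, hN⟩ := hc ε hε
      exact ⟨N, fun k hk l hl => BdW_zero (hN k hk l hl)⟩)
    have hf1 : ∀ k, ContDiffOn ℝ 1 (f k) Bc := fun k => (hf k).of_le (by exact_mod_cast Nat.le_add_left 1 n)
    have : ∀ i, ∃ g, ContDiffOn ℝ n g Bc ∧ TendstoUniformlyOn (fun k => ddw (ei i) (f k)) g atTop Bc := by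
      intro i
      apply ih
      · intro k
        exact ddw_contDiffOn (hf k) (by push_cast; exact le_rfl) _
      · intro ε hε
        obtain ⟨N, hN⟩ := hc ε hε
        exact ⟨N, fun k hk l hl => BdW_congr (ddw_sub (hf1 k) (hf1 l) (ei i)) ((hN k hk l hl).2 i)⟩
    choose G hG hGu using this
    refine ⟨g, ?_, hg⟩
    have gc : ContinuousOn g Bc := hg.continuousOn (Frequently.of_forall fun k => (hf k).continuousOn)
    have cG : ContDiffOn ℝ n (cov G) Bc := ContDiffOn.sum fun i _ => (hG i).smul contDiffOn_const
    have cGu : TendstoUniformlyOn (fun k => cov (fun i => ddw (ei i) (f k))) (cov G) atTop Bo :=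
      (cov_unif hGu).mono ball_subset_closedBall
    have hin : ∀ x ∈ Bo, HasFDerivAt g (cov G x) x := by
      intro x hx
      refine hasFDerivAt_of_tendstoUniformlyOn (l := atTop) (f := f) isOpen_ball cGu ?_ ?_ hx
      · intro k y hy
        have : DifferentiableAt ℝ (f k) y := ((hf1 k).differentiableOn one_ne_zero).differentiableAt (Bc_nhds hy)
        have e : cov (fun i => ddw (ei i) (f k)) y = fderiv ℝ (f k) y := by
          unfold cov
          simp only [ddw_eq hy]
          exact cov_eq (fderiv ℝ (f k) y)
        rw [e]
        exact this.hasFDerivAt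
      · intro y hy
        exact hg.tendsto_at (ball_subset_closedBall hy)
    have hcl : ∀ x ∈ Bc, HasFDerivWithinAt g (cov G x) Bc x := by
      intro x hx
      rw [← clo]
      apply hasFDerivWithinAt_closure_of_tendsto_fderiv
      · intro y hy; exact (hin y hy).differentiableAt.differentiableWithinAt
      · exact convex_ball _ _
      · exact isOpen_ball
      · intro y hy
        rw [clo] at hy
        exact (gc y hy).mono ball_subset_closedBall
      · have t := (cG.continuousOn x hx).mono (ball_subset_closedBall (x := (0:E4)) (ε := 1))
        refine Tendsto.congr' ?_ t
        filter_upwards [self_mem_nhdsWithin] with y hy using (hin y hy).fderiv.symm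
    push_cast
    rw [contDiffOn_succ_iff_fderivWithin Bc_unique]
    refine ⟨fun x hx => (hcl x hx).differentiableWithinAt, by simp, ?_⟩
    exact cG.congr fun x hx => (hcl x hx).fderivWithin (Bc_unique x hx)

/-- all iterated basis derivatives up to order `n` bounded by `M` on the open ball -/
def BdO : ℕ → ℝ → (E4 → ℝ) → Prop
  | 0, M, f => ∀ x ∈ Bo, |f x| ≤ M
  | n + 1, M, f => (∀ x ∈ Bo, |f x| ≤ M) ∧ ∀ i, BdO n M (dd (ei i) f)

lemma BdO_congr {n : ℕ} {M : ℝ} {f g : E4 → ℝ} (h : ∀ x ∈ Bo, f x = g x) (hf : BdO n M f) : BdO n M g := by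
  induction n generalizing f g with
  | zero => intro x hx; rw [← h x hx]; exact hf x hx
  | succ n ih =>
    refine ⟨fun x hx => by rw [← h x hx]; exact hf.1 x hx, fun i => ih (dd_congr h (ei i)) (hf.2 i)⟩

lemma BdW_of_BdO {n : ℕ} {M : ℝ} {f : E4 → ℝ} (hf : ContDiffOn ℝ n f Bc) (h : BdO n M f) : BdW n M f := by
  induction n generalizing f with
  | zero => exact ext_bd hf.continuousOn h
  | succ n ih =>
    refine ⟨ext_bd hf.continuousOn h.1, fun i => ih (ddw_contDiffOn hf (by push_cast; exact le_rfl) _) ?_⟩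
    exact BdO_congr (fun x hx => (ddw_eq hx _).symm) (h.2 i)

lemma BdW_mono {n : ℕ} {M M' : ℝ} (hM : M ≤ M') {f : E4 → ℝ} (hf : BdW n M f) : BdW n M' f := by
  induction n generalizing f with
  | zero => intro x hx; exact (hf x hx).trans hM
  | succ n ih => exact ⟨fun x hx => (hf.1 x hx).trans hM, fun i => ih (hf.2 i)⟩

lemma est1 : ∃ C, 0 ≤ C ∧ ∀ v h M, Dat v h M → ∀ x ∈ Bc, |v x| ≤ C * M ∧ ‖fderivWithin ℝ v Bc x‖ ≤ C * M := by
  obtain ⟨C, hC, H⟩ := low_est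
  refine ⟨C, hC, ?_⟩
  intro v h M D x hx
  have h0 : ∀ x ∈ Bc, |v x| ≤ C * M := ext_bd D.hv.continuousOn fun x hx =>
    (H v h M D x hx 0 0 0 (by simp) (by simp) (by simp)).1
  refine ⟨h0 x hx, ?_⟩
  apply ContinuousLinearMap.opNorm_le_of_unit_norm ((abs_nonneg _).trans (h0 x hx))
  intro a ha
  have ha4 : ‖a‖ ≤ 4 := by rw [ha]; norm_num
  refine ext_bd (f := ddw a v) (ddw_contDiffOn (m := 3) D.hv (by norm_num) a).continuousOn (fun y hy => ?_) x hx
  rw [ddw_eq hy]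
  exact (H v h M D y hy a 0 0 ha4 (by simp) (by simp)).2.1

lemma est4 : ∃ C, 0 ≤ C ∧ ∀ v h M, Dat v h M → (∀ y ∈ Bc, ‖fderivWithin ℝ h Bc y‖ ≤ M) → BdW 4 (C * M) v := by
  obtain ⟨C, hC, H⟩ := low_est
  obtain ⟨C', hC', H'⟩ := top_est
  refine ⟨C + C', by positivity, ?_⟩
  intro v h M D hD
  have hM0 : 0 ≤ M := (norm_nonneg _).trans (hD 0 (by simp))
  have en : ∀ i, ‖ei i‖ ≤ 4 := fun i => by rw [ei_norm]; norm_num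
  have l1 : C * M ≤ (C + C') * M := by nlinarith
  have l2 : C' * M ≤ (C + C') * M := by nlinarith
  apply BdW_of_BdO (by exact_mod_cast D.hv)
  refine ⟨fun x hx => (H v h M D x hx 0 0 0 (by simp) (by simp) (by simp)).1.trans l1, fun i =>
    ⟨fun x hx => (H v h M D x hx (ei i) 0 0 (en i) (by simp) (by simp)).2.1.trans l1, fun j =>
    ⟨fun x hx => (H v h M D x hx (ei j) (ei i) 0 (en j) (en i) (by simp)).2.2.1.trans l1, fun k =>
    ⟨fun x hx => (H v h M D x hx (ei k) (ei j) (ei i) (en k) (en j) (en i)).2.2.2.trans l1, fun l x hx =>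
    (H' v h M D hD x hx _ _ _ _ (ei_norm l).le (ei_norm k).le (ei_norm j).le (ei_norm i).le).trans l2⟩⟩⟩⟩

lemma lap_sub {f g : E4 → ℝ} (hf : ContDiffOn ℝ 2 f Bo) (hg : ContDiffOn ℝ 2 g Bo) : ∀ x ∈ Bo,
    lap (fun y => f y - g y) x = lap f x - lap g x := by
  have df : ∀ {f : E4 → ℝ}, ContDiffOn ℝ 1 f Bo → ∀ x ∈ Bo, DifferentiableAt ℝ f x := fun hf x hx =>
    (hf.differentiableOn one_ne_zero).differentiableAt (Bo_nhds hx)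
  intro x hx
  change ∑ i, dd (ei i) (dd (ei i) (fun y => f y - g y)) x = ∑ i, dd (ei i) (dd (ei i) f) x - ∑ i, dd (ei i) (dd (ei i) g) x
  rw [← Finset.sum_sub_distrib]
  refine Finset.sum_congr rfl fun i _ => ?_
  have s1 : ∀ x ∈ Bo, dd (ei i) (fun y => f y - g y) x = dd (ei i) f x - dd (ei i) g x := fun x hx =>
    dd_sub (df (hf.of_le (by norm_num)) x hx) (df (hg.of_le (by norm_num)) x hx) _
  rw [dd_congr s1 _ x hx]
  exact dd_sub (df (dd_contDiffOn hf (by norm_num) _) x hx) (df (dd_contDiffOn hg (by norm_num) _) x hx) _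

lemma lap_contDiffOn {f : E4 → ℝ} (hf : ContDiffOn ℝ 4 f Bo) : ContDiffOn ℝ 2 (lap f) Bo := by
  change ContDiffOn ℝ 2 (fun x => ∑ i, dd (ei i) (dd (ei i) f) x) Bo
  exact ContDiffOn.sum fun i _ => dd_contDiffOn (m := 2) (n := 3) (dd_contDiffOn hf (by norm_num) _) (by norm_num) _

/-- normalized solutions -/
structure Sol (L C c : ℝ) (u : E4 → ℝ) : Prop where
  hu : ContDiffOn ℝ 4 u Bc
  hu0 : ∀ x, ‖x‖ = 1 → u x = 0 ∧ fderivWithin ℝ u Bc x = 0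
  he : ∀ y ∈ Bo, lap (lap u) y = c * Real.exp (u y)
  hC : ∀ y ∈ Bc, u y ≤ C
  hc0 : 0 ≤ c
  hcL : c ≤ L

lemma Sol.src_bd {L C c : ℝ} {u : E4 → ℝ} (S : Sol L C c u) : ∀ y ∈ Bc, |c * Real.exp (u y)| ≤ L * Real.exp C := by
  intro y hy
  rw [abs_of_nonneg (mul_nonneg S.hc0 (Real.exp_pos _).le)]
  exact mul_le_mul S.hcL (Real.exp_le_exp.2 (S.hC y hy)) (Real.exp_pos _).le (S.hc0.trans S.hcL)

lemma Sol.dat {L C c : ℝ} {u : E4 → ℝ} (S : Sol L C c u) : Dat u (fun y => c * Real.exp (u y)) (L * Real.exp C) where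
  hv := S.hu
  hv0 := S.hu0
  hh := contDiffOn_const.mul (S.hu.of_le (by norm_num)).exp
  hM := S.src_bd
  he := S.he

lemma exp_lip {C a b : ℝ} (ha : a ≤ C) (hb : b ≤ C) : |Real.exp a - Real.exp b| ≤ Real.exp C * |a - b| := by
  have key : ∀ a b : ℝ, a ≤ C → b ≤ a → Real.exp a - Real.exp b ≤ Real.exp C * (a - b) := by
    intro a b ha hba
    have h1 : Real.exp b = Real.exp a * Real.exp (b - a) := by rw [← Real.exp_add]; congr 1; ring
    have h2 := Real.add_one_le_exp (b - a)
    have h3 := Real.exp_le_exp.2 ha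
    have h4 := Real.exp_pos a
    rw [h1]
    nlinarith
  rcases le_total b a with h | h
  · rw [abs_of_nonneg (sub_nonneg.2 (Real.exp_le_exp.2 h)), abs_of_nonneg (by linarith)]
    exact key a b ha h
  · rw [abs_sub_comm, abs_sub_comm a, abs_of_nonneg (sub_nonneg.2 (Real.exp_le_exp.2 h)), abs_of_nonneg (by linarith)]
    exact key b a hb h

lemma Sol.src_fd {L C c : ℝ} {u : E4 → ℝ} (S : Sol L C c u) {y : E4} (hy : y ∈ Bc) :
    HasFDerivWithinAt (fun y => c * Real.exp (u y)) ((c * Real.exp (u y)) • fderivWithin ℝ u Bc y) Bc y := by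
  have h := ((S.hu.differentiableOn (by norm_num) y hy).hasFDerivWithinAt.exp).const_mul c
  rw [smul_smul] at h
  exact h

lemma Sol.sub_dat {L C c c' δ : ℝ} {u u' : E4 → ℝ} (S : Sol L C c u) (S' : Sol L C c' u')
    {M : ℝ} (hM : ∀ y ∈ Bc, |c * Real.exp (u y) - c' * Real.exp (u' y)| ≤ M) :
    Dat (fun y => u y - u' y) (fun y => c * Real.exp (u y) - c' * Real.exp (u' y)) M where
  hv := S.hu.sub S'.hu
  hv0 := by
    intro x hx
    have hxb : x ∈ Bc := by simp [hx]
    refine ⟨by rw [(S.hu0 x hx).1, (S'.hu0 x hx).1, sub_zero], ?_⟩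
    rw [fderivWithin_fun_sub (Bc_unique x hxb) (S.hu.differentiableOn (by norm_num) x hxb)
      (S'.hu.differentiableOn (by norm_num) x hxb), (S.hu0 x hx).2, (S'.hu0 x hx).2, sub_zero]
  hh := S.dat.hh.sub S'.dat.hh
  hM := hM
  he := by
    intro y hy
    have h1 : ContDiffOn ℝ 4 u Bo := S.hu.mono ball_subset_closedBall
    have h2 : ContDiffOn ℝ 4 u' Bo := S'.hu.mono ball_subset_closedBall
    rw [lap_congr (lap_sub (h1.of_le (by norm_num)) (h2.of_le (by norm_num))) y hy,
      lap_sub (lap_contDiffOn h1) (lap_contDiffOn h2) y hy, S.he y hy, S'.he y hy]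

lemma diff_est {L C : ℝ} (hL : 0 ≤ L) : ∃ A, 0 ≤ A ∧ ∀ c c' u u' δ, Sol L C c u → Sol L C c' u' → |c - c'| ≤ δ →
    (∀ y ∈ Bc, |u y - u' y| ≤ δ) → BdW 4 (A * δ) (fun y => u y - u' y) := by
  obtain ⟨C1, hC1, H1⟩ := est1
  obtain ⟨C4, hC4, H4⟩ := est4
  set E := Real.exp C with hE
  have hE0 : 0 < E := Real.exp_pos _
  set A1 := E + L * E with hA1
  have hA10 : 0 ≤ A1 := by positivity
  set A2 := A1 + (A1 * (C1 * (L * E)) + (L * E) * (C1 * A1)) with hA2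
  have hA20 : 0 ≤ A1 * (C1 * (L * E)) + (L * E) * (C1 * A1) := by positivity
  refine ⟨C4 * A2, by positivity, ?_⟩
  intro c c' u u' δ S S' hc hu
  have hδ : 0 ≤ δ := (abs_nonneg _).trans hc
  have hM : ∀ y ∈ Bc, |c * Real.exp (u y) - c' * Real.exp (u' y)| ≤ A1 * δ := by
    intro y hy
    have e : c * Real.exp (u y) - c' * Real.exp (u' y) = (c - c') * Real.exp (u y) + c' * (Real.exp (u y) - Real.exp (u' y)) := by ring
    rw [e]
    refine (abs_add_le _ _).trans ?_
    rw [abs_mul, abs_mul, abs_of_nonneg S'.hc0, abs_of_pos (Real.exp_pos _)]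
    have h1 : |c - c'| * Real.exp (u y) ≤ δ * E := mul_le_mul hc (Real.exp_le_exp.2 (S.hC y hy)) (Real.exp_pos _).le hδ
    have h2 : |Real.exp (u y) - Real.exp (u' y)| ≤ E * δ :=
      (exp_lip (S.hC y hy) (S'.hC y hy)).trans (mul_le_mul_of_nonneg_left (hu y hy) hE0.le)
    have h3 : c' * |Real.exp (u y) - Real.exp (u' y)| ≤ L * (E * δ) := mul_le_mul S'.hcL h2 (abs_nonneg _) hL
    rw [hA1]; linarith
  have D1 := S.sub_dat (δ := δ) S' hM
  have hM2 : ∀ y ∈ Bc, |c * Real.exp (u y) - c' * Real.exp (u' y)| ≤ A2 * δ := fun y hy => (hM y hy).trans (by rw [hA2]; nlinarith)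
  have D2 := S.sub_dat (δ := δ) S' hM2
  have F2 : ∀ y ∈ Bc, ‖fderivWithin ℝ (fun y => c * Real.exp (u y) - c' * Real.exp (u' y)) Bc y‖ ≤ A2 * δ := by
    intro y hy
    have hd := ((S.src_fd hy).fun_sub (S'.src_fd hy)).fderivWithin (Bc_unique y hy)
    rw [hd]
    have e : (c * Real.exp (u y)) • fderivWithin ℝ u Bc y - (c' * Real.exp (u' y)) • fderivWithin ℝ u' Bc y
      = (c * Real.exp (u y) - c' * Real.exp (u' y)) • fderivWithin ℝ u Bc y
        + (c' * Real.exp (u' y)) • (fderivWithin ℝ u Bc y - fderivWithin ℝ u' Bc y) := by module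
    rw [e]
    refine (norm_add_le _ _).trans ?_
    rw [norm_smul, norm_smul, Real.norm_eq_abs, Real.norm_eq_abs]
    have g1 := (H1 _ _ _ S.dat y hy).2
    have g2 := (H1 _ _ _ D1 y hy).2
    rw [fderivWithin_fun_sub (Bc_unique y hy) (S.hu.differentiableOn (by norm_num) y hy)
      (S'.hu.differentiableOn (by norm_num) y hy)] at g2
    have k1 := mul_le_mul (hM y hy) g1 (norm_nonneg _) (by positivity)
    have k2 := mul_le_mul (S'.src_bd y hy) g2 (norm_nonneg _) (by positivity)
    rw [← hE] at k1 k2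
    have k3 : 0 ≤ A1 * δ := by positivity
    rw [hA2]
    linarith
  rw [mul_assoc]
  exact H4 _ _ _ D2 F2

lemma mf_sol {Λ ρ C : ℝ} (hρ : 0 < ρ) (hΛ : ρ ≤ Λ) {u : E4 → ℝ} (hs : IsMFSolution ρ u) (hC : ∀ x ∈ Bc, u x ≤ C) :
    Sol (Λ / volume.real Bo) C (ρ / ∫ y in Bo, Real.exp (u y)) u := by
  obtain ⟨hu, he, hb⟩ := hs
  have hI0 : 0 ≤ ∫ y in Bo, Real.exp (u y) := integral_nonneg fun y => (Real.exp_pos _).le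
  have hV : 0 < volume.real Bo := by
    rw [measureReal_def]
    exact ENNReal.toReal_pos (measure_ball_pos _ _ one_pos).ne' measure_ball_lt_top.ne
  have hex : ContinuousOn (fun y => Real.exp (u y)) Bc := hu.continuousOn.rexp
  have he' : ∀ y ∈ Bo, lap (lap u) y = ρ / (∫ y in Bo, Real.exp (u y)) * Real.exp (u y) := by
    intro y hy
    rw [he y hy]; ring
  have hc0 : 0 ≤ ρ / ∫ y in Bo, Real.exp (u y) := div_nonneg hρ.le hI0
  have S0 : Sol (ρ / ∫ y in Bo, Real.exp (u y)) C (ρ / ∫ y in Bo, Real.exp (u y)) u :=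
    ⟨hu, hb, he', hC, hc0, le_rfl⟩
  have hpos : ∀ x ∈ Bo, 0 ≤ u x := fun x hx =>
    max_principle hx hu hb (S0.dat.hh.continuousOn.mono ball_subset_closedBall)
      (fun y hy => S0.src_bd y (ball_subset_closedBall hy)) he' (fun y _ => mul_nonneg hc0 (Real.exp_pos _).le)
  have hIV : volume.real Bo ≤ ∫ y in Bo, Real.exp (u y) := by
    have h1 : ∫ y in Bo, (1:ℝ) = volume.real Bo := by simp
    rw [← h1]
    apply setIntegral_mono_on
    · exact integrableOn_const measure_ball_lt_top.ne
    · exact contOn_integrable hex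
    · exact measurableSet_ball
    · intro x hx
      exact Real.one_le_exp (hpos x hx)
  exact ⟨hu, hb, he', hC, hc0, div_le_div₀ (hρ.le.trans hΛ) hΛ hV hIV⟩

lemma ascoli {u : ℕ → E4 → ℝ} {K : ℝ} (hK0 : 0 ≤ K) (hb : ∀ k, ∀ x ∈ Bc, |u k x| ≤ K)
    (hl : ∀ k, LipschitzOnWith (Real.toNNReal K) (u k) Bc) :
    ∃ φ : ℕ → ℕ, StrictMono φ ∧ ∀ δ > 0, ∃ N, ∀ k ≥ N, ∀ l ≥ N, ∀ x ∈ Bc, |u (φ k) x - u (φ l) x| ≤ δ := by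
  have : CompactSpace Bc := isCompact_iff_compactSpace.1 (isCompact_closedBall _ _)
  have hlr : ∀ k, LipschitzWith (Real.toNNReal K) (Bc.domRestrict (u k)) := fun k => (hl k).to_restrict
  let U : ℕ → BoundedContinuousFunction Bc ℝ := fun k =>
    BoundedContinuousFunction.mkOfCompact ⟨Bc.domRestrict (u k), (hlr k).continuous⟩
  have hU : ∀ k (x : Bc), U k x = u k x := fun k x => rfl
  have hcomp : IsCompact (closure (Set.range U)) := by
    apply BoundedContinuousFunction.arzela_ascoli (closedBall (0:ℝ) K) (isCompact_closedBall _ _)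
    · rintro f x ⟨k, rfl⟩
      simpa [hU] using hb k x x.2
    · apply LipschitzWith.uniformEquicontinuous _ (Real.toNNReal K) _ |>.equicontinuous
      rintro ⟨f, k, rfl⟩
      exact hlr k
  obtain ⟨g, -, φ, hφ, ht⟩ := hcomp.tendsto_subseq (fun k => subset_closure (Set.mem_range_self k))
  refine ⟨φ, hφ, fun δ hδ => ?_⟩
  obtain ⟨N, hN⟩ := Metric.cauchySeq_iff.1 ht.cauchySeq δ hδ
  refine ⟨N, fun k hk l hl x hx => ?_⟩
  have h1 := (BoundedContinuousFunction.dist_coe_le_dist (f := U (φ k)) (g := U (φ l)) ⟨x, hx⟩).trans (hN k hk l hl).le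
  rw [Real.dist_eq] at h1
  exact h1

/-- Compactness for uniformly bounded solutions: if solutions `u_k` with `0 < ρ_k ≤ Λ` are
uniformly bounded from above on the closed ball, then a subsequence converges uniformly on
the closed ball to a `C⁴` function. -/
theorem mean_field_compactness (Λ : ℝ) (hΛ : 0 < Λ)
    (ρ : ℕ → ℝ) (u : ℕ → EuclideanSpace ℝ (Fin 4) → ℝ)
    (hρ : ∀ k, 0 < ρ k ∧ ρ k ≤ Λ)
    (hsol : ∀ k, IsMFSolution (ρ k) (u k))
    (C : ℝ) (hC : 0 < C)
    (hbound : ∀ k, ∀ x ∈ closedBall (0 : EuclideanSpace ℝ (Fin 4)) 1, u k x ≤ C) :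
    ∃ v : EuclideanSpace ℝ (Fin 4) → ℝ,
      ContDiffOn ℝ 4 v (closedBall (0 : EuclideanSpace ℝ (Fin 4)) 1) ∧
      ∃ φ : ℕ → ℕ, StrictMono φ ∧
        TendstoUniformlyOn (fun j => u (φ j)) v atTop
          (closedBall (0 : EuclideanSpace ℝ (Fin 4)) 1) := by
  set L := Λ / volume.real Bo with hL
  have hL0 : 0 ≤ L := div_nonneg hΛ.le measureReal_nonneg
  have S : ∀ k, Sol L C (ρ k / ∫ y in Bo, Real.exp (u k y)) (u k) := fun k =>
    mf_sol (hρ k).1 (hρ k).2 (hsol k) (hbound k)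
  set c : ℕ → ℝ := fun k => ρ k / ∫ y in Bo, Real.exp (u k y) with hcdef
  obtain ⟨C1, hC1, H1⟩ := est1
  set K := C1 * (L * Real.exp C) with hK
  have hK0 : 0 ≤ K := by positivity
  have hlip : ∀ k, LipschitzOnWith (Real.toNNReal K) (u k) Bc := by
    intro k
    refine (convex_closedBall (0:E4) 1).lipschitzOnWith_of_nnnorm_fderivWithin_le
      ((S k).hu.differentiableOn (by norm_num)) fun x hx => ?_
    rw [← NNReal.coe_le_coe, coe_nnnorm]
    exact ((H1 _ _ _ (S k).dat x hx).2).trans (Real.le_coe_toNNReal K)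
  obtain ⟨φ, hφ, hφc⟩ := ascoli hK0 (fun k x hx => (H1 _ _ _ (S k).dat x hx).1) hlip
  obtain ⟨cl, -, ψ, hψ, hψt⟩ := isCompact_Icc.tendsto_subseq (x := fun k => c (φ k)) (s := Set.Icc 0 L)
    (fun k => ⟨(S (φ k)).hc0, (S (φ k)).hcL⟩)
  obtain ⟨A, hA, HA⟩ := diff_est (L := L) (C := C) hL0
  obtain ⟨v, hv, hvu⟩ := lim_cd 4 (fun k => u (φ (ψ k))) (fun k => by exact_mod_cast (S _).hu) (by
    intro ε hε
    set δ := ε / (A + 1) with hδ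
    have hδ0 : 0 < δ := by positivity
    obtain ⟨N1, hN1⟩ := hφc δ hδ0
    obtain ⟨N2, hN2⟩ := Metric.cauchySeq_iff.1 hψt.cauchySeq δ hδ0
    refine ⟨max N1 N2, fun k hk l hl => ?_⟩
    have k1 : N1 ≤ ψ k := (le_of_max_le_left hk).trans (hψ.id_le k)
    have l1 : N1 ≤ ψ l := (le_of_max_le_left hl).trans (hψ.id_le l)
    have := HA _ _ _ _ δ (S (φ (ψ k))) (S (φ (ψ l))) (hN2 k (le_of_max_le_right hk) l (le_of_max_le_right hl)).le
      (hN1 _ k1 _ l1)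
    refine BdW_mono ?_ this
    have : (A + 1) * δ = ε := by rw [hδ]; field_simp
    nlinarith)
  exact ⟨v, by exact_mod_cast hv, fun k => φ (ψ k), hφ.comp hψ, hvu⟩


end
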